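/- Let d ≥ 2. For almost all x_d ∈ [0,1] one has sup_{(y₁,…,y_{d−1}) ∈ T_{d−1}} sup_{M ∈ ℤ} D_d(u; M, N) ≤ N^{1−1/(d+2)+o(1)} as N → ∞, where u = (y₁,…,y_{d−1}, x_d). That is, for every ε > 0 there is a constant C (depending on x_d, d, ε) such that for all N ≥ 1, all (y₁,…,y_{d−1}) ∈ T_{d−1} and all M ∈ ℤ, D_d(u; M, N) ≤ C N^{1−1/(d+2)+ε}. -/

import Mathlib

/-!
The proof combines a metric bound for Weyl sums with an inequality of Erdős–Turán type.

**Vinogradov's mean value.** The theorem `vinogradov` bounds the number of solutions of the system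
`∑ nᵢ ^ j = ∑ mᵢ ^ j`, `1 ≤ j ≤ d`, with `t = d (d + 1) / 2` variables on each side in `[1, N]`, by
`N ^ (t + ε)`. It follows from a `p`-adic decoupling theorem (`decoupling`) for a large fixed prime
`p`. Decoupling is formulated for families of functions translated by characters along a curve
congruent to the moment curve modulo `p`; this class is stable under affine rescaling and under
passing to the lower-dimensional curve obtained by freezing a power of the sum over a separated
residue class (`geom`, `Sys.proj`). By induction on the dimension, bilinear inequalities between
two separated residue classes are improved by lower-dimensional decoupling (`Bil.refine`) and by
Hölder's inequality (`Bil.holder`). The accumulated gain `gain k n` grows linearly in the number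
`n` of rounds (`exists_gain`), so that any positive decoupling exponent can be lowered
(`DecB.improve`).

**Weyl sums for almost every leading coefficient.** Expanding the `t`-th power of a Weyl sum,
grouping the tuples by their power sums of order less than `d` and applying Cauchy–Schwarz removes
the lower coefficients (`weyl_le_G`). The remaining square function has mean over the leading
coefficient equal to the number of solutions of Vinogradov's system (`integral_G`). Along the
lengths `j ^ (d + 2)` and for the multiples `h x`, `h ≤ j`, the normalised means are summable,
whence `ae_weyl`: the sums are `O(j ^ (d + 1 + ε))` for almost every `x`.

**Discrepancy.** The inequality `erdos_turan` bounds the discrepancy by Weyl sums with frequencies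
up to a cutoff, here of size `j`; it is proved by averaging over rotations of an arc against the
square of a trigonometric polynomial with piecewise linear coefficients. Lengths between
`j ^ (d + 2)` and `(j + 1) ^ (d + 2)` differ from `j ^ (d + 2)` by `O(j ^ (d + 1))`
(`discrepancy_block`). A shift by `M` changes only the lower coefficients (`exists_shift`).
-/

open MeasureTheory Finset

noncomputable def e (x : ℝ) : ℂ := Complex.exp (2 * Real.pi * Complex.I * x)

open scoped Classical in
noncomputable def discrepancy (ξ : ℕ → ℝ) (N : ℕ) : ℝ :=
  sSup {D : ℝ | ∃ a b : ℝ, 0 ≤ a ∧ a < b ∧ b ≤ 1 ∧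
    D = |((((Finset.Icc 1 N).filter fun n => Int.fract (ξ n) ∈ Set.Ioo a b)).card : ℝ)
          - (b - a) * (N : ℝ)|}


namespace VMV

/-! ### Admissible curves over the `p`-adic integers -/

open Polynomial

/-- The additive character of level `p ^ B` on the `p`-adic integers, `z ↦ e(z / p ^ B)`. -/
noncomputable def chi (p : ℕ) [Fact p.Prime] (B : ℕ) (z : ℤ_[p]) : ℂ :=
  ZMod.stdAddChar (PadicInt.toZModPow B z)

section chi
variable {p : ℕ} [Fact p.Prime]

lemma chi_add (B : ℕ) (x y : ℤ_[p]) : chi p B (x + y) = chi p B x * chi p B y := by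
  simp [chi, AddChar.map_add_eq_mul]

lemma norm_chi (B : ℕ) (x : ℤ_[p]) : ‖chi p B x‖ = 1 := by
  rw [chi, ZMod.stdAddChar_apply, Circle.norm_coe]

lemma chi_eq_one_iff (B : ℕ) (x : ℤ_[p]) : chi p B x = 1 ↔ (p : ℤ_[p]) ^ B ∣ x := by
  have h : PadicInt.toZModPow B x = 0 ↔ (p : ℤ_[p]) ^ B ∣ x := by
    rw [← RingHom.mem_ker, PadicInt.ker_toZModPow, Ideal.mem_span_singleton]
  rw [← h, chi]
  constructor
  · intro h1
    apply ZMod.injective_stdAddChar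
    rw [h1, AddChar.map_zero_eq_one]
  · intro h1
    rw [h1, AddChar.map_zero_eq_one]

lemma chi_mul_pow (B C : ℕ) (x : ℤ_[p]) : chi p (B + C) ((p : ℤ_[p]) ^ B * x) = chi p C x := by
  set n : ℕ := (PadicInt.toZModPow (B + C) x).val with hn
  have h1 : PadicInt.toZModPow (B + C) x = ((n : ℤ) : ZMod (p ^ (B + C))) := by
    simp [hn]
  have h2 : PadicInt.toZModPow C x = ((n : ℤ) : ZMod (p ^ C)) := by
    rw [← PadicInt.cast_toZModPow C (B + C) (by omega) x, h1]
    exact map_intCast (ZMod.castHom (pow_dvd_pow p (by omega : C ≤ B + C)) (ZMod (p ^ C))) n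
  have hp : (p : ℂ) ≠ 0 := by
    exact_mod_cast (Fact.out : p.Prime).ne_zero
  unfold chi
  rw [map_mul, h1, h2]
  have h3 : (PadicInt.toZModPow (B + C)) ((p : ℤ_[p]) ^ B) * ((n : ℤ) : ZMod (p ^ (B + C)))
      = (((p : ℤ) ^ B * n : ℤ) : ZMod (p ^ (B + C))) := by
    push_cast; simp
  rw [h3, ZMod.stdAddChar_coe, ZMod.stdAddChar_coe]
  congr 1
  push_cast
  field_simp
  rw [pow_add]
  ring

end chi

/-- A `k`-tuple of polynomials over `ℤ_p` that reduces modulo `p` to `(X, X², …, X^k)`. -/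
def Adm (p : ℕ) [Fact p.Prime] {k : ℕ} (φ : Fin k → ℤ_[p][X]) : Prop :=
  ∀ j, ∃ r : ℤ_[p][X], φ j = X ^ ((j : ℕ) + 1) + C (p : ℤ_[p]) * r

/-- A polynomial of degree at most `k < p` without constant term is determined by `l` Taylor
coefficients at one point and `k - l` at another. -/
lemma field_unique {p : ℕ} [Fact p.Prime] {k l : ℕ} (hkp : k < p) (hlk : l ≤ k)
    (x0 x1 : ZMod p) (hsep : l < k → x0 ≠ x1) (v : Fin k → ZMod p)
    (P : (ZMod p)[X]) (hP : P = ∑ j : Fin k, C (v j) * X ^ ((j : ℕ) + 1))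
    (h0 : ∀ i < l, (taylor x0 P).coeff (i + 1) = 0)
    (h1 : ∀ i < k - l, (taylor x1 P).coeff (i + 1) = 0) : v = 0 := by
  have hdiv : ∀ (x : ZMod p) (n : ℕ), (∀ i < n, (taylor x P).coeff (i + 1) = 0) →
      (X - C x) ^ n ∣ derivative P := by
    intro x n h
    have hd : X ^ n ∣ derivative (taylor x P) := by
      rw [X_pow_dvd_iff]
      intro i hi
      rw [coeff_derivative, h i hi, zero_mul]
    obtain ⟨R, hR⟩ := hd
    refine ⟨R.comp (X - C x), ?_⟩
    have e1 : derivative (taylor x P) = (derivative P).comp (X + C x) := by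
      rw [taylor_apply, derivative_comp]; simp
    have e2 : ((derivative P).comp (X + C x)).comp (X - C x) = derivative P := by
      rw [comp_assoc]; simp
    rw [← e2, ← e1, hR]; simp
  have hcop : IsCoprime ((X - C x0) ^ l) ((X - C x1 : (ZMod p)[X]) ^ (k - l)) := by
    rcases hlk.lt_or_eq with h | h
    · exact (isCoprime_X_sub_C_of_isUnit_sub (sub_ne_zero.2 (hsep h)).isUnit).pow
    · subst h; simp [isCoprime_one_right]
  have hd := hcop.mul_dvd (hdiv x0 l h0) (hdiv x1 (k - l) h1)
  have hcoef : ∀ j : Fin k, P.coeff ((j : ℕ) + 1) = v j := by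
    intro j
    rw [hP]
    simp only [finsetSum_coeff, coeff_C_mul, coeff_X_pow, add_left_inj]
    rw [Finset.sum_eq_single j]
    · simp
    · intro b _ hb
      have : ¬ ((j : ℕ) = b) := fun h => hb (Fin.ext h.symm)
      simp [this]
    · simp
  rcases Nat.eq_zero_or_pos k with hk | hk
  · subst hk; funext j; exact j.elim0
  have hdeg : P.natDegree ≤ k := by
    rw [hP]
    apply natDegree_sum_le_of_forall_le
    intro j _
    refine (natDegree_C_mul_X_pow_le _ _).trans (by omega)
  have hder : derivative P = 0 := by
    apply eq_zero_of_dvd_of_natDegree_lt hd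
    have : ((X - C x0) ^ l * (X - C x1 : (ZMod p)[X]) ^ (k - l)).natDegree = k := by
      rw [natDegree_mul (pow_ne_zero _ (X_sub_C_ne_zero _)) (pow_ne_zero _ (X_sub_C_ne_zero _))]
      simp; omega
    rw [this]
    exact lt_of_le_of_lt (natDegree_derivative_le _) (by omega)
  funext j
  have := congrArg (fun Q => Q.coeff (j : ℕ)) hder
  simp only [coeff_derivative, coeff_zero] at this
  rw [hcoef] at this
  rcases mul_eq_zero.1 this with h | h
  · exact h
  · exfalso
    have h2 : (((j : ℕ) + 1 : ℕ) : ZMod p) = 0 := by push_cast; exact h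
    rw [ZMod.natCast_eq_zero_iff] at h2
    have := Nat.le_of_dvd (by omega) h2
    omega

lemma isUnit_iff_toZMod {p : ℕ} [Fact p.Prime] (x : ℤ_[p]) :
    IsUnit x ↔ PadicInt.toZMod x ≠ 0 := by
  rw [Ne, ← RingHom.mem_ker, PadicInt.ker_toZMod, IsLocalRing.mem_maximalIdeal, mem_nonunits_iff,
    not_not]

/-- Hermite interpolation over `ℤ_p` in the span of an admissible family: the Taylor coefficients
of orders `1, …, l` at `x0` and `1, …, k - l` at `x1` can be prescribed. -/
lemma hermite {p : ℕ} [Fact p.Prime] {k l : ℕ} (hkp : k < p) (hlk : l ≤ k)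
    (φ : Fin k → ℤ_[p][X]) (hφ : Adm p φ) (x0 x1 : ℤ_[p]) (hsep : l < k → IsUnit (x0 - x1))
    (t : ℕ → ℤ_[p]) :
    ∃ u : Fin k → ℤ_[p],
      (∀ i < l, (taylor x0 (∑ j, C (u j) * φ j)).coeff (i + 1) = t i) ∧
      (∀ i < k - l, (taylor x1 (∑ j, C (u j) * φ j)).coeff (i + 1) = 0) := by
  let Ω : Matrix (Fin k) (Fin k) ℤ_[p] := Matrix.of fun i j =>
    if (i : ℕ) < l then (taylor x0 (φ j)).coeff (i + 1) else (taylor x1 (φ j)).coeff (i - l + 1)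
  have hsum : ∀ (x : ℤ_[p]) (n : ℕ) (u : Fin k → ℤ_[p]),
      (taylor x (∑ j, C (u j) * φ j)).coeff n = ∑ j, (taylor x (φ j)).coeff n * u j := by
    intro x n u
    simp [map_sum, taylor_mul, mul_comm]
  have hunit : IsUnit Ω.det := by
    rw [isUnit_iff_toZMod, RingHom.map_det]
    intro hdet
    obtain ⟨v, hv0, hv⟩ := Matrix.exists_mulVec_eq_zero_iff.2 hdet
    apply hv0
    have hmap : ∀ (x : ℤ_[p]) (j : Fin k) (n : ℕ), PadicInt.toZMod ((taylor x (φ j)).coeff n) =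
        (taylor (PadicInt.toZMod x) (X ^ ((j : ℕ) + 1) : (ZMod p)[X])).coeff n := by
      intro x j n
      rw [← coeff_map, map_taylor]
      obtain ⟨r, hr⟩ := hφ j
      rw [hr]; simp
    have hsum2 : ∀ (x : ZMod p) (n : ℕ),
        (taylor x (∑ j, C (v j) * X ^ ((j : ℕ) + 1))).coeff n =
          ∑ j : Fin k, (taylor x (X ^ ((j : ℕ) + 1) : (ZMod p)[X])).coeff n * v j := by
      intro x n
      simp only [map_sum, finsetSum_coeff, taylor_mul, taylor_C, coeff_C_mul, mul_comm]
    refine field_unique hkp hlk (PadicInt.toZMod x0) (PadicInt.toZMod x1) ?_ v _ rfl ?_ ?_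
    · intro h heq
      have := hsep h
      rw [isUnit_iff_toZMod, map_sub, heq, sub_self] at this
      exact this rfl
    · intro i hi
      have := congrFun hv ⟨i, by omega⟩
      simp only [Matrix.mulVec, dotProduct, RingHom.mapMatrix_apply, Matrix.map_apply, Ω,
        Matrix.of_apply, hi, if_true, hmap, Pi.zero_apply] at this
      rw [hsum2]; exact this
    · intro i hi
      have := congrFun hv ⟨l + i, by omega⟩
      have h2 : ¬ (l + i < l) := by omega
      simp only [Matrix.mulVec, dotProduct, RingHom.mapMatrix_apply, Matrix.map_apply, Ω,
        Matrix.of_apply, h2, if_false, hmap, Pi.zero_apply, Nat.add_sub_cancel_left] at this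
      rw [hsum2]; exact this
  let tt : Fin k → ℤ_[p] := fun i => if (i : ℕ) < l then t i else 0
  have hmul : Ω.mulVec (Ω⁻¹.mulVec tt) = tt := by
    rw [Matrix.mulVec_mulVec, Matrix.mul_nonsing_inv _ hunit, Matrix.one_mulVec]
  refine ⟨Ω⁻¹.mulVec tt, ?_, ?_⟩
  · intro i hi
    have := congrFun hmul ⟨i, by omega⟩
    rw [hsum]
    simpa [Matrix.mulVec, dotProduct, Ω, tt, hi] using this
  · intro i hi
    have := congrFun hmul ⟨l + i, by omega⟩
    rw [hsum]
    simpa [Matrix.mulVec, dotProduct, Ω, tt] using this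

/-- The geometric input. Combinations of an admissible curve that are constant to high order near
`x1` restrict, on the ball of radius `p ^ (-a)` about `x0`, to a rescaled admissible curve of
dimension `l`. For `l = k` this is affine rescaling. -/
lemma geom {p : ℕ} [Fact p.Prime] {k l : ℕ} (hkp : k < p) (hlk : l ≤ k)
    (φ : Fin k → ℤ_[p][X]) (hφ : Adm p φ) (x0 x1 : ℤ_[p]) (hsep : l < k → IsUnit (x0 - x1))
    (a : ℕ) (ha : 1 ≤ a) :
    ∃ ψ : Fin l → ℤ_[p][X], Adm p ψ ∧ ∀ v : Fin l → ℤ_[p], ∃ (u : Fin k → ℤ_[p]) (c0 c1 : ℤ_[p]),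
      (∀ σ : ℤ_[p], ∑ j, u j * (φ j).eval (x0 + (p : ℤ_[p]) ^ a * σ) =
        c0 + (p : ℤ_[p]) ^ (a * l) * ∑ j, v j * (ψ j).eval σ) ∧
      (∀ (b : ℕ) (σ : ℤ_[p]), (p : ℤ_[p]) ^ ((k - l + 1) * b) ∣
        ∑ j, u j * (φ j).eval (x1 + (p : ℤ_[p]) ^ b * σ) - c1) := by
  have key : ∀ j : Fin l, ∃ u : Fin k → ℤ_[p], ∃ R R' : ℤ_[p][X], ∃ c0 c1 : ℤ_[p],
      taylor x0 (∑ i, C (u i) * φ i) =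
        C c0 + C ((p : ℤ_[p]) ^ (a * (l - 1 - j))) * X ^ ((j : ℕ) + 1) + X ^ (l + 1) * R ∧
      taylor x1 (∑ i, C (u i) * φ i) = C c1 + X ^ (k - l + 1) * R' := by
    intro j
    obtain ⟨u, hu0, hu1⟩ := hermite hkp hlk φ hφ x0 x1 hsep
      (fun i => if i = j then (p : ℤ_[p]) ^ (a * (l - 1 - j)) else 0)
    set Q := ∑ i, C (u i) * φ i with hQ
    have d0 : X ^ (l + 1) ∣ taylor x0 Q - (C ((taylor x0 Q).coeff 0) +
        C ((p : ℤ_[p]) ^ (a * (l - 1 - j))) * X ^ ((j : ℕ) + 1)) := by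
      rw [X_pow_dvd_iff]
      intro i hi
      rcases i with _ | i
      · simp
      · have h := hu0 i (by omega)
        rw [coeff_sub, h, coeff_add, coeff_C_succ, coeff_C_mul, coeff_X_pow]
        simp
    have d1 : X ^ (k - l + 1) ∣ taylor x1 Q - C ((taylor x1 Q).coeff 0) := by
      rw [X_pow_dvd_iff]
      intro i hi
      rcases i with _ | i
      · simp
      · have h := hu1 i (by omega)
        rw [coeff_sub, h, coeff_C_succ, sub_zero]
    obtain ⟨R, hR⟩ := d0
    obtain ⟨R', hR'⟩ := d1
    exact ⟨u, R, R', _, _, sub_eq_iff_eq_add'.1 hR, sub_eq_iff_eq_add'.1 hR'⟩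
  choose U R R' c0 c1 h0 h1 using key
  have ev : ∀ (x y : ℤ_[p]) (u : Fin k → ℤ_[p]),
      ∑ i, u i * (φ i).eval (x + y) = (taylor x (∑ i, C (u i) * φ i)).eval y := by
    intro x y u
    rw [taylor_eval, eval_finsetSum]
    simp [add_comm]
  have comb : ∀ (v : Fin l → ℤ_[p]) (z : ℤ_[p]),
      ∑ i, (∑ j, v j * U j i) * (φ i).eval z = ∑ j, v j * ∑ i, U j i * (φ i).eval z := by
    intro v z
    simp_rw [Finset.sum_mul, Finset.mul_sum]
    rw [Finset.sum_comm]
    simp_rw [mul_assoc]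
  refine ⟨fun j => X ^ ((j : ℕ) + 1) +
    C ((p : ℤ_[p]) ^ a) * (X ^ (l + 1) * (R j).comp (C ((p : ℤ_[p]) ^ a) * X)), ?_, ?_⟩
  · intro j
    refine ⟨C ((p : ℤ_[p]) ^ (a - 1)) * (X ^ (l + 1) * (R j).comp (C ((p : ℤ_[p]) ^ a) * X)), ?_⟩
    rw [← mul_assoc (C (p : ℤ_[p])), ← C_mul, ← pow_succ', Nat.sub_add_cancel ha]
  · intro v
    refine ⟨fun i => ∑ j, v j * U j i, ∑ j, v j * c0 j, ∑ j, v j * c1 j, ?_, ?_⟩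
    · intro σ
      rw [comb, Finset.mul_sum, ← Finset.sum_add_distrib]
      refine Finset.sum_congr rfl fun j _ => ?_
      rw [ev, h0]
      simp only [eval_add, eval_mul, eval_C, eval_pow, eval_X, eval_comp]
      have e1 : (p : ℤ_[p]) ^ (a * l) =
          (p : ℤ_[p]) ^ (a * (l - 1 - j)) * ((p : ℤ_[p]) ^ a) ^ ((j : ℕ) + 1) := by
        rw [← pow_mul, ← pow_add, ← mul_add]
        congr 2
        have := j.2
        omega
      have e2 : ((p : ℤ_[p]) ^ a) ^ (l + 1) = (p : ℤ_[p]) ^ (a * l) * (p : ℤ_[p]) ^ a := by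
        rw [pow_succ, ← pow_mul]
      rw [mul_pow, mul_pow, e2, ← mul_assoc _ (((p : ℤ_[p]) ^ a) ^ ((j : ℕ) + 1)), ← e1]
      ring
    · intro b σ
      rw [comb, ← Finset.sum_sub_distrib]
      refine Finset.dvd_sum fun j _ => ?_
      rw [ev, h1]
      simp only [eval_add, eval_mul, eval_C, eval_pow, eval_X]
      rw [mul_pow, ← pow_mul, mul_comm b]
      exact ⟨v j * (σ ^ (k - l + 1) * eval ((p : ℤ_[p]) ^ b * σ) (R' j)), by ring⟩

/-! ### Systems of functions translated along an admissible curve -/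

/-- The triangular number `k (k + 1) / 2`; the critical exponent in dimension `k` is `2 * tri k`. -/
def tri (k : ℕ) : ℕ := k * (k + 1) / 2

lemma two_tri (k : ℕ) : 2 * tri k = k * (k + 1) :=
  Nat.mul_div_cancel' (Nat.even_mul_succ_self k).two_dvd

lemma tri_pos {k : ℕ} (hk : 1 ≤ k) : 1 ≤ tri k := by
  have := two_tri k
  nlinarith

lemma tri_lt {l k : ℕ} (h : l < k) : tri l < tri k := by
  have := two_tri k
  have := two_tri l
  nlinarith

/-- The indices whose location is congruent to `r` modulo `p ^ a`. -/
def cls (p : ℕ) {ι : Type} (s : Finset ι) (loc : ι → ℕ) (a r : ℕ) : Finset ι :=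
  s.filter fun i => loc i % p ^ a = r

/-- The partial sum of the family `F` over the index set `t`. -/
def fs {ι Ω : Type} (F : ι → Ω → ℂ) (t : Finset ι) (x : Ω) : ℂ := ∑ i ∈ t, F i x

/-- A weighted family of functions `F i` on a finite set behaves like a family of exponentials with
frequencies on an admissible curve, to precision `p ^ B`: every frequency vector `v` yields a
weight-preserving permutation that multiplies `F i` by the character
`chi (v · φ (loc i))`, up to a unimodular constant not depending on `i`. -/
def Sys (p : ℕ) [Fact p.Prime] (k B : ℕ) {Ω ι : Type} (w : Ω → ℝ) (s : Finset ι) (loc : ι → ℕ)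
    (F : ι → Ω → ℂ) : Prop :=
  ∃ φ : Fin k → Polynomial ℤ_[p], Adm p φ ∧ ∀ v : Fin k → ℤ_[p], ∃ τ : Equiv.Perm Ω,
    (∀ x, w (τ x) = w x) ∧ ∃ c : ℂ, ‖c‖ = 1 ∧ ∀ i ∈ s, ∀ x,
      F i (τ x) = c * chi p B (∑ j, v j * (φ j).eval (loc i : ℤ_[p])) * F i x

/-- Restricting to a residue class modulo `p ^ a` and weighting by a power of the sum over a
separated class yields a system of lower dimension `l`. -/
lemma Sys.proj {p : ℕ} [Fact p.Prime] {k B : ℕ} {Ω ι : Type} {w : Ω → ℝ} {s : Finset ι}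
    {loc : ι → ℕ} {F : ι → Ω → ℂ} (h : Sys p k B w s loc F) {l a b E r0 r1 : ℕ} (hkp : k < p)
    (hlk : l ≤ k) (ha : 1 ≤ a) (hsep : l < k → r0 % p ≠ r1 % p) (hEB : E ≤ B) (haE : a * l ≤ E)
    (hEb : E ≤ (k - l + 1) * b) (n : ℕ) :
    Sys p l (E - a * l) (fun x => w x * ‖fs F (cls p s loc b r1) x‖ ^ n) (cls p s loc a r0)
      (fun i => loc i / p ^ a) F := by
  obtain ⟨φ, hφ, hv⟩ := h
  have hu : l < k → IsUnit ((r0 : ℤ_[p]) - (r1 : ℤ_[p])) := by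
    intro hl
    rw [isUnit_iff_toZMod, map_sub, map_natCast, map_natCast, sub_ne_zero]
    intro h
    exact hsep hl ((ZMod.natCast_eq_natCast_iff' _ _ _).1 h)
  obtain ⟨ψ, hψ, hg⟩ := geom hkp hlk φ hφ (r0 : ℤ_[p]) (r1 : ℤ_[p]) hu a ha
  refine ⟨ψ, hψ, fun v => ?_⟩
  obtain ⟨u, c0, c1, g0, g1⟩ := hg v
  obtain ⟨τ, hτ, c, hc, hF⟩ := hv (fun j => (p : ℤ_[p]) ^ (B - E) * u j)
  have hF' : ∀ i ∈ s, ∀ x, F i (τ x) =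
      c * chi p E (∑ j, u j * (φ j).eval (loc i : ℤ_[p])) * F i x := by
    intro i hi x
    rw [hF i hi x]
    simp_rw [mul_assoc ((p : ℤ_[p]) ^ (B - E))]
    rw [← Finset.mul_sum]
    have := chi_mul_pow (p := p) (B - E) E (∑ j, u j * (φ j).eval (loc i : ℤ_[p]))
    rw [Nat.sub_add_cancel hEB] at this
    rw [this]
  have hloc : ∀ (t r i), loc i % p ^ t = r →
      (loc i : ℤ_[p]) = (r : ℤ_[p]) + (p : ℤ_[p]) ^ t * ((loc i / p ^ t : ℕ) : ℤ_[p]) := by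
    intro t r i hi
    rw [← hi]
    exact_mod_cast (Nat.mod_add_div _ _).symm
  refine ⟨τ, ?_, c * chi p E c0, by rw [norm_mul, hc, norm_chi, one_mul], ?_⟩
  · intro x
    beta_reduce
    rw [hτ]
    have : fs F (cls p s loc b r1) (τ x) = c * chi p E c1 * fs F (cls p s loc b r1) x := by
      unfold fs
      rw [Finset.mul_sum]
      refine Finset.sum_congr rfl fun i hi => ?_
      obtain ⟨hi, hm⟩ := Finset.mem_filter.1 hi
      rw [hF' i hi]
      have hd := (pow_dvd_pow (p : ℤ_[p]) hEb).trans (g1 b ((loc i / p ^ b : ℕ) : ℤ_[p]))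
      rw [← hloc b r1 i hm, ← chi_eq_one_iff] at hd
      rw [← sub_add_cancel (∑ j, u j * (φ j).eval (loc i : ℤ_[p])) c1, chi_add, hd, one_mul]
    rw [this, norm_mul, norm_mul, hc, norm_chi, one_mul, one_mul]
  · intro i hi x
    obtain ⟨hi, hm⟩ := Finset.mem_filter.1 hi
    rw [hF' i hi, hloc a r0 i hm, g0, chi_add]
    have := chi_mul_pow (p := p) (a * l) (E - a * l)
      (∑ j, v j * (ψ j).eval ((loc i / p ^ a : ℕ) : ℤ_[p]))
    rw [Nat.add_sub_cancel' haE] at this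
    rw [this]
    ring

lemma mod_pow_iff {p a n r ρ x : ℕ} (hr : r < p ^ a) :
    x % p ^ (a + n) = r + p ^ a * ρ ↔ x % p ^ a = r ∧ x / p ^ a % p ^ n = ρ := by
  have hp : 0 < p ^ a := by omega
  rw [pow_add, Nat.mod_mul]
  constructor
  · intro h
    have h1 := congrArg (· % p ^ a) h
    have h2 := congrArg (· / p ^ a) h
    simp only [Nat.add_mul_mod_self_left, Nat.mod_mod, Nat.mod_eq_of_lt hr] at h1
    simp only [Nat.add_mul_div_left _ _ hp, Nat.div_eq_of_lt hr,
      Nat.div_eq_of_lt (Nat.mod_lt _ hp), zero_add] at h2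
    exact ⟨h1, h2⟩
  · rintro ⟨h1, h2⟩
    rw [h1, h2]

lemma cls_cls {p a n r ρ : ℕ} {ι : Type} (s : Finset ι) (loc : ι → ℕ) (hr : r < p ^ a) :
    cls p (cls p s loc a r) (fun i => loc i / p ^ a) n ρ = cls p s loc (a + n) (r + p ^ a * ρ) := by
  unfold cls
  rw [Finset.filter_filter]
  refine Finset.filter_congr fun i _ => ?_
  rw [mod_pow_iff hr]

lemma lift_lt {p a n r ρ : ℕ} (hr : r < p ^ a) (hρ : ρ < p ^ n) : r + p ^ a * ρ < p ^ (a + n) := by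
  rw [pow_add]
  calc r + p ^ a * ρ < p ^ a + p ^ a * ρ := by omega
    _ = p ^ a * (ρ + 1) := by ring
    _ ≤ p ^ a * p ^ n := Nat.mul_le_mul_left _ hρ

lemma lift_mod {p a r ρ : ℕ} (ha : 1 ≤ a) : (r + p ^ a * ρ) % p = r % p := by
  obtain ⟨a, rfl⟩ := Nat.exists_eq_add_of_le' ha
  rw [pow_succ', mul_assoc, Nat.add_mul_mod_self_left]

/-- A system in dimension `k` at scale `p ^ (-m)`, together with bounds for the critical moments of
its pieces at the finest scale. -/
structure Cfg (p : ℕ) [Fact p.Prime] (k m : ℕ) where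
  Ω : Type
  ι : Type
  fin : Fintype Ω
  w : Ω → ℝ
  w_nonneg : ∀ x, 0 ≤ w x
  s : Finset ι
  loc : ι → ℕ
  F : ι → Ω → ℂ
  Bd : ℕ → ℝ
  Bd_nonneg : ∀ r, 0 ≤ Bd r
  sys : Sys p k (m * k) w s loc F
  bd : ∀ r < p ^ m, ∑ x, w x * ‖fs F (cls p s loc m r) x‖ ^ (2 * tri k) ≤ Bd r ^ tri k

attribute [instance] Cfg.fin

/-- The decoupling inequality at the critical exponent, at scale `p ^ (-m)` and with constant `D`. -/
def Dec (p : ℕ) [Fact p.Prime] (k m : ℕ) (D : ℝ) : Prop :=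
  ∀ c : Cfg p k m, ∑ x, c.w x * ‖fs c.F c.s x‖ ^ (2 * tri k) ≤
    D * (∑ r ∈ range (p ^ m), c.Bd r) ^ tri k

section cfg
variable {p : ℕ} [Fact p.Prime] {k m : ℕ}

/-- The piece of the function of a configuration belonging to a residue class modulo `p ^ a`. -/
def Cfg.f (c : Cfg p k m) (a r : ℕ) (x : c.Ω) : ℂ := fs c.F (cls p c.s c.loc a r) x

/-- The sum of the bounds `Bd` over the finest classes inside a class modulo `p ^ a`. -/
def Cfg.BB (c : Cfg p k m) (a r : ℕ) : ℝ := ∑ ρ ∈ (range (p ^ m)).filter (fun ρ => ρ % p ^ a = r), c.Bd ρ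

lemma Cfg.BB_nonneg (c : Cfg p k m) (a r : ℕ) : 0 ≤ c.BB a r :=
  Finset.sum_nonneg fun _ _ => c.Bd_nonneg _

lemma Cfg.BB_top (c : Cfg p k m) {r : ℕ} (hr : r < p ^ m) : c.BB m r = c.Bd r := by
  unfold Cfg.BB
  rw [Finset.sum_eq_single r]
  · intro b hb hbr
    simp only [Finset.mem_filter, Finset.mem_range] at hb
    rw [Nat.mod_eq_of_lt hb.1] at hb
    exact absurd hb.2 hbr
  · intro h
    simp [hr, Nat.mod_eq_of_lt hr] at h

lemma Cfg.BB_zero (c : Cfg p k m) : c.BB 0 0 = ∑ r ∈ range (p ^ m), c.Bd r := by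
  simp [Cfg.BB, Nat.mod_one]

lemma p_pos : 0 < p := (Fact.out : p.Prime).pos

lemma Cfg.BB_sum (c : Cfg p k m) {a n r : ℕ} (hr : r < p ^ a) :
    ∑ ρ ∈ range (p ^ n), c.BB (a + n) (r + p ^ a * ρ) = c.BB a r := by
  unfold Cfg.BB
  symm
  rw [← Finset.sum_fiberwise_of_maps_to (t := range (p ^ n)) (g := fun x => x / p ^ a % p ^ n)
    (fun x _ => Finset.mem_range.2 (Nat.mod_lt _ (pow_pos p_pos _)))]
  refine Finset.sum_congr rfl fun ρ _ => ?_
  rw [Finset.filter_filter]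
  refine Finset.sum_congr (Finset.filter_congr fun x _ => ?_) fun _ _ => rfl
  rw [mod_pow_iff hr]

lemma Cfg.f_sum (c : Cfg p k m) {a n r : ℕ} (hr : r < p ^ a) (x : c.Ω) :
    ∑ ρ ∈ range (p ^ n), c.f (a + n) (r + p ^ a * ρ) x = c.f a r x := by
  unfold Cfg.f fs cls
  rw [← Finset.sum_fiberwise_of_maps_to (t := range (p ^ n)) (g := fun i => c.loc i / p ^ a % p ^ n)
    (fun x _ => Finset.mem_range.2 (Nat.mod_lt _ (pow_pos p_pos _)))]
  refine Finset.sum_congr rfl fun ρ _ => ?_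
  rw [Finset.filter_filter]
  refine Finset.sum_congr (Finset.filter_congr fun x _ => ?_) fun _ _ => rfl
  rw [mod_pow_iff hr]

lemma Cfg.f_zero (c : Cfg p k m) (x : c.Ω) : c.f 0 0 x = fs c.F c.s x := by
  simp [Cfg.f, cls, Nat.mod_one]

/-- Affine rescaling of the piece belonging to one residue class. -/
lemma Dec.resc {D : ℝ} {a : ℕ} (hkp : k < p) (ha : 1 ≤ a) (ham : a ≤ m) (h : Dec p k (m - a) D)
    (c : Cfg p k m) {r : ℕ} (hr : r < p ^ a) :
    ∑ x, c.w x * ‖c.f a r x‖ ^ (2 * tri k) ≤ D * c.BB a r ^ tri k := by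
  have hs := c.sys.proj (l := k) (a := a) (b := m * k) (E := m * k) (r0 := r) (r1 := 0) hkp le_rfl ha
    (by omega) le_rfl (Nat.mul_le_mul_right _ ham) (by simp) 0
  simp only [pow_zero, mul_one, ← Nat.sub_mul] at hs
  have := h ⟨c.Ω, c.ι, c.fin, c.w, c.w_nonneg, _, _, _, fun ρ => c.Bd (r + p ^ a * ρ),
    fun ρ => c.Bd_nonneg _, hs, ?_⟩
  · refine this.trans_eq ?_
    congr 2
    rw [← c.BB_sum (n := m - a) hr]
    refine Finset.sum_congr rfl fun ρ hρ => ?_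
    have := lift_lt hr (Finset.mem_range.1 hρ)
    rw [Nat.add_sub_cancel' ham] at this ⊢
    rw [c.BB_top this]
  · intro ρ hρ
    have := lift_lt hr hρ
    rw [cls_cls _ _ hr]
    rw [Nat.add_sub_cancel' ham] at this ⊢
    exact c.bd _ this

/-- The bilinear inequality between separated classes modulo `p ^ a` and `p ^ b`. -/
def Bil (p : ℕ) [Fact p.Prime] (k m l a b : ℕ) (E : ℝ) : Prop :=
  ∀ c : Cfg p k m, ∀ r0 < p ^ a, ∀ r1 < p ^ b, r0 % p ≠ r1 % p →
    ∑ x, c.w x * ((‖c.f a r0 x‖ ^ 2) ^ tri l * (‖c.f b r1 x‖ ^ 2) ^ (tri k - tri l)) ≤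
      E * (c.BB a r0 ^ tri l * c.BB b r1 ^ (tri k - tri l))

lemma Bil.mono {l a b : ℕ} {E E' : ℝ} (h : Bil p k m l a b E) (hE : E ≤ E') :
    Bil p k m l a b E' := fun c r0 h0 r1 h1 hs =>
  (h c r0 h0 r1 h1 hs).trans (mul_le_mul_of_nonneg_right hE
    (mul_nonneg (pow_nonneg (c.BB_nonneg _ _) _) (pow_nonneg (c.BB_nonneg _ _) _)))

lemma Dec.mono {D D' : ℝ} (h : Dec p k m D) (hE : D ≤ D') : Dec p k m D' := fun c =>
  (h c).trans (mul_le_mul_of_nonneg_right hE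
    (pow_nonneg (Finset.sum_nonneg fun _ _ => c.Bd_nonneg _) _))

/-- Lower-dimensional decoupling of the first factor of the bilinear expression. -/
lemma Bil.refine {l a b c' : ℕ} {E D : ℝ} (hkp : k < p) (hl : 1 ≤ l) (hlk : l < k)
    (hE : 0 ≤ E) (ha : 1 ≤ a) (hac : a ≤ c') (hcm : c' ≤ m) (hcb : c' * l = (k - l + 1) * b)
    (h : Bil p k m l c' b E) (hD : Dec p l (c' - a) D) : Bil p k m l a b (D * E) := by
  intro c r0 h0 r1 h1 hs
  have hu : (tri l : ℝ) ≠ 0 := by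
    have := tri_pos hl
    positivity
  set v := tri k - tri l with hv
  set K : ℝ := E * c.BB b r1 ^ v with hK
  have hK0 : 0 ≤ K := mul_nonneg hE (pow_nonneg (c.BB_nonneg _ _) _)
  have hKr : (K ^ ((tri l : ℝ)⁻¹)) ^ tri l = K := by
    rw [← Real.rpow_natCast, ← Real.rpow_mul hK0, inv_mul_cancel₀ hu, Real.rpow_one]
  have hsys := c.sys.proj (l := l) (a := a) (b := b) (E := c' * l) (r0 := r0) (r1 := r1) hkp hlk.le
    ha (fun _ => hs) (Nat.mul_le_mul hcm hlk.le) (Nat.mul_le_mul_right _ hac) hcb.le (2 * v)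
  rw [← Nat.sub_mul] at hsys
  have := hD ⟨c.Ω, c.ι, c.fin, _, fun x => mul_nonneg (c.w_nonneg x) (by positivity), _, _, _,
    fun ρ => K ^ ((tri l : ℝ)⁻¹) * c.BB c' (r0 + p ^ a * ρ),
    fun ρ => mul_nonneg (Real.rpow_nonneg hK0 _) (c.BB_nonneg _ _), hsys, ?_⟩
  · simp only at this
    rw [← Finset.mul_sum, mul_pow, hKr] at this
    have hsum := c.BB_sum (n := c' - a) h0
    rw [Nat.add_sub_cancel' hac] at hsum
    rw [hsum] at this
    calc _ = ∑ x, c.w x * ‖fs c.F (cls p c.s c.loc b r1) x‖ ^ (2 * v) *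
          ‖fs c.F (cls p c.s c.loc a r0) x‖ ^ (2 * tri l) := by
            refine Finset.sum_congr rfl fun x _ => ?_
            rw [pow_mul, pow_mul]
            unfold Cfg.f
            ring
      _ ≤ _ := this
      _ = _ := by rw [hK]; ring
  · intro ρ hρ
    have hlt := lift_lt h0 hρ
    rw [cls_cls _ _ h0]
    rw [Nat.add_sub_cancel' hac] at hlt ⊢
    rw [mul_pow, hKr]
    have := h c _ hlt r1 h1 (by rwa [lift_mod ha])
    calc _ = _ := by
            refine Finset.sum_congr rfl fun x _ => ?_
            rw [pow_mul, pow_mul]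
            unfold Cfg.f
            ring
      _ ≤ _ := this
      _ = _ := by rw [hK]; ring

end cfg

/-- Hölder's inequality for the two-parameter family of moments `∑ w G ^ A H ^ B`. -/
lemma holder_bound {Ω : Type} [Fintype Ω] {w G H : Ω → ℝ} (hw : ∀ x, 0 ≤ w x) (hG : ∀ x, 0 ≤ G x)
    (hH : ∀ x, 0 ≤ H x) {A B A1 B1 A2 B2 : ℕ} {θ E1 E2 P Q : ℝ} (h0 : 0 < θ) (h1 : θ < 1)
    (hA : (A : ℝ) = θ * A1 + (1 - θ) * A2) (hB : (B : ℝ) = θ * B1 + (1 - θ) * B2)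
    (hE1 : 0 ≤ E1) (hE2 : 0 ≤ E2) (hP : 0 ≤ P) (hQ : 0 ≤ Q)
    (k1 : ∑ x, w x * (G x ^ A1 * H x ^ B1) ≤ E1 * (P ^ A1 * Q ^ B1))
    (k2 : ∑ x, w x * (G x ^ A2 * H x ^ B2) ≤ E2 * (P ^ A2 * Q ^ B2)) :
    ∑ x, w x * (G x ^ A * H x ^ B) ≤ (E1 ^ θ * E2 ^ (1 - θ)) * (P ^ A * Q ^ B) := by
  have h2 : 0 < 1 - θ := by linarith
  have split : ∀ (y : ℝ) (C C1 C2 : ℕ), 0 ≤ y → (C : ℝ) = θ * C1 + (1 - θ) * C2 →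
      y ^ C = (y ^ C1) ^ θ * (y ^ C2) ^ (1 - θ) := by
    intro y C C1 C2 hy hC
    rw [← Real.rpow_natCast, ← Real.rpow_natCast y C1, ← Real.rpow_natCast y C2,
      ← Real.rpow_mul hy, ← Real.rpow_mul hy, ← Real.rpow_add_of_nonneg hy (by positivity)
      (by positivity), hC]
    congr 1; ring
  have split2 : ∀ y z e : ℝ, ∀ C C1 C2 D D1 D2 : ℕ, ∀ e1 e2 : ℝ, 0 ≤ y → 0 ≤ z → 0 ≤ e1 → 0 ≤ e2 →
      (C : ℝ) = θ * C1 + (1 - θ) * C2 → (D : ℝ) = θ * D1 + (1 - θ) * D2 →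
      e = e1 ^ θ * e2 ^ (1 - θ) →
      e * (y ^ C * z ^ D) = (e1 * (y ^ C1 * z ^ D1)) ^ θ * (e2 * (y ^ C2 * z ^ D2)) ^ (1 - θ) := by
    intro y z e C C1 C2 D D1 D2 e1 e2 hy hz he1 he2 hC hD he
    rw [split y C C1 C2 hy hC, split z D D1 D2 hz hD, he,
      Real.mul_rpow he1 (by positivity), Real.mul_rpow he2 (by positivity),
      Real.mul_rpow (by positivity) (by positivity), Real.mul_rpow (by positivity) (by positivity)]
    ring
  rw [split2 P Q _ A A1 A2 B B1 B2 E1 E2 hP hQ hE1 hE2 hA hB rfl]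
  have hc : (θ⁻¹).HolderConjugate ((1 - θ)⁻¹) := by
    rw [Real.holderConjugate_iff]
    constructor
    · exact one_lt_inv_iff₀.2 ⟨h0, h1⟩
    · rw [inv_inv, inv_inv]; ring
  have nn1 : ∀ x, 0 ≤ w x * (G x ^ A1 * H x ^ B1) := fun x =>
    mul_nonneg (hw x) (mul_nonneg (pow_nonneg (hG x) _) (pow_nonneg (hH x) _))
  have nn2 : ∀ x, 0 ≤ w x * (G x ^ A2 * H x ^ B2) := fun x =>
    mul_nonneg (hw x) (mul_nonneg (pow_nonneg (hG x) _) (pow_nonneg (hH x) _))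
  have := Real.inner_le_Lp_mul_Lq_of_nonneg (s := Finset.univ)
    (f := fun x => (w x * (G x ^ A1 * H x ^ B1)) ^ θ)
    (g := fun x => (w x * (G x ^ A2 * H x ^ B2)) ^ (1 - θ)) hc
    (fun x _ => Real.rpow_nonneg (nn1 x) _) (fun x _ => Real.rpow_nonneg (nn2 x) _)
  have ee : ∀ y t : ℝ, 0 ≤ y → t ≠ 0 → (y ^ t) ^ t⁻¹ = y := by
    intro y t hy ht
    rw [← Real.rpow_mul hy, mul_inv_cancel₀ ht, Real.rpow_one]
  simp only [one_div, inv_inv, ee _ _ (nn1 _) h0.ne', ee _ _ (nn2 _) h2.ne'] at this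
  calc _ = ∑ x, (w x * (G x ^ A1 * H x ^ B1)) ^ θ * (w x * (G x ^ A2 * H x ^ B2)) ^ (1 - θ) := by
        refine Finset.sum_congr rfl fun x _ => ?_
        refine split2 _ _ _ _ _ _ _ _ _ _ _ (hG x) (hH x) (hw x) (hw x) hA hB ?_
        rw [← Real.rpow_add_of_nonneg (hw x) h0.le h2.le]
        simp
    _ ≤ _ := this
    _ ≤ _ := by
        gcongr
        · exact Real.rpow_nonneg (Finset.sum_nonneg fun x _ => nn2 x) _
        · exact Finset.sum_nonneg fun x _ => nn1 x
        · exact Finset.sum_nonneg fun x _ => nn2 x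

/-! ### Nested iteration of the bilinear inequalities -/

section bil
variable {p : ℕ} [Fact p.Prime] {k m : ℕ}

/-- For `l = 0` the bilinear inequality is rescaled decoupling of the second class. -/
lemma Bil.zero {a b : ℕ} {D : ℝ} (hkp : k < p) (hb : 1 ≤ b) (hbm : b ≤ m)
    (h : Dec p k (m - b) D) : Bil p k m 0 a b D := by
  intro c r0 _ r1 h1 _
  have := h.resc hkp hb hbm c h1
  simpa [tri, pow_mul] using this

/-- The initial bilinear inequality: Hölder's inequality and rescaled decoupling of both classes. -/
lemma Bil.start {l a b : ℕ} {D1 D2 : ℝ} (hkp : k < p) (hl : 1 ≤ l) (hlk : l < k) (ha : 1 ≤ a)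
    (ham : a ≤ m) (hb : 1 ≤ b) (hbm : b ≤ m) (h1 : Dec p k (m - a) D1) (h2 : Dec p k (m - b) D2)
    (hD1 : 0 ≤ D1) (hD2 : 0 ≤ D2) :
    Bil p k m l a b (D1 ^ ((tri l : ℝ) / tri k) * D2 ^ (1 - (tri l : ℝ) / tri k)) := by
  intro c r0 hr0 r1 hr1 _
  have hlt := tri_lt hlk
  have hl0 := tri_pos hl
  have hk0 : (0 : ℝ) < tri k := by exact_mod_cast (by omega : 0 < tri k)
  have hl1 : (0 : ℝ) < tri l := by exact_mod_cast (by omega : 0 < tri l)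
  have k1 := h1.resc hkp ha ham c hr0
  have k2 := h2.resc hkp hb hbm c hr1
  refine holder_bound (A1 := tri k) (B1 := 0) (A2 := 0) (B2 := tri k) c.w_nonneg
    (fun x => by positivity) (fun x => by positivity) (by positivity)
    ((div_lt_one hk0).2 (by exact_mod_cast hlt)) ?_ ?_ hD1 hD2 (c.BB_nonneg _ _) (c.BB_nonneg _ _)
    ?_ ?_
  · push_cast; field_simp; ring
  · rw [Nat.cast_sub hlt.le]; push_cast; field_simp; ring
  · simpa [pow_mul] using k1
  · simpa [pow_mul] using k2

/-- Hölder's inequality interpolates the bilinear expression with exponent `l` between the one with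
exponent `k - l` and exchanged classes and the one with exponent `l - 1`. The exponents satisfy
`(k - l + 1) * tri l = (tri k - tri (k - l)) + (k - l) * tri (l - 1)`. -/
lemma Bil.holder {l a b : ℕ} {E1 E2 : ℝ} (hl : 1 ≤ l) (hlk : l < k)
    (h1 : Bil p k m (k - l) b a E1) (h2 : Bil p k m (l - 1) a b E2)
    (hE1 : 0 ≤ E1) (hE2 : 0 ≤ E2) :
    Bil p k m l a b (E1 ^ (1 / ((k : ℝ) - l + 1)) * E2 ^ (1 - 1 / ((k : ℝ) - l + 1))) := by
  intro c r0 hr0 r1 hr1 hs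
  have k1 := h1 c r1 hr1 r0 hr0 (Ne.symm hs)
  have k2 := h2 c r0 hr0 r1 hr1 hs
  obtain ⟨l, rfl⟩ := Nat.exists_eq_add_of_le' hl
  obtain ⟨n, rfl⟩ := Nat.exists_eq_add_of_lt hlk
  have e1 : l + 1 + n + 1 - (l + 1) = n + 1 := by omega
  have e2 : l + 1 - 1 = l := by omega
  rw [e1] at k1
  rw [e2] at k2
  have T : ∀ j : ℕ, (tri j : ℝ) = (j : ℝ) * (j + 1) / 2 := by
    intro j
    have := two_tri j
    have h : (2 : ℝ) * tri j = j * (j + 1) := by exact_mod_cast this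
    linarith
  have hn : ((l + 1 + n + 1 : ℕ) : ℝ) - (l + 1 : ℕ) + 1 = (n : ℝ) + 2 := by push_cast; ring
  rw [hn]
  have hpos : (0 : ℝ) < (n : ℝ) + 2 := by positivity
  refine holder_bound (A1 := tri (l + 1 + n + 1) - tri (n + 1)) (B1 := tri (n + 1))
    (A2 := tri l) (B2 := tri (l + 1 + n + 1) - tri l)
    c.w_nonneg (fun x => by positivity) (fun x => by positivity)
    (by positivity) ((div_lt_one hpos).2 (by linarith [(Nat.cast_nonneg n : (0 : ℝ) ≤ n)]))
    ?_ ?_ hE1 hE2 (c.BB_nonneg _ _) (c.BB_nonneg _ _) ?_ k2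
  · rw [Nat.cast_sub (tri_lt (by omega)).le]
    simp only [T]; push_cast; field_simp; ring
  · rw [Nat.cast_sub (tri_lt (by omega)).le, Nat.cast_sub (tri_lt (by omega)).le]
    simp only [T]; push_cast; field_simp; ring
  · simpa only [mul_comm (_ ^ tri (n + 1))] using k1

end bil

/-- The gains in the nested iteration: after `n` rounds, the bilinear constant at scale `b` gains
`p ^ (-η * gain k n l * b)` over the trivial bound `p ^ (η * m)`. -/
noncomputable def gain (k : ℕ) : ℕ → ℕ → ℝ
  | 0, l => if l = 0 then 1 else 0
  | n + 1, l => if l = 0 then 1 else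
      gain k n (k - l) / l + (1 - 1 / ((k : ℝ) - l + 1)) * gain k n (l - 1)

/-- A bound for the coefficient of the losses caused by lower-dimensional decoupling. -/
def loss (k : ℕ) : ℕ → ℝ
  | 0 => 0
  | n + 1 => 2 * (loss k n + k)

lemma loss_nonneg (k n : ℕ) : 0 ≤ loss k n := by
  induction n with
  | zero => simp [loss]
  | succ n ih => simp only [loss]; positivity

lemma gain_zero (k n : ℕ) : gain k n 0 = 1 := by cases n <;> simp [gain]

lemma gain_sum {k : ℕ} (hk : 2 ≤ k) (n : ℕ) :
    ∑ l ∈ Finset.range (k - 1), gain k n (l + 1) = n * (((k : ℝ) - 1) / k) := by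
  induction n with
  | zero => simp [gain]
  | succ n ih =>
    obtain ⟨k, rfl⟩ := Nat.exists_eq_add_of_le' hk
    have e1 : k + 2 - 1 = k + 1 := by omega
    rw [e1] at ih ⊢
    simp only [gain, Nat.add_eq_zero_iff, one_ne_zero, and_false, if_false, Nat.add_sub_cancel]
    rw [Finset.sum_add_distrib, ← Finset.sum_range_reflect (fun j => gain (k + 2) n (k + 2 - (j + 1)) / _),
      Finset.sum_range_succ' (fun x => (1 - 1 / (((k + 2 : ℕ) : ℝ) - ((x + 1 : ℕ) : ℝ) + 1)) * gain (k + 2) n x),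
      Finset.sum_range_succ]
    rw [Finset.sum_range_succ] at ih
    have e2 : ∑ j ∈ Finset.range k, gain (k + 2) n (k + 2 - (k + 1 - 1 - j + 1)) /
          ((k + 1 - 1 - j + 1 : ℕ) : ℝ) +
        ∑ j ∈ Finset.range k, (1 - 1 / (((k + 2 : ℕ) : ℝ) - ((j + 1 + 1 : ℕ) : ℝ) + 1)) *
          gain (k + 2) n (j + 1) = ∑ j ∈ Finset.range k, gain (k + 2) n (j + 1) := by
      rw [← Finset.sum_add_distrib]
      refine Finset.sum_congr rfl fun j hj => ?_
      have hj := Finset.mem_range.1 hj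
      have : k + 2 - (k + 1 - 1 - j + 1) = j + 1 := by omega
      rw [this]
      have h2 : ((k + 1 - 1 - j + 1 : ℕ) : ℝ) = (k : ℝ) - j + 1 := by
        rw [Nat.add_sub_cancel]; push_cast [Nat.cast_sub hj.le]; ring
      have h3 : ((k + 2 : ℕ) : ℝ) - ((j + 1 + 1 : ℕ) : ℝ) + 1 = (k : ℝ) - j + 1 := by
        push_cast; ring
      rw [h2, h3]
      have : (k : ℝ) - j + 1 ≠ 0 := by
        have : (j : ℝ) < k := by exact_mod_cast hj
        linarith
      field_simp
      ring
    have e3 : k + 1 - 1 - k + 1 = 1 := by omega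
    have e4 : k + 2 - 1 = k + 1 := by omega
    rw [e3, e4, gain_zero]
    push_cast at *
    have h5 : (k : ℝ) + 2 ≠ 0 := by positivity
    have h6 : (k : ℝ) + 2 - 1 + 1 ≠ 0 := by
      have : (0 : ℝ) ≤ k := by positivity
      linarith
    have h7 : (1 - 1 / ((k : ℝ) + 2 - 1 + 1)) = ((k : ℝ) + 2 - 1) / (k + 2) := by
      field_simp
      ring
    rw [h7, add_mul, ← ih, ← e2]
    ring

lemma exists_gain {k : ℕ} (hk : 2 ≤ k) (n : ℕ) :
    ∃ l, 1 ≤ l ∧ l < k ∧ (n : ℝ) / k ≤ gain k n l := by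
  by_contra! h
  have hne : (Finset.range (k - 1)).Nonempty := by
    rw [Finset.nonempty_range_iff]; omega
  have := Finset.sum_lt_sum_of_nonempty (f := fun l => gain k n (l + 1)) (g := fun _ => (n : ℝ) / k)
    hne (fun l hl => h (l + 1) (by omega) (by have := Finset.mem_range.1 hl; omega))
  rw [gain_sum hk] at this
  simp only [Finset.sum_const, Finset.card_range, nsmul_eq_mul] at this
  rw [Nat.cast_sub (by omega)] at this
  apply lt_irrefl _ (this.trans_eq _)
  push_cast
  ring

/-- The number `(k - l + 1) b / l`: the scale at which `l`-dimensional decoupling of one class is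
paired with a class at scale `b`. -/
def asc (k l b : ℕ) : ℕ := (k - l + 1) * (b / l)

lemma asc_mul {k l b : ℕ} (h : l ∣ b) : asc k l b * l = (k - l + 1) * b := by
  rw [asc, mul_assoc, Nat.div_mul_cancel h]

lemma asc_le {k l b : ℕ} (hl : 1 ≤ l) (hlk : l < k) : asc k l b ≤ k * b :=
  Nat.mul_le_mul (by omega) (Nat.div_le_self _ _)

section iter
variable {p : ℕ} [Fact p.Prime] {k : ℕ}

/-- The bilinear inequality after `n` rounds of `Bil.holder` and `Bil.refine`. Scales grow by a
factor at most `k` per round; divisibility by powers of `k!` keeps them integral. -/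
lemma iter {C η ε : ℝ} (hC : 1 ≤ C) (hη : 0 ≤ η) (hε : 0 ≤ ε) (hkp : k < p)
    (hD : ∀ m, Dec p k m (C * (p : ℝ) ^ (η * m)))
    (hDl : ∀ l, 1 ≤ l → l < k → ∀ m, Dec p l m (C * (p : ℝ) ^ (ε * m))) (m : ℕ) :
    ∀ n b l : ℕ, 1 ≤ b → k.factorial ^ (n + 1) ∣ b → b * k ^ (n + 1) ≤ m → 1 ≤ l → l < k →
      Bil p k m l (asc k l b) b
        (C ^ (n + 1) * (p : ℝ) ^ (η * m - η * gain k n l * b + ε * loss k n * b)) := by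
  have hp1 : (1 : ℝ) ≤ p := by exact_mod_cast (p_pos : 0 < p)
  have hp0 : (0 : ℝ) < p := by linarith
  have hasc : ∀ {l b n}, 1 ≤ b → 1 ≤ l → l < k → k.factorial ^ (n + 1) ∣ b → l ∣ b ∧ 1 ≤ asc k l b := by
    intro l b n hb hl hlk hd
    have h1 : l ∣ b := (Nat.dvd_factorial hl hlk.le).trans ((dvd_pow_self _ (by omega)).trans hd)
    exact ⟨h1, Nat.mul_pos (by omega) (Nat.div_pos (Nat.le_of_dvd hb h1) hl)⟩
  intro n
  induction n with
  | zero =>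
    intro b l hb hd hm hl hlk
    obtain ⟨hdl, h1⟩ := hasc hb hl hlk hd
    have h2 : asc k l b ≤ m := (asc_le hl hlk).trans (by simpa [mul_comm] using hm)
    have h3 : b ≤ m := le_trans (Nat.le_mul_of_pos_right b (pow_pos (by omega) _)) hm
    have hst := Bil.start (m := m) hkp hl hlk h1 h2 hb h3 (hD _) (hD _) (by positivity) (by positivity)
    refine hst.mono ?_
    have hmono : ∀ a ≤ m, C * (p : ℝ) ^ (η * ((m - a : ℕ) : ℝ)) ≤ C * (p : ℝ) ^ (η * m) := by
      intro a ha
      refine mul_le_mul_of_nonneg_left (Real.rpow_le_rpow_of_exponent_le hp1 ?_) (by positivity)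
      have : ((m - a : ℕ) : ℝ) ≤ m := by exact_mod_cast Nat.sub_le _ _
      exact mul_le_mul_of_nonneg_left this hη
    have hθ0 : (0 : ℝ) ≤ (tri l : ℝ) / tri k := by positivity
    have hθ1 : (0 : ℝ) ≤ 1 - (tri l : ℝ) / tri k := by
      have := tri_lt hlk
      rw [sub_nonneg]
      apply div_le_one_of_le₀ _ (by positivity)
      exact_mod_cast this.le
    calc _ ≤ (C * (p : ℝ) ^ (η * m)) ^ ((tri l : ℝ) / tri k) *
          (C * (p : ℝ) ^ (η * m)) ^ (1 - (tri l : ℝ) / tri k) := by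
            exact mul_le_mul (Real.rpow_le_rpow (by positivity) (hmono _ h2) hθ0)
              (Real.rpow_le_rpow (by positivity) (hmono _ h3) hθ1) (by positivity) (by positivity)
      _ = C * (p : ℝ) ^ (η * m) := by
            rw [← Real.rpow_add (by positivity)]; simp
      _ = _ := by
            have : l ≠ 0 := by omega
            simp [gain, loss, this]
  | succ n ih =>
    intro b l hb hd hm hl hlk
    obtain ⟨hdl, h1⟩ := hasc hb hl hlk hd
    have hk0 : 0 < k := by omega
    set c' := asc k l b with hc'
    have hc'le : c' ≤ k * b := asc_le hl hlk
    have hc'k : c' * k ^ (n + 1) ≤ m := by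
      refine le_trans (Nat.mul_le_mul_right _ hc'le) (le_trans (le_of_eq ?_) hm)
      ring
    have hc'd : k.factorial ^ (n + 1) ∣ c' := by
      obtain ⟨t, ht⟩ := hd
      obtain ⟨q, hq⟩ := Nat.dvd_factorial hl hlk.le
      refine ⟨(k - l + 1) * (q * t), ?_⟩
      have : b / l = k.factorial ^ (n + 1) * (q * t) := by
        apply Nat.div_eq_of_eq_mul_left hl
        calc b = k.factorial ^ (n + 1) * k.factorial * t := by rw [ht, pow_succ]
          _ = k.factorial ^ (n + 1) * (l * q) * t := by rw [← hq]
          _ = _ := by ring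
      rw [hc', asc, this]; ring
    have hbk : b * k ^ (n + 1) ≤ m := by
      refine le_trans (Nat.mul_le_mul_left _ (Nat.pow_le_pow_right hk0 (by omega))) hm
    have hbd : k.factorial ^ (n + 1) ∣ b := (pow_dvd_pow _ (by omega)).trans hd
    have hkb : k * b ≤ m := by
      refine le_trans ?_ hbk
      rw [mul_comm, pow_succ']
      exact Nat.mul_le_mul_left _ (Nat.le_mul_of_pos_right k (by positivity))
    have hkc : k * c' ≤ m := by
      refine le_trans ?_ hc'k
      rw [mul_comm, pow_succ']
      exact Nat.mul_le_mul_left _ (Nat.le_mul_of_pos_right k (by positivity))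
    have hL := loss_nonneg k n
    -- decoupling the class at scale `b` in dimension `k - l`
    have B1 : Bil p k m (k - l) b c' (C ^ (n + 2) *
        (p : ℝ) ^ (η * m - η * gain k n (k - l) * c' + ε * (loss k n + k) * c')) := by
      have hI := ih c' (k - l) h1 hc'd hc'k (by omega) (by omega)
      obtain ⟨hdl', h1'⟩ := hasc h1 (by omega : 1 ≤ k - l) (by omega) hc'd
      have hle : asc k (k - l) c' ≤ k * c' := asc_le (by omega) (by omega)
      have hb2 : b ≤ asc k (k - l) c' := by
        have q1 := asc_mul (k := k) hdl'
        have q2 := asc_mul (k := k) hdl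
        rw [← hc'] at q2
        have q3 : k - (k - l) + 1 = l + 1 := by omega
        rw [q3] at q1
        obtain ⟨j, rfl⟩ := Nat.exists_eq_add_of_lt hlk
        have q4 : l + j + 1 - l = j + 1 := by omega
        rw [q4] at q1 q2 ⊢
        by_contra! hlt
        nlinarith [Nat.mul_lt_mul_of_pos_right hlt (by positivity : 0 < l * (j + 1))]
      have := hI.refine hkp (by omega) (by omega) (by positivity) hb hb2 (by omega)
        (asc_mul hdl') (hDl _ (by omega) (by omega) _)
      refine this.mono ?_
      rw [mul_mul_mul_comm, ← Real.rpow_add hp0, ← pow_succ']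
      refine mul_le_mul_of_nonneg_left (Real.rpow_le_rpow_of_exponent_le hp1 ?_) (by positivity)
      · have : ((asc k (k - l) c' - b : ℕ) : ℝ) ≤ k * c' := by
          exact_mod_cast (Nat.sub_le _ _).trans hle
        nlinarith [mul_le_mul_of_nonneg_left this hε]
    have B2 : Bil p k m (l - 1) c' b (C ^ (n + 2) *
        (p : ℝ) ^ (η * m - η * gain k n (l - 1) * b + ε * (loss k n + k) * b)) := by
      rcases Nat.lt_or_ge 1 l with hl1 | hl1
      · have hI := ih b (l - 1) hb hbd hbk (by omega) (by omega)
        obtain ⟨hdl', h1'⟩ := hasc hb (by omega : 1 ≤ l - 1) (by omega) hbd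
        have hle : asc k (l - 1) b ≤ k * b := asc_le (by omega) (by omega)
        have hb2 : c' ≤ asc k (l - 1) b := by
          apply Nat.mul_le_mul (by omega)
          exact Nat.div_le_div_left (by omega) (by omega)
        have := hI.refine hkp (by omega) (by omega) (by positivity) h1 hb2 (by omega)
          (asc_mul hdl') (hDl _ (by omega) (by omega) _)
        refine this.mono ?_
        rw [mul_mul_mul_comm, ← Real.rpow_add hp0, ← pow_succ']
        refine mul_le_mul_of_nonneg_left (Real.rpow_le_rpow_of_exponent_le hp1 ?_) (by positivity)
        · have : ((asc k (l - 1) b - c' : ℕ) : ℝ) ≤ k * b := by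
            exact_mod_cast (Nat.sub_le _ _).trans hle
          nlinarith [mul_le_mul_of_nonneg_left this hε]
      · have : l - 1 = 0 := by omega
        rw [this]
        have hbm : b ≤ m := le_trans (Nat.le_mul_of_pos_left b hk0) hkb
        refine (Bil.zero hkp hb hbm (hD _)).mono ?_
        rw [gain_zero, Nat.cast_sub hbm]
        gcongr ?_ * ?_
        · calc C = C ^ 1 := (pow_one C).symm
            _ ≤ C ^ (n + 2) := pow_le_pow_right₀ hC (by omega)
        · apply Real.rpow_le_rpow_of_exponent_le hp1
          have : 0 ≤ ε * (loss k n + k) * b := by positivity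
          linarith
    have := Bil.holder hl hlk B1 B2 (by positivity) (by positivity)
    refine this.mono ?_
    have hlk' : (l : ℝ) < k := by exact_mod_cast hlk
    have hl' : (0 : ℝ) < l := by exact_mod_cast hl
    set θ : ℝ := 1 / ((k : ℝ) - l + 1) with hθ
    have hθ0 : 0 ≤ θ := by rw [hθ]; apply div_nonneg <;> linarith
    have hθ1 : θ ≤ 1 := by rw [hθ, div_le_one] <;> linarith
    rw [Real.mul_rpow (by positivity) (by positivity), Real.mul_rpow (by positivity) (by positivity),
      mul_mul_mul_comm, ← Real.rpow_add (by positivity), ← Real.rpow_mul hp0.le,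
      ← Real.rpow_mul hp0.le, ← Real.rpow_add hp0]
    rw [show θ + (1 - θ) = 1 by ring, Real.rpow_one]
    refine mul_le_mul_of_nonneg_left (Real.rpow_le_rpow_of_exponent_le hp1 ?_) (by positivity)
    · have hcθ : (c' : ℝ) * θ = b / l := by
        have q2 := asc_mul (k := k) hdl
        rw [← hc'] at q2
        have q3 : (c' : ℝ) * l = ((k : ℝ) - l + 1) * b := by
          have := congrArg (Nat.cast (R := ℝ)) q2
          push_cast [Nat.cast_sub hlk.le] at this
          exact this
        rw [hθ]
        have : (k : ℝ) - l + 1 ≠ 0 := by linarith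
        field_simp
        linarith
      have hl0 : l ≠ 0 := by omega
      simp only [gain, loss, hl0, if_false, ← hθ]
      have hbl : (b : ℝ) / l ≤ b := div_le_self (by positivity) (by exact_mod_cast hl)
      have X0 : 0 ≤ ε * (loss k n + k) := by positivity
      have X1 := mul_le_mul_of_nonneg_left hbl X0
      have X2 : ε * (loss k n + k) * b * (1 - θ) ≤ ε * (loss k n + k) * b :=
        mul_le_of_le_one_right (by positivity) (by linarith)
      calc _ = η * m - η * (gain k n (k - l)) * (c' * θ) - η * gain k n (l - 1) * b * (1 - θ)
            + (ε * (loss k n + k) * (c' * θ) + ε * (loss k n + k) * b * (1 - θ)) := by ring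
        _ ≤ η * m - η * (gain k n (k - l)) * (c' * θ) - η * gain k n (l - 1) * b * (1 - θ)
            + (ε * (loss k n + k) * b + ε * (loss k n + k) * b) := by
              rw [hcθ]; linarith
        _ = _ := by rw [hcθ]; ring

end iter
/-! ### Reduction to bilinear inequalities and the decoupling theorem -/

lemma sum_pow_le_pow {α : Type} (t : Finset α) (y : α → ℝ) (hy : ∀ i, 0 ≤ y i) {u : ℕ} (hu : 1 ≤ u) :
    ∑ i ∈ t, y i ^ u ≤ (∑ i ∈ t, y i) ^ u := by
  obtain ⟨u, rfl⟩ := Nat.exists_eq_add_of_le' hu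
  calc ∑ i ∈ t, y i ^ (u + 1) ≤ ∑ i ∈ t, (∑ j ∈ t, y j) ^ u * y i := by
        refine Finset.sum_le_sum fun i hi => ?_
        rw [pow_succ]
        exact mul_le_mul_of_nonneg_right (pow_le_pow_left₀ (hy i)
          (Finset.single_le_sum (fun j _ => hy j) hi) _) (hy i)
    _ = _ := by rw [← Finset.mul_sum, pow_succ]

lemma norm_sum_pow_le {n : ℕ} (hn : 0 < n) (z : ℕ → ℂ) {u : ℕ} :
    (‖∑ i ∈ range n, z i‖ ^ 2) ^ u ≤ (n : ℝ) ^ (2 * u) * ∑ i ∈ range n, (‖z i‖ ^ 2) ^ u := by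
  obtain ⟨j, hj, hmax⟩ := Finset.exists_max_image (range n) (fun i => ‖z i‖) ⟨0, by simpa using hn⟩
  have h1 : ‖∑ i ∈ range n, z i‖ ≤ n * ‖z j‖ := by
    refine (norm_sum_le _ _).trans ?_
    refine (Finset.sum_le_card_nsmul _ _ _ hmax).trans_eq ?_
    simp
  have h2 : (‖z j‖ ^ 2) ^ u ≤ ∑ i ∈ range n, (‖z i‖ ^ 2) ^ u :=
    Finset.single_le_sum (f := fun i => (‖z i‖ ^ 2) ^ u) (fun i _ => by positivity) hj
  calc _ ≤ ((n * ‖z j‖) ^ 2) ^ u := by gcongr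
    _ = (n : ℝ) ^ (2 * u) * (‖z j‖ ^ 2) ^ u := by rw [mul_pow, mul_pow, pow_mul]
    _ ≤ _ := by gcongr

/-- A sum is dominated either by its largest term or by its two largest terms jointly. -/
lemma broad_narrow {n : ℕ} (hn : 2 ≤ n) (z : ℕ → ℂ) (u v : ℕ) :
    (‖∑ i ∈ range n, z i‖ ^ 2) ^ (u + v) ≤ 4 ^ (u + v) * ∑ i ∈ range n, (‖z i‖ ^ 2) ^ (u + v) +
      (2 * (n : ℝ)) ^ (2 * (u + v)) * ∑ i ∈ range n, ∑ j ∈ (range n).erase i,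
        (‖z i‖ ^ 2) ^ u * (‖z j‖ ^ 2) ^ v := by
  obtain ⟨i, hi, hmax⟩ := Finset.exists_max_image (range n) (fun i => ‖z i‖) ⟨0, by simp; omega⟩
  have hne : ((range n).erase i).Nonempty := by
    rw [← Finset.card_pos, Finset.card_erase_of_mem hi, Finset.card_range]; omega
  obtain ⟨j, hj, hmax'⟩ := Finset.exists_max_image _ (fun i => ‖z i‖) hne
  have h1 : ‖∑ i ∈ range n, z i‖ ≤ ‖z i‖ + n * ‖z j‖ := by
    rw [← Finset.add_sum_erase _ _ hi]
    refine (norm_add_le _ _).trans ?_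
    gcongr
    refine (norm_sum_le _ _).trans ?_
    refine (Finset.sum_le_card_nsmul _ _ _ hmax').trans ?_
    rw [nsmul_eq_mul]
    gcongr
    exact (Finset.card_erase_le).trans_eq (by simp)
  have n1 : 0 ≤ ∑ i ∈ range n, (‖z i‖ ^ 2) ^ (u + v) := Finset.sum_nonneg fun _ _ => by positivity
  have n2 : 0 ≤ ∑ i ∈ range n, ∑ j ∈ (range n).erase i, (‖z i‖ ^ 2) ^ u * (‖z j‖ ^ 2) ^ v :=
    Finset.sum_nonneg fun _ _ => Finset.sum_nonneg fun _ _ => by positivity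
  rcases le_total (n * ‖z j‖) ‖z i‖ with h | h
  · refine le_add_of_le_of_nonneg ?_ (by positivity)
    calc _ ≤ ((2 * ‖z i‖) ^ 2) ^ (u + v) := by gcongr; linarith
      _ = 4 ^ (u + v) * (‖z i‖ ^ 2) ^ (u + v) := by rw [← mul_pow]; congr 1; ring
      _ ≤ _ := by
        gcongr
        exact Finset.single_le_sum (f := fun i => (‖z i‖ ^ 2) ^ (u + v)) (fun i _ => by positivity) hi
  · refine le_add_of_nonneg_of_le (by positivity) ?_
    calc _ ≤ ((2 * n * ‖z j‖) ^ 2) ^ (u + v) := by gcongr; linarith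
      _ = (2 * (n : ℝ)) ^ (2 * (u + v)) * ((‖z j‖ ^ 2) ^ u * (‖z j‖ ^ 2) ^ v) := by
        rw [pow_mul, ← pow_add, ← mul_pow]; congr 1; ring
      _ ≤ (2 * (n : ℝ)) ^ (2 * (u + v)) * ((‖z i‖ ^ 2) ^ u * (‖z j‖ ^ 2) ^ v) := by
        gcongr
        exact hmax j (Finset.mem_of_mem_erase hj)
      _ ≤ _ := by
        gcongr
        refine le_trans ?_ (Finset.single_le_sum (f := fun i => ∑ j ∈ (range n).erase i,
          (‖z i‖ ^ 2) ^ u * (‖z j‖ ^ 2) ^ v)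
          (fun i _ => Finset.sum_nonneg fun _ _ => by positivity) hi)
        exact Finset.single_le_sum (f := fun j => (‖z i‖ ^ 2) ^ u * (‖z j‖ ^ 2) ^ v)
          (fun i _ => by positivity) hj

section dec
variable {p : ℕ} [Fact p.Prime] {k m : ℕ}

/-- Splitting classes modulo `p` into finer ones costs a power of `p` independent of `m`. -/
lemma Bil.coarse {l a b : ℕ} {E : ℝ} (hE : 0 ≤ E) (hl : 1 ≤ l) (hlk : l < k) (ha : 1 ≤ a)
    (hb : 1 ≤ b) (h : Bil p k m l a b E) :
    Bil p k m l 1 1 ((p : ℝ) ^ ((a + b) * (2 * tri k)) * E) := by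
  intro c r0 h0 r1 h1 hs
  set u := tri l
  set v := tri k - tri l with hv
  have hlt : tri l < tri k := tri_lt hlk
  have hu : 1 ≤ u := tri_pos hl
  have hv1 : 1 ≤ v := by omega
  obtain ⟨a, rfl⟩ := Nat.exists_eq_add_of_le ha
  obtain ⟨b, rfl⟩ := Nat.exists_eq_add_of_le hb
  have Ea : ∀ x, (‖c.f 1 r0 x‖ ^ 2) ^ u ≤ ((p ^ a : ℕ) : ℝ) ^ (2 * u) *
      ∑ ρ ∈ range (p ^ a), (‖c.f (1 + a) (r0 + p ^ 1 * ρ) x‖ ^ 2) ^ u := by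
    intro x
    rw [← c.f_sum (n := a) h0 x]
    exact norm_sum_pow_le (pow_pos p_pos _) _
  have Eb : ∀ x, (‖c.f 1 r1 x‖ ^ 2) ^ v ≤ ((p ^ b : ℕ) : ℝ) ^ (2 * v) *
      ∑ ρ ∈ range (p ^ b), (‖c.f (1 + b) (r1 + p ^ 1 * ρ) x‖ ^ 2) ^ v := by
    intro x
    rw [← c.f_sum (n := b) h1 x]
    exact norm_sum_pow_le (pow_pos p_pos _) _
  have hp1 : (1 : ℝ) ≤ p := by exact_mod_cast (p_pos : 0 < p)
  have hN : ((p ^ a : ℕ) : ℝ) ^ (2 * u) * ((p ^ b : ℕ) : ℝ) ^ (2 * v) ≤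
      (p : ℝ) ^ ((1 + a + (1 + b)) * (2 * tri k)) := by
    push_cast
    rw [← pow_mul, ← pow_mul, ← pow_add]
    refine pow_le_pow_right₀ hp1 ?_
    calc a * (2 * u) + b * (2 * v) ≤ a * (2 * tri k) + b * (2 * tri k) := by gcongr; omega
      _ ≤ _ := by rw [← add_mul]; exact Nat.mul_le_mul_right _ (by omega)
  have P0 : 0 ≤ c.BB 1 r0 ^ u * c.BB 1 r1 ^ v :=
    mul_nonneg (pow_nonneg (c.BB_nonneg _ _) _) (pow_nonneg (c.BB_nonneg _ _) _)
  calc _ ≤ ∑ x, c.w x * ((((p ^ a : ℕ) : ℝ) ^ (2 * u) *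
          ∑ ρ ∈ range (p ^ a), (‖c.f (1 + a) (r0 + p ^ 1 * ρ) x‖ ^ 2) ^ u) *
        (((p ^ b : ℕ) : ℝ) ^ (2 * v) *
          ∑ ρ ∈ range (p ^ b), (‖c.f (1 + b) (r1 + p ^ 1 * ρ) x‖ ^ 2) ^ v)) := by
        refine Finset.sum_le_sum fun x _ => mul_le_mul_of_nonneg_left ?_ (c.w_nonneg x)
        exact mul_le_mul (Ea x) (Eb x) (by positivity)
          (mul_nonneg (by positivity) (Finset.sum_nonneg fun _ _ => by positivity))
    _ = (((p ^ a : ℕ) : ℝ) ^ (2 * u) * ((p ^ b : ℕ) : ℝ) ^ (2 * v)) *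
        ∑ ρ ∈ range (p ^ a), ∑ ρ' ∈ range (p ^ b), ∑ x,
          c.w x * ((‖c.f (1 + a) (r0 + p ^ 1 * ρ) x‖ ^ 2) ^ u *
            (‖c.f (1 + b) (r1 + p ^ 1 * ρ') x‖ ^ 2) ^ v) := by
        have : ∀ ρ : ℕ, ∑ ρ' ∈ range (p ^ b), ∑ x,
          c.w x * ((‖c.f (1 + a) (r0 + p ^ 1 * ρ) x‖ ^ 2) ^ u *
            (‖c.f (1 + b) (r1 + p ^ 1 * ρ') x‖ ^ 2) ^ v) = ∑ x, ∑ ρ' ∈ range (p ^ b), 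
          c.w x * ((‖c.f (1 + a) (r0 + p ^ 1 * ρ) x‖ ^ 2) ^ u *
            (‖c.f (1 + b) (r1 + p ^ 1 * ρ') x‖ ^ 2) ^ v) := fun ρ => Finset.sum_comm
        simp_rw [this]
        rw [Finset.sum_comm, Finset.mul_sum]
        refine Finset.sum_congr rfl fun x _ => ?_
        rw [mul_mul_mul_comm, Finset.sum_mul_sum]
        simp_rw [← Finset.mul_sum]
        ring
    _ ≤ (((p ^ a : ℕ) : ℝ) ^ (2 * u) * ((p ^ b : ℕ) : ℝ) ^ (2 * v)) *
        ∑ ρ ∈ range (p ^ a), ∑ ρ' ∈ range (p ^ b), E *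
          (c.BB (1 + a) (r0 + p ^ 1 * ρ) ^ u * c.BB (1 + b) (r1 + p ^ 1 * ρ') ^ v) := by
        refine mul_le_mul_of_nonneg_left (Finset.sum_le_sum fun ρ hρ => Finset.sum_le_sum
          fun ρ' hρ' => ?_) (by positivity)
        exact h c _ (lift_lt h0 (Finset.mem_range.1 hρ)) _ (lift_lt h1 (Finset.mem_range.1 hρ'))
          (by rwa [lift_mod le_rfl, lift_mod le_rfl])
    _ = (((p ^ a : ℕ) : ℝ) ^ (2 * u) * ((p ^ b : ℕ) : ℝ) ^ (2 * v)) * (E *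
        ((∑ ρ ∈ range (p ^ a), c.BB (1 + a) (r0 + p ^ 1 * ρ) ^ u) *
          ∑ ρ' ∈ range (p ^ b), c.BB (1 + b) (r1 + p ^ 1 * ρ') ^ v)) := by
        rw [Finset.sum_mul_sum, Finset.mul_sum]
        simp_rw [Finset.mul_sum]
    _ ≤ (((p ^ a : ℕ) : ℝ) ^ (2 * u) * ((p ^ b : ℕ) : ℝ) ^ (2 * v)) * (E *
        (c.BB 1 r0 ^ u * c.BB 1 r1 ^ v)) := by
        refine mul_le_mul_of_nonneg_left (mul_le_mul_of_nonneg_left ?_ hE) (by positivity)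
        rw [← c.BB_sum (n := a) h0, ← c.BB_sum (n := b) h1]
        exact mul_le_mul (sum_pow_le_pow _ _ (fun _ => c.BB_nonneg _ _) hu)
          (sum_pow_le_pow _ _ (fun _ => c.BB_nonneg _ _) hv1)
          (Finset.sum_nonneg fun _ _ => pow_nonneg (c.BB_nonneg _ _) _)
          (pow_nonneg (Finset.sum_nonneg fun _ _ => c.BB_nonneg _ _) _)
    _ ≤ _ := by
        rw [← mul_assoc]
        exact mul_le_mul_of_nonneg_right (mul_le_mul_of_nonneg_right hN hE) P0

lemma Dec.trivial (hk : 1 ≤ k) : Dec p k m ((p : ℝ) ^ (((2 * tri k : ℕ) : ℝ) * m)) := by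
  intro c
  have hu : 1 ≤ tri k := tri_pos hk
  have hp : (p : ℝ) ^ (((2 * tri k : ℕ) : ℝ) * m) = ((p ^ m : ℕ) : ℝ) ^ (2 * tri k) := by
    rw [mul_comm, Real.rpow_mul (by positivity), Real.rpow_natCast, Real.rpow_natCast]
    push_cast
    rfl
  rw [hp]
  have h0 : 0 < p ^ 0 := by simp
  calc _ ≤ ∑ x, c.w x * (((p ^ m : ℕ) : ℝ) ^ (2 * tri k) *
          ∑ ρ ∈ range (p ^ m), (‖c.f m ρ x‖ ^ 2) ^ tri k) := by
        refine Finset.sum_le_sum fun x _ => mul_le_mul_of_nonneg_left ?_ (c.w_nonneg x)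
        rw [← c.f_zero, ← c.f_sum (n := m) h0 x, pow_mul]
        simpa using norm_sum_pow_le (pow_pos p_pos m) (fun ρ => c.f m ρ x) (u := tri k)
    _ = ((p ^ m : ℕ) : ℝ) ^ (2 * tri k) *
          ∑ ρ ∈ range (p ^ m), ∑ x, c.w x * ‖fs c.F (cls p c.s c.loc m ρ) x‖ ^ (2 * tri k) := by
        rw [Finset.sum_comm, Finset.mul_sum]
        refine Finset.sum_congr rfl fun x _ => ?_
        rw [← Finset.mul_sum]
        simp_rw [pow_mul _ 2 (tri k)]
        unfold Cfg.f
        ring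
    _ ≤ ((p ^ m : ℕ) : ℝ) ^ (2 * tri k) * ∑ ρ ∈ range (p ^ m), c.Bd ρ ^ tri k := by
        refine mul_le_mul_of_nonneg_left (Finset.sum_le_sum fun ρ hρ =>
          c.bd ρ (Finset.mem_range.1 hρ)) (by positivity)
    _ ≤ _ := mul_le_mul_of_nonneg_left (sum_pow_le_pow _ _ c.Bd_nonneg hu) (by positivity)

/-- The broad-narrow step: one class modulo `p` dominates, which is handled by rescaling, or two
separated classes do, which is handled by the bilinear inequality. -/
lemma Dec.step {l : ℕ} {D E : ℝ} (hkp : k < p) (hl : 1 ≤ l) (hlk : l < k) (hm : 1 ≤ m)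
    (hD0 : 0 ≤ D) (hE0 : 0 ≤ E) (hD : Dec p k (m - 1) D) (hE : Bil p k m l 1 1 E) :
    Dec p k m (4 ^ tri k * D + (2 * (p : ℝ)) ^ (2 * tri k) * E) := by
  intro c
  set u := tri l with hu
  set v := tri k - tri l with hv
  have hlt : tri l < tri k := tri_lt hlk
  have hu1 : 1 ≤ u := tri_pos hl
  have hv1 : 1 ≤ v := by omega
  have huv : tri k = u + v := by omega
  have h0 : 0 < p ^ 0 := by simp
  have S : ∑ j ∈ range p, c.BB 1 j = ∑ r ∈ range (p ^ m), c.Bd r := by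
    have := c.BB_sum (n := 1) h0
    simpa [c.BB_zero] using this
  have key : ∀ x, ‖fs c.F c.s x‖ ^ (2 * tri k) ≤
      4 ^ tri k * ∑ i ∈ range p, ‖c.f 1 i x‖ ^ (2 * tri k) +
      (2 * (p : ℝ)) ^ (2 * tri k) * ∑ i ∈ range p, ∑ j ∈ (range p).erase i,
        (‖c.f 1 i x‖ ^ 2) ^ u * (‖c.f 1 j x‖ ^ 2) ^ v := by
    intro x
    have := broad_narrow (Fact.out : p.Prime).two_le (fun i => c.f 1 i x) u v
    have h2 := c.f_sum (n := 1) h0 x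
    simp only [pow_one, zero_add, pow_zero, one_mul, c.f_zero] at h2
    rw [h2, ← huv] at this
    simpa only [pow_mul _ 2 (tri k)] using this
  calc _ ≤ ∑ x, c.w x * (4 ^ tri k * ∑ i ∈ range p, ‖c.f 1 i x‖ ^ (2 * tri k) +
      (2 * (p : ℝ)) ^ (2 * tri k) * ∑ i ∈ range p, ∑ j ∈ (range p).erase i,
        (‖c.f 1 i x‖ ^ 2) ^ u * (‖c.f 1 j x‖ ^ 2) ^ v) :=
        Finset.sum_le_sum fun x _ => mul_le_mul_of_nonneg_left (key x) (c.w_nonneg x)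
    _ = 4 ^ tri k * ∑ i ∈ range p, ∑ x, c.w x * ‖c.f 1 i x‖ ^ (2 * tri k) +
        (2 * (p : ℝ)) ^ (2 * tri k) * ∑ i ∈ range p, ∑ j ∈ (range p).erase i,
          ∑ x, c.w x * ((‖c.f 1 i x‖ ^ 2) ^ u * (‖c.f 1 j x‖ ^ 2) ^ v) := by
        have : ∀ i, ∑ j ∈ (range p).erase i,
          ∑ x, c.w x * ((‖c.f 1 i x‖ ^ 2) ^ u * (‖c.f 1 j x‖ ^ 2) ^ v) =
          ∑ x, ∑ j ∈ (range p).erase i,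
          c.w x * ((‖c.f 1 i x‖ ^ 2) ^ u * (‖c.f 1 j x‖ ^ 2) ^ v) := fun i => Finset.sum_comm
        simp_rw [this]
        rw [Finset.sum_comm, Finset.sum_comm (s := range p), Finset.mul_sum, Finset.mul_sum,
          ← Finset.sum_add_distrib]
        refine Finset.sum_congr rfl fun x _ => ?_
        simp_rw [← Finset.mul_sum]
        ring
    _ ≤ 4 ^ tri k * ∑ i ∈ range p, D * c.BB 1 i ^ tri k +
        (2 * (p : ℝ)) ^ (2 * tri k) * ∑ i ∈ range p, ∑ j ∈ (range p).erase i,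
          E * (c.BB 1 i ^ u * c.BB 1 j ^ v) := by
        refine add_le_add (mul_le_mul_of_nonneg_left (Finset.sum_le_sum fun i hi => ?_) (by positivity))
          (mul_le_mul_of_nonneg_left (Finset.sum_le_sum fun i hi => Finset.sum_le_sum fun j hj => ?_)
            (by positivity))
        · exact hD.resc hkp le_rfl hm c (by simpa using hi)
        · have hj' := Finset.mem_of_mem_erase hj
          refine hE c i (by simpa using hi) j (by simpa using hj') ?_
          rw [Nat.mod_eq_of_lt (Finset.mem_range.1 hi), Nat.mod_eq_of_lt (Finset.mem_range.1 hj')]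
          exact (Finset.ne_of_mem_erase hj).symm
    _ ≤ 4 ^ tri k * (D * (∑ i ∈ range p, c.BB 1 i) ^ tri k) +
        (2 * (p : ℝ)) ^ (2 * tri k) * (E * (∑ i ∈ range p, c.BB 1 i) ^ tri k) := by
        refine add_le_add (mul_le_mul_of_nonneg_left ?_ (by positivity))
          (mul_le_mul_of_nonneg_left ?_ (by positivity))
        · rw [← Finset.mul_sum]
          exact mul_le_mul_of_nonneg_left (sum_pow_le_pow _ _ (fun _ => c.BB_nonneg _ _) (by omega)) hD0
        · have nn := fun i => c.BB_nonneg 1 i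
          calc _ ≤ ∑ i ∈ range p, ∑ j ∈ range p, E * (c.BB 1 i ^ u * c.BB 1 j ^ v) := by
                refine Finset.sum_le_sum fun i _ => Finset.sum_le_sum_of_subset_of_nonneg
                  (Finset.erase_subset _ _) fun j _ _ => ?_
                exact mul_nonneg hE0 (mul_nonneg (pow_nonneg (nn i) _) (pow_nonneg (nn j) _))
            _ = E * ((∑ i ∈ range p, c.BB 1 i ^ u) * ∑ j ∈ range p, c.BB 1 j ^ v) := by
                rw [Finset.sum_mul_sum]
                simp_rw [Finset.mul_sum]
            _ ≤ _ := by
                refine mul_le_mul_of_nonneg_left ?_ hE0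
                rw [huv, pow_add]
                exact mul_le_mul (sum_pow_le_pow _ _ nn hu1) (sum_pow_le_pow _ _ nn hv1)
                  (Finset.sum_nonneg fun _ _ => pow_nonneg (nn _) _)
                  (pow_nonneg (Finset.sum_nonneg fun _ _ => nn _) _)
    _ = _ := by rw [S]; ring

/-- In dimension one the pieces are orthogonal. -/
lemma Dec.one : Dec p 1 m 1 := by
  intro c
  obtain ⟨φ, hφ, hv⟩ := c.sys
  obtain ⟨r, hr⟩ := hφ 0
  obtain ⟨τ, hτ, cc, hc, hF⟩ := hv (fun _ => 1)
  have t1 : tri 1 = 1 := by simp [tri]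
  have h0 : 0 < p ^ 0 := by simp
  simp only [Finset.univ_unique, Fin.default_eq_zero, one_mul, Finset.sum_singleton, mul_one] at hF
  have orth : ∀ i ∈ c.s, ∀ j ∈ c.s, c.loc i % p ^ m ≠ c.loc j % p ^ m →
      ∑ x, (c.w x : ℂ) * (c.F i x * (starRingEnd ℂ) (c.F j x)) = 0 := by
    intro i hi j hj hne
    set y := (φ 0).eval (c.loc i : ℤ_[p])
    set z := (φ 0).eval (c.loc j : ℤ_[p])
    have hcy : ∀ t, chi p m t * (starRingEnd ℂ) (chi p m t) = 1 := by
      intro t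
      rw [Complex.mul_conj, Complex.normSq_eq_norm_sq, norm_chi]; simp
    have hyz : chi p m (y - z) = chi p m y * (starRingEnd ℂ) (chi p m z) := by
      have : chi p m y = chi p m (y - z) * chi p m z := by rw [← chi_add, sub_add_cancel]
      rw [this, mul_assoc, hcy, mul_one]
    have hinv : ∑ x, (c.w x : ℂ) * (c.F i x * (starRingEnd ℂ) (c.F j x)) =
        chi p m (y - z) * ∑ x, (c.w x : ℂ) * (c.F i x * (starRingEnd ℂ) (c.F j x)) := by
      conv_lhs => rw [← Equiv.sum_comp τ]
      rw [Finset.mul_sum]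
      refine Finset.sum_congr rfl fun x _ => ?_
      rw [hτ, hF i hi, hF j hj, map_mul, map_mul, hyz]
      have : cc * (starRingEnd ℂ) cc = 1 := by
        rw [Complex.mul_conj, Complex.normSq_eq_norm_sq, hc]; simp
      linear_combination (c.w x : ℂ) * chi p m y * c.F i x * (starRingEnd ℂ) (chi p m z) *
        (starRingEnd ℂ) (c.F j x) * this
    by_contra hS
    have h1 : chi p m (y - z) = 1 := by
      have : (chi p m (y - z) - 1) * ∑ x, (c.w x : ℂ) * (c.F i x * (starRingEnd ℂ) (c.F j x)) = 0 := by
        rw [sub_mul, ← hinv]; ring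
      rcases mul_eq_zero.1 this with h | h
      · exact sub_eq_zero.1 h
      · exact absurd h hS
    rw [chi_eq_one_iff] at h1
    have hyz' : ∃ q : ℤ_[p], y - z = ((c.loc i : ℤ_[p]) - (c.loc j : ℤ_[p])) * (1 + p * q) := by
      obtain ⟨q, hq⟩ := Polynomial.sub_dvd_eval_sub (c.loc i : ℤ_[p]) (c.loc j : ℤ_[p]) r
      refine ⟨q, ?_⟩
      simp only [y, z, hr]
      simp only [Polynomial.eval_add, Polynomial.eval_mul, Polynomial.eval_X,
        Polynomial.eval_C, Fin.val_zero, zero_add, pow_one]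
      linear_combination (p : ℤ_[p]) * hq
    obtain ⟨q, hq⟩ := hyz'
    have hun : IsUnit (1 + (p : ℤ_[p]) * q) := by
      rw [isUnit_iff_toZMod]; simp
    have h2 : ((c.loc i : ℤ_[p]) - (c.loc j : ℤ_[p])) = (((c.loc i : ℤ) - (c.loc j : ℤ) : ℤ) : ℤ_[p]) := by
      push_cast; rfl
    rw [hq, hun.dvd_mul_right, h2, PadicInt.pow_p_dvd_int_iff] at h1
    apply hne
    have h3 : (c.loc j : ℤ) ≡ c.loc i [ZMOD (p : ℤ) ^ m] := Int.modEq_iff_dvd.2 h1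
    have h4 : (c.loc i : ℤ) % (p : ℤ) ^ m = (c.loc j : ℤ) % (p : ℤ) ^ m := h3.symm
    exact_mod_cast h4
  have orth2 : ∀ r ∈ range (p ^ m), ∀ r' ∈ range (p ^ m), r ≠ r' →
      ∑ x, (c.w x : ℂ) * (c.f m r x * (starRingEnd ℂ) (c.f m r' x)) = 0 := by
    intro r _ r' _ hne
    unfold Cfg.f fs
    simp_rw [map_sum, Finset.sum_mul_sum, Finset.mul_sum]
    rw [Finset.sum_comm]
    refine Finset.sum_eq_zero fun i hi => ?_
    rw [Finset.sum_comm]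
    refine Finset.sum_eq_zero fun j hj => ?_
    obtain ⟨hi, hi'⟩ := Finset.mem_filter.1 hi
    obtain ⟨hj, hj'⟩ := Finset.mem_filter.1 hj
    exact orth i hi j hj (by rw [hi', hj']; exact hne)
  have hmain : ∑ x, c.w x * ‖fs c.F c.s x‖ ^ 2 =
      ∑ r ∈ range (p ^ m), ∑ x, c.w x * ‖c.f m r x‖ ^ 2 := by
    have : ∀ z : ℂ, ((‖z‖ ^ 2 : ℝ) : ℂ) = z * (starRingEnd ℂ) z := by
      intro z; rw [Complex.mul_conj, Complex.normSq_eq_norm_sq]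
    apply Complex.ofReal_injective
    simp only [Complex.ofReal_sum, Complex.ofReal_mul, this]
    have e : ∀ x, fs c.F c.s x = ∑ r ∈ range (p ^ m), c.f m r x := by
      intro x
      rw [← c.f_zero, ← c.f_sum (n := m) h0 x]; simp
    simp_rw [e, map_sum, Finset.sum_mul_sum, Finset.mul_sum]
    rw [Finset.sum_comm]
    refine Finset.sum_congr rfl fun r hr => ?_
    rw [Finset.sum_comm]
    exact Finset.sum_eq_single r (fun r' hr' hne => orth2 r hr r' hr' hne.symm) (fun h => absurd hr h)
  rw [t1, mul_one, hmain, one_mul, pow_one]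
  refine Finset.sum_le_sum fun r hr => ?_
  have := c.bd r (Finset.mem_range.1 hr)
  rw [t1, mul_one, pow_one] at this
  exact this

end dec
/-- Decoupling at all scales with a loss of `p ^ (η * m)` at scale `p ^ (-m)`. -/
def DecB (p : ℕ) [Fact p.Prime] (k : ℕ) (η : ℝ) : Prop :=
  ∃ C : ℝ, 1 ≤ C ∧ ∀ m : ℕ, Dec p k m (C * (p : ℝ) ^ (η * m))

/-- One round of improvement of the decoupling exponent: as long as `η ≥ ε₀`, the exponent can be
lowered by the fixed amount `1 / k ^ (n + 1)`, where `n` depends on `k` and `ε₀` only. -/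
lemma DecB.improve {p : ℕ} [Fact p.Prime] {k n : ℕ} {ε₀ ε η : ℝ} (hk : 2 ≤ k) (hε₀ : 0 < ε₀)
    (hε : 0 ≤ ε) (hn : (4 * k * tri k : ℕ) + 2 ≤ ε₀ * (n / k)) (hεn : ε * loss k n ≤ 1)
    (hkp : k < p) (hp : 2 * 4 ^ tri k ≤ (p : ℝ) ^ ε₀)
    (hl : ∀ l, 1 ≤ l → l < k → DecB p l ε) (hη : ε₀ ≤ η) (h : DecB p k η) :
    DecB p k (max (η - 1 / (k : ℝ) ^ (n + 1)) ε₀) := by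
  have hp1 : (1 : ℝ) ≤ p := by exact_mod_cast (p_pos : 0 < p)
  have hp0 : (0 : ℝ) < p := by linarith
  have hη0 : 0 ≤ η := by linarith
  obtain ⟨C0, hC0, hD0⟩ := h
  choose! Cl hCl hDl using hl
  -- a common constant for all dimensions
  set C : ℝ := C0 + ∑ l ∈ Finset.Ico 1 k, Cl l with hC
  have hnn : ∀ l ∈ Finset.Ico 1 k, 0 ≤ Cl l := fun l hl => by
    have := hCl l (Finset.mem_Ico.1 hl).1 (Finset.mem_Ico.1 hl).2
    linarith
  have hC1 : C0 ≤ C := le_add_of_nonneg_right (Finset.sum_nonneg hnn)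
  have hC2 : ∀ l, 1 ≤ l → l < k → Cl l ≤ C := fun l h1 h2 =>
    (Finset.single_le_sum hnn (Finset.mem_Ico.2 ⟨h1, h2⟩)).trans (le_add_of_nonneg_left (by linarith))
  have hCge : 1 ≤ C := hC0.trans hC1
  have hCpos : 0 < C := by linarith
  have hD : ∀ m, Dec p k m (C * (p : ℝ) ^ (η * m)) := fun m => (hD0 m).mono (by gcongr)
  have hDl' : ∀ l, 1 ≤ l → l < k → ∀ m, Dec p l m (C * (p : ℝ) ^ (ε * m)) := fun l h1 h2 m =>
    (hDl l h1 h2 m).mono (mul_le_mul_of_nonneg_right (hC2 l h1 h2) (by positivity))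
  obtain ⟨l, hl1, hlk, hgain⟩ := exists_gain hk n
  set L := k.factorial ^ (n + 1) with hL
  set Kn := k ^ (n + 1) with hKn
  have hLpos : 0 < L := pow_pos (Nat.factorial_pos k) _
  have hKpos : 0 < Kn := pow_pos (by omega) _
  set E0 : ℝ := C ^ (n + 1) * (p : ℝ) ^ (L : ℝ) with hE0
  have hE0pos : 0 < E0 := by positivity
  set δ : ℝ := 1 / (k : ℝ) ^ (n + 1) with hδ
  have hbil : ∀ m, L * Kn ≤ m → Bil p k m l 1 1 (E0 * (p : ℝ) ^ ((η - δ) * m)) := by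
    intro m hm
    set q := m / (L * Kn) with hq
    have hq1 : 1 ≤ q := (Nat.one_le_div_iff (by positivity)).2 hm
    set b := L * q with hb
    have hb1 : 1 ≤ b := Nat.mul_pos hLpos hq1
    have hbm : b * Kn ≤ m := by
      have := Nat.div_mul_le_self m (L * Kn)
      calc b * Kn = q * (L * Kn) := by rw [hb]; ring
        _ ≤ m := this
    have hbm2 : (m : ℝ) * δ ≤ b + L := by
      have := Nat.lt_div_mul_add (a := m) (b := L * Kn) (by positivity)
      have h2 : m ≤ (b + L) * Kn := by
        calc m ≤ q * (L * Kn) + L * Kn := this.le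
          _ = _ := by rw [hb]; ring
      have h3 : (m : ℝ) ≤ (b + L) * (k : ℝ) ^ (n + 1) := by
        have : (m : ℝ) ≤ ((b + L) * Kn : ℕ) := by exact_mod_cast h2
        rw [hKn] at this
        push_cast at this
        exact this
      rw [hδ, mul_one_div, div_le_iff₀ (by positivity)]
      exact h3
    have hI := iter hCge hη0 hε hkp hD hDl' m n b l hb1 ⟨q, rfl⟩ hbm hl1 hlk
    have hdl : l ∣ b := (Nat.dvd_factorial hl1 hlk.le).trans
      ((dvd_pow_self _ (by omega)).trans ⟨q, rfl⟩)
    have hasc1 : 1 ≤ asc k l b := Nat.mul_pos (by omega) (Nat.div_pos (Nat.le_of_dvd hb1 hdl) hl1)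
    have hco := hI.coarse (by positivity) hl1 hlk hasc1 hb1
    refine hco.mono ?_
    rw [hE0, ← Real.rpow_natCast (p : ℝ), mul_left_comm, ← Real.rpow_add hp0, mul_assoc (C ^ (n + 1)),
      ← Real.rpow_add hp0]
    refine mul_le_mul_of_nonneg_left (Real.rpow_le_rpow_of_exponent_le hp1 ?_) (by positivity)
    have a1 : asc k l b + b ≤ 2 * k * b := by
      have := asc_le (b := b) hl1 hlk
      nlinarith
    have a2 : (((asc k l b + b) * (2 * tri k) : ℕ) : ℝ) ≤ (4 * k * tri k : ℕ) * b := by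
      have : (asc k l b + b) * (2 * tri k) ≤ (4 * k * tri k) * b := by
        calc _ ≤ (2 * k * b) * (2 * tri k) := Nat.mul_le_mul_right _ a1
          _ = _ := by ring
      exact_mod_cast this
    have hb0 : (0 : ℝ) ≤ b := by positivity
    have a3 : ((4 * k * tri k : ℕ) + 2 : ℝ) ≤ η * gain k n l := by
      refine hn.trans ?_
      exact mul_le_mul hη hgain (by positivity) hη0
    have a4 := mul_le_mul_of_nonneg_right a3 hb0
    have a5 := mul_le_mul_of_nonneg_right hεn hb0
    nlinarith
  set η' := max (η - δ) ε₀ with hη'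
  have hη'0 : 0 ≤ η' := hε₀.le.trans (le_max_right _ _)
  set m0 := L * Kn with hm0
  have hm0pos : 0 < m0 := by positivity
  set C'' : ℝ := C * (p : ℝ) ^ (η * m0) + 2 * (2 * (p : ℝ)) ^ (2 * tri k) * E0 with hC''
  have hone : ∀ t : ℝ, 0 ≤ t → 1 ≤ (p : ℝ) ^ t := fun t ht => Real.one_le_rpow hp1 ht
  have hle1 : C * (p : ℝ) ^ (η * m0) ≤ C'' := le_add_of_nonneg_right (by positivity)
  have hle2 : 2 * (2 * (p : ℝ)) ^ (2 * tri k) * E0 ≤ C'' := le_add_of_nonneg_left (by positivity)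
  have hC''1 : 1 ≤ C'' := by
    refine le_trans ?_ hle1
    exact one_le_mul_of_one_le_of_one_le hCge (hone _ (by positivity))
  refine ⟨C'', hC''1, ?_⟩
  intro m
  induction m with
  | zero =>
    refine (hD 0).mono ?_
    have := hone (η * m0) (by positivity)
    simp only [Nat.cast_zero, mul_zero, Real.rpow_zero, mul_one]
    nlinarith
  | succ m ih =>
    rcases lt_or_ge (m + 1) m0 with hlt | hge
    · refine (hD (m + 1)).mono ?_
      calc C * (p : ℝ) ^ (η * (m + 1 : ℕ)) ≤ C * (p : ℝ) ^ (η * m0) := by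
            refine mul_le_mul_of_nonneg_left (Real.rpow_le_rpow_of_exponent_le hp1 ?_) hCpos.le
            exact mul_le_mul_of_nonneg_left (by exact_mod_cast hlt.le) hη0
        _ ≤ C'' := hle1
        _ ≤ _ := le_mul_of_one_le_right (by linarith) (hone _ (by positivity))
    · have := Dec.step (m := m + 1) hkp hl1 hlk (by omega) (by positivity) (by positivity) ih
        (hbil _ hge)
      refine this.mono ?_
      have b1 : (p : ℝ) ^ (η' * (m + 1 : ℕ)) = (p : ℝ) ^ (η' * m) * (p : ℝ) ^ η' := by
        rw [← Real.rpow_add hp0]; congr 1; push_cast; ring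
      have b2 : 2 * 4 ^ tri k ≤ (p : ℝ) ^ η' :=
        hp.trans (Real.rpow_le_rpow_of_exponent_le hp1 (le_max_right _ _))
      have b3 : 4 ^ tri k * (C'' * (p : ℝ) ^ (η' * m)) ≤ C'' * (p : ℝ) ^ (η' * (m + 1 : ℕ)) / 2 := by
        rw [b1]
        have : 0 ≤ C'' * (p : ℝ) ^ (η' * m) := by positivity
        nlinarith [mul_le_mul_of_nonneg_left b2 this]
      have b4 : (p : ℝ) ^ ((η - δ) * (m + 1 : ℕ)) ≤ (p : ℝ) ^ (η' * (m + 1 : ℕ)) :=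
        Real.rpow_le_rpow_of_exponent_le hp1
          (mul_le_mul_of_nonneg_right (le_max_left _ _) (by positivity))
      have b5 : (2 * (p : ℝ)) ^ (2 * tri k) * (E0 * (p : ℝ) ^ ((η - δ) * (m + 1 : ℕ))) ≤
          C'' * (p : ℝ) ^ (η' * (m + 1 : ℕ)) / 2 := by
        calc _ ≤ (2 * (p : ℝ)) ^ (2 * tri k) * (E0 * (p : ℝ) ^ (η' * (m + 1 : ℕ))) := by gcongr
          _ = (2 * (2 * (p : ℝ)) ^ (2 * tri k) * E0) * (p : ℝ) ^ (η' * (m + 1 : ℕ)) / 2 := by ring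
          _ ≤ _ := by gcongr
      linarith

/-- Decoupling for the `p`-adic moment curve at the critical exponent, with arbitrarily small
power losses for all large primes. -/
theorem decoupling (k : ℕ) (hk : 1 ≤ k) : ∀ ε : ℝ, 0 < ε →
    ∀ᶠ p : ℕ in Filter.atTop, ∀ hp : Fact p.Prime, @DecB p hp k ε := by
  induction k using Nat.strong_induction_on with
  | _ k ih =>
  intro ε₀ hε₀
  rcases Nat.lt_or_ge 1 k with hk2 | hk1
  · have hk0 : (0 : ℝ) < k := by positivity
    obtain ⟨n, hn⟩ := exists_nat_ge ((((4 * k * tri k : ℕ) : ℝ) + 2) / (ε₀ / k))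
    have hn' : ((4 * k * tri k : ℕ) : ℝ) + 2 ≤ ε₀ * (n / k) := by
      rw [div_le_iff₀ (by positivity)] at hn
      calc _ ≤ _ := hn
        _ = _ := by ring
    have hL := loss_nonneg k n
    set ε : ℝ := 1 / (loss k n + 1) with hε
    have hεpos : 0 < ε := by positivity
    have hεn : ε * loss k n ≤ 1 := by
      rw [hε, one_div_mul_eq_div, div_le_one (by positivity)]; linarith
    have e1 : ∀ᶠ p : ℕ in Filter.atTop, ∀ l ∈ Finset.Ico 1 k, ∀ hp : Fact p.Prime, @DecB p hp l ε := by
      rw [Filter.eventually_all_finset]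
      intro l hl
      obtain ⟨h1, h2⟩ := Finset.mem_Ico.1 hl
      exact ih l h2 h1 ε hεpos
    have e2 : ∀ᶠ p : ℕ in Filter.atTop, 2 * 4 ^ tri k ≤ (p : ℝ) ^ ε₀ :=
      ((tendsto_rpow_atTop hε₀).comp tendsto_natCast_atTop_atTop).eventually_ge_atTop _
    filter_upwards [e1, e2, Filter.eventually_gt_atTop k] with p h1 h2 h3 hp
    have hstep : ∀ j : ℕ, DecB p k (max (((2 * tri k : ℕ) : ℝ) - j * (1 / (k : ℝ) ^ (n + 1))) ε₀) := by
      intro j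
      induction j with
      | zero =>
        refine ⟨1, le_rfl, fun m => (Dec.trivial hk).mono ?_⟩
        rw [one_mul]
        refine Real.rpow_le_rpow_of_exponent_le (by exact_mod_cast (p_pos : 0 < p)) ?_
        refine mul_le_mul_of_nonneg_right ?_ (by positivity)
        simp
      | succ j ihj =>
        have := DecB.improve hk2 hε₀ hεpos.le hn' hεn h3 h2
          (fun l a b => h1 l (Finset.mem_Ico.2 ⟨a, b⟩) hp) (le_max_right _ _) ihj
        have hc : 0 < 1 / (k : ℝ) ^ (n + 1) := by positivity
        convert this using 1
        push_cast
        rw [max_def, max_def, max_def]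
        split_ifs <;> linarith
    obtain ⟨j, hj⟩ := exists_nat_ge (((2 * tri k : ℕ) : ℝ) / (1 / (k : ℝ) ^ (n + 1)))
    have := hstep j
    rw [div_le_iff₀ (by positivity)] at hj
    rwa [max_eq_right (by linarith)] at this
  · have : k = 1 := by omega
    subst this
    filter_upwards with p hp
    refine ⟨1, le_rfl, fun m => Dec.one.mono ?_⟩
    rw [one_mul]
    exact Real.one_le_rpow (by exact_mod_cast (p_pos : 0 < p)) (by positivity)

/-! ### Vinogradov's mean value -/

/-- The vector of power sums of degrees `0, …, D - 1` of a tuple. -/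
def psum (D : ℕ) {s : ℕ} (n : Fin s → ℕ) : Fin D → ℕ := fun j => ∑ i, n i ^ (j : ℕ)

/-- The pairs of `s`-tuples of integers in `[1, N]` whose power sums of degrees `0, …, d` agree. -/
def sols (d s N : ℕ) : Finset ((Fin s → ℕ) × (Fin s → ℕ)) :=
  (Fintype.piFinset (fun _ : Fin s => Icc 1 N) ×ˢ Fintype.piFinset (fun _ : Fin s => Icc 1 N)).filter
    fun q => psum (d + 1) q.1 = psum (d + 1) q.2

lemma prod_addChar {A : Type} [AddCommMonoid A] (ψ : AddChar A ℂ) {ι : Type} (t : Finset ι)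
    (f : ι → A) : ∏ i ∈ t, ψ (f i) = ψ (∑ i ∈ t, f i) := by
  classical
  induction t using Finset.induction_on with
  | empty => simp
  | insert a t ha ih => rw [prod_insert ha, sum_insert ha, ih, AddChar.map_add_eq_mul]

/-- A power of a sum expanded over tuples. -/
lemma sum_pow_eq {ι : Type} [DecidableEq ι] (t : Finset ι) (s : ℕ) (g : ι → ℂ) :
    (∑ i ∈ t, g i) ^ s = ∑ n ∈ Fintype.piFinset (fun _ : Fin s => t), ∏ i, g (n i) := by
  rw [← Finset.prod_univ_sum]
  simp

/-- The number of solutions is at most the number of solutions modulo `q`, which is the normalised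
mean value of the complete exponential sum. -/
lemma sols_le (d s N q P : ℕ) [NeZero q] (hNP : N < P) :
    (Fintype.card (Fin d → ZMod q) : ℝ) * (sols d s N).card ≤
      ∑ α : Fin d → ZMod q, ‖∑ n ∈ range P, (ZMod.stdAddChar (∑ j, α j * (n : ZMod q) ^ ((j : ℕ) + 1)) : ℂ)‖
        ^ (2 * s) := by
  classical
  set T := Fintype.piFinset (fun _ : Fin s => range P) with hT
  let Z : (Fin s → ℕ) → Fin d → ZMod q := fun n j => ∑ i, (n i : ZMod q) ^ ((j : ℕ) + 1)
  let χ : (Fin d → ZMod q) → AddChar (Fin d → ZMod q) ℂ := fun z =>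
    { toFun := fun α => ZMod.stdAddChar (∑ j, α j * z j)
      map_zero_eq_one' := by simp
      map_add_eq_mul' := by
        intro a b
        simp [add_mul, Finset.sum_add_distrib, AddChar.map_add_eq_mul] }
  have hχ : ∀ z α, χ z α = ZMod.stdAddChar (∑ j, α j * z j) := fun _ _ => rfl
  have key : ∀ α : Fin d → ZMod q,
      ((‖∑ n ∈ range P, (ZMod.stdAddChar (∑ j, α j * (n : ZMod q) ^ ((j : ℕ) + 1)) : ℂ)‖
        ^ (2 * s) : ℝ) : ℂ) = ∑ x ∈ T ×ˢ T, χ (Z x.1 - Z x.2) α := by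
    intro α
    rw [mul_comm 2 s, pow_mul, ← norm_pow, sum_pow_eq]
    have : ∀ n : Fin s → ℕ, ∏ i, (ZMod.stdAddChar (∑ j, α j * (n i : ZMod q) ^ ((j : ℕ) + 1)) : ℂ)
        = ZMod.stdAddChar (∑ j, α j * Z n j) := by
      intro n
      rw [prod_addChar]
      congr 1
      rw [Finset.sum_comm]
      simp [Z, Finset.mul_sum]
    simp_rw [this]
    push_cast
    rw [← Complex.mul_conj', map_sum, Finset.sum_mul_sum, ← Finset.sum_product']
    refine Finset.sum_congr rfl fun x _ => ?_
    rw [hχ, ← AddChar.map_neg_eq_conj, ← AddChar.map_add_eq_mul]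
    congr 1
    rw [← sub_eq_add_neg, ← Finset.sum_sub_distrib]
    simp only [Pi.sub_apply, mul_sub]
  have hsum : ((∑ α : Fin d → ZMod q, ‖∑ n ∈ range P, (ZMod.stdAddChar (∑ j, α j * (n : ZMod q) ^ ((j : ℕ) + 1)) : ℂ)‖
        ^ (2 * s) : ℝ) : ℂ) = ((∑ x ∈ T ×ˢ T, if χ (Z x.1 - Z x.2) = 0 then
          (Fintype.card (Fin d → ZMod q) : ℝ) else 0 : ℝ) : ℂ) := by
    push_cast
    simp_rw [← Complex.ofReal_pow, key]
    rw [Finset.sum_comm]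
    refine Finset.sum_congr rfl fun x _ => ?_
    rw [AddChar.sum_eq_ite]
    split_ifs <;> simp
  rw [Complex.ofReal_inj] at hsum
  rw [hsum]
  have hsub : sols d s N ⊆ T ×ˢ T := by
    intro x hx
    simp only [sols, mem_filter, mem_product, Fintype.mem_piFinset, mem_Icc] at hx
    simp only [hT, mem_product, Fintype.mem_piFinset, mem_range]
    exact ⟨fun i => (hx.1.1 i).2.trans_lt hNP, fun i => (hx.1.2 i).2.trans_lt hNP⟩
  calc _ = ∑ x ∈ sols d s N, (Fintype.card (Fin d → ZMod q) : ℝ) := by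
        rw [Finset.sum_const, nsmul_eq_mul, mul_comm]
    _ = ∑ x ∈ sols d s N, if χ (Z x.1 - Z x.2) = 0 then
          (Fintype.card (Fin d → ZMod q) : ℝ) else 0 := by
        refine Finset.sum_congr rfl fun x hx => ?_
        rw [if_pos]
        have hz : Z x.1 - Z x.2 = 0 := by
          funext j
          have := congrFun (mem_filter.1 hx).2 (j.succ)
          simp only [psum, Fin.val_succ] at this
          simp only [Z, Pi.sub_apply, Pi.zero_apply, sub_eq_zero]
          exact_mod_cast congrArg (Nat.cast : ℕ → ZMod q) this
        ext α
        rw [hz, hχ]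
        simp
    _ ≤ _ := Finset.sum_le_sum_of_subset_of_nonneg hsub fun x _ _ => by
        split_ifs <;> positivity

/-- The decoupling inequality, applied to the characters of `(ℤ/p^{md})^d` along the moment curve,
bounds the mean value of the complete exponential sum over `[0, p^m)`. -/
lemma Dec.mean {p : ℕ} [Fact p.Prime] {d m : ℕ} (hd : 1 ≤ d) {D : ℝ} (h : Dec p d m D) :
    ∑ α : Fin d → ZMod (p ^ (m * d)), ‖∑ n ∈ range (p ^ m),
      (ZMod.stdAddChar (∑ j, α j * (n : ZMod (p ^ (m * d))) ^ ((j : ℕ) + 1)) : ℂ)‖ ^ (2 * tri d) ≤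
    D * ((p : ℝ) ^ (m * tri d) * Fintype.card (Fin d → ZMod (p ^ (m * d)))) := by
  have ht : tri d ≠ 0 := by have := tri_pos hd; omega
  set Q : ℝ := (Fintype.card (Fin d → ZMod (p ^ (m * d))) : ℝ) with hQ
  have hQ0 : 0 ≤ Q := by positivity
  let c : Cfg p d m :=
    { Ω := Fin d → ZMod (p ^ (m * d))
      ι := ℕ
      fin := inferInstance
      w := fun _ => 1
      w_nonneg := fun _ => zero_le_one
      s := range (p ^ m)
      loc := id
      F := fun n α => ZMod.stdAddChar (∑ j, α j * (n : ZMod (p ^ (m * d))) ^ ((j : ℕ) + 1))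
      Bd := fun _ => Q ^ ((tri d : ℝ)⁻¹)
      Bd_nonneg := fun _ => by positivity
      sys := by
        refine ⟨fun j => Polynomial.X ^ ((j : ℕ) + 1), fun j => ⟨0, by simp⟩, fun v =>
          ⟨Equiv.addRight (fun j => PadicInt.toZModPow (m * d) (v j)), fun _ => rfl, 1, by simp, ?_⟩⟩
        intro i _ x
        simp only [Equiv.coe_addRight, Pi.add_apply, add_mul, Finset.sum_add_distrib,
          AddChar.map_add_eq_mul, chi, map_sum, map_mul, Polynomial.eval_pow, Polynomial.eval_X,
          map_pow, map_natCast, id, one_mul]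
        rw [mul_comm]
      bd := by
        intro r hr
        have hc : cls p (range (p ^ m)) id m r = {r} := by
          ext n
          simp only [cls, mem_filter, mem_range, mem_singleton, id]
          constructor
          · rintro ⟨h1, h2⟩
            rwa [Nat.mod_eq_of_lt h1] at h2
          · rintro rfl
            exact ⟨hr, Nat.mod_eq_of_lt hr⟩
        rw [hc, Real.rpow_inv_natCast_pow hQ0 ht]
        simp [fs, hQ] }
  have := h c
  have e1 : ∑ r ∈ range (p ^ m), c.Bd r = (p : ℝ) ^ m * Q ^ ((tri d : ℝ)⁻¹) := by
    simp [c]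
  rw [e1, mul_pow, Real.rpow_inv_natCast_pow hQ0 ht, ← pow_mul] at this
  simpa only [c, one_mul, fs] using this

/-- Vinogradov's mean value theorem at the critical exponent. -/
theorem vinogradov (d : ℕ) (hd : 1 ≤ d) (ε : ℝ) (hε : 0 < ε) :
    ∃ C : ℝ, 0 < C ∧ ∀ N : ℕ, 1 ≤ N → ((sols d (tri d) N).card : ℝ) ≤ C * (N : ℝ) ^ ((tri d : ℝ) + ε) := by
  obtain ⟨p0, hp0⟩ := Filter.eventually_atTop.1 (decoupling d hd ε hε)
  obtain ⟨p, hpp, hprime⟩ := Nat.exists_infinite_primes p0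
  have hF : Fact p.Prime := ⟨hprime⟩
  obtain ⟨C, hC, hD⟩ := hp0 p hpp hF
  have hp1 : 1 < p := hprime.one_lt
  refine ⟨C * (p : ℝ) ^ ((tri d : ℝ) + ε), by positivity, fun N hN => ?_⟩
  set m := Nat.log p N + 1 with hm
  have h1 : N < p ^ m := Nat.lt_pow_succ_log_self hp1 N
  have h2 : p ^ m ≤ p * N := by
    rw [hm, pow_succ, mul_comm]
    exact Nat.mul_le_mul_left _ (Nat.pow_log_le_self p (by omega))
  have h3 := (sols_le d (tri d) N (p ^ (m * d)) (p ^ m) h1).trans ((hD m).mean hd)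
  set Q : ℝ := (Fintype.card (Fin d → ZMod (p ^ (m * d))) : ℝ) with hQ
  have hQ0 : 0 < Q := by
    rw [hQ]
    exact_mod_cast Fintype.card_pos
  have h4 : ((sols d (tri d) N).card : ℝ) ≤ C * (p : ℝ) ^ (ε * m) * (p : ℝ) ^ (m * tri d) := by
    refine le_of_mul_le_mul_left (h3.trans_eq ?_) hQ0
    ring
  refine h4.trans ?_
  have hp0 : (0 : ℝ) < p := by exact_mod_cast hprime.pos
  have h5 : (p : ℝ) ^ (ε * m) * (p : ℝ) ^ (m * tri d) = ((p : ℝ) ^ m) ^ ((tri d : ℝ) + ε) := by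
    rw [← Real.rpow_natCast, ← Real.rpow_natCast, ← Real.rpow_add hp0, ← Real.rpow_mul hp0.le]
    congr 1
    push_cast
    ring
  rw [mul_assoc, h5, mul_assoc, ← Real.mul_rpow (by positivity) (by positivity)]
  refine mul_le_mul_of_nonneg_left (Real.rpow_le_rpow (by positivity) ?_ (by positivity)) (by positivity)
  exact_mod_cast h2

/-! ### Exponential sums with a fixed leading coefficient -/

lemma e_add (x y : ℝ) : e (x + y) = e x * e y := by
  simp only [e]
  rw [← Complex.exp_add]
  push_cast
  ring_nf

lemma norm_e (x : ℝ) : ‖e x‖ = 1 := by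
  rw [e, show (2 * Real.pi * Complex.I * x : ℂ) = ((2 * Real.pi * x : ℝ) : ℂ) * Complex.I by
    push_cast; ring]
  exact Complex.norm_exp_ofReal_mul_I _

lemma conj_e (x : ℝ) : (starRingEnd ℂ) (e x) = e (-x) := by
  simp only [e, ← Complex.exp_conj]
  simp [show (starRingEnd ℂ) 2 = 2 from Complex.conj_ofNat 2]

lemma e_int (k : ℤ) : e k = 1 := by
  rw [e, Complex.exp_eq_one_iff]
  exact ⟨k, by push_cast; ring⟩

lemma e_zero : e 0 = 1 := by simpa using e_int 0

@[fun_prop]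
lemma continuous_e : Continuous e := by
  unfold e
  fun_prop

lemma prod_e {ι : Type} (t : Finset ι) (f : ι → ℝ) : ∏ i ∈ t, e (f i) = e (∑ i ∈ t, f i) := by
  classical
  induction t using Finset.induction_on with
  | empty => simp [e_zero]
  | insert a t ha ih => rw [prod_insert ha, sum_insert ha, ih, e_add]

lemma integral_e (k : ℤ) : ∫ x in (0 : ℝ)..1, e (k * x) = if k = 0 then 1 else 0 := by
  split_ifs with h
  · simp [h, e_zero]
  · have hc : (2 * Real.pi * Complex.I * k : ℂ) ≠ 0 := by
      simp [h, Real.pi_ne_zero]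
    have : ∀ x : ℝ, e (k * x) = Complex.exp ((2 * Real.pi * Complex.I * k : ℂ) * x) := by
      intro x
      rw [e]
      push_cast
      ring_nf
    simp_rw [this]
    rw [integral_exp_mul_complex hc, ← this, ← this, mul_one, mul_zero, e_int, e_zero]
    simp

/-- The tuples of length `s` in `[1, N]`. -/
def tup (s N : ℕ) : Finset (Fin s → ℕ) := Fintype.piFinset fun _ => Icc 1 N

/-- The part of the `s`-th power of a Weyl sum that belongs to the vector `v` of lower power sums;
it depends on the leading coefficient only. -/
noncomputable def gv (d s N : ℕ) (v : Fin d → ℕ) (x : ℝ) : ℂ :=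
  ∑ n ∈ (tup s N).filter (psum d · = v), e (x * ((∑ i, n i ^ d : ℕ) : ℝ))

/-- The square function over all vectors of lower power sums: a majorant, free of the lower
coefficients, for powers of Weyl sums. -/
noncomputable def G (d s N : ℕ) (x : ℝ) : ℝ := ∑ v ∈ (tup s N).image (psum d), ‖gv d s N v x‖ ^ 2

lemma G_nonneg (d s N : ℕ) (x : ℝ) : 0 ≤ G d s N x := by unfold G; positivity

lemma continuous_G (d s N : ℕ) : Continuous (G d s N) := by
  unfold G gv
  fun_prop

lemma sum_fin_id (d : ℕ) (hd : 1 ≤ d) : ∑ j : Fin d, (j : ℕ) = tri d - d := by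
  rw [Fin.sum_univ_eq_sum_range (fun j => j)]
  have h1 := Finset.sum_range_id_mul_two d
  have h2 := two_tri d
  obtain ⟨k, rfl⟩ : ∃ k, d = k + 1 := ⟨d - 1, by omega⟩
  simp only [Nat.add_sub_cancel] at h1
  have : 2 * (∑ i ∈ range (k + 1), i + (k + 1)) = 2 * tri (k + 1) := by
    rw [h2]; linarith
  omega

/-- The number of possible vectors of lower power sums. -/
lemma card_image_psum (d s N : ℕ) (hd : 1 ≤ d) (hN : 1 ≤ N) :
    ((tup s N).image (psum d)).card ≤ (s + 1) ^ d * N ^ (tri d - d) := by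
  have hsub : (tup s N).image (psum d) ⊆
      Fintype.piFinset fun j : Fin d => range (s * N ^ (j : ℕ) + 1) := by
    intro v hv
    obtain ⟨n, hn, rfl⟩ := mem_image.1 hv
    simp only [tup, Fintype.mem_piFinset, mem_Icc] at hn
    simp only [Fintype.mem_piFinset, mem_range, psum, Nat.lt_succ_iff]
    intro j
    calc _ ≤ ∑ _i : Fin s, N ^ (j : ℕ) := Finset.sum_le_sum fun i _ => Nat.pow_le_pow_left (hn i).2 _
      _ = _ := by simp
  refine (card_le_card hsub).trans ?_
  rw [Fintype.card_piFinset]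
  calc _ ≤ ∏ j : Fin d, ((s + 1) * N ^ (j : ℕ)) := by
        refine Finset.prod_le_prod' fun j _ => ?_
        rw [card_range]
        have : 1 ≤ N ^ (j : ℕ) := Nat.one_le_pow _ _ hN
        nlinarith
    _ = _ := by
        rw [Finset.prod_mul_distrib, Finset.prod_pow_eq_pow_sum, sum_fin_id d hd]
        simp

/-- Grouping the tuples by their lower power sums and applying Cauchy–Schwarz removes the lower
coefficients. -/
lemma weyl_le_G (d s N : ℕ) (hd : 1 ≤ d) (hN : 1 ≤ N) (c : Fin d → ℝ) (x : ℝ) :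
    ‖∑ n ∈ Icc 1 N, e (∑ j, c j * (n : ℝ) ^ (j : ℕ) + x * (n : ℝ) ^ d)‖ ^ (2 * s) ≤
      ((s + 1 : ℝ) ^ d * (N : ℝ) ^ (tri d - d)) * G d s N x := by
  set V := (tup s N).image (psum d) with hV
  have h1 : (∑ n ∈ Icc 1 N, e (∑ j, c j * (n : ℝ) ^ (j : ℕ) + x * (n : ℝ) ^ d)) ^ s =
      ∑ v ∈ V, e (∑ j, c j * (v j : ℝ)) * gv d s N v x := by
    rw [sum_pow_eq, ← tup, ← Finset.sum_fiberwise_of_maps_to (s := tup s N) (t := V) (g := psum d)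
      (fun n hn => mem_image_of_mem _ hn)]
    refine Finset.sum_congr rfl fun v _ => ?_
    rw [gv, Finset.mul_sum]
    refine Finset.sum_congr rfl fun n hn => ?_
    obtain ⟨_, rfl⟩ := mem_filter.1 hn
    rw [prod_e, ← e_add, Finset.sum_add_distrib, Finset.sum_comm]
    congr 2
    · refine Finset.sum_congr rfl fun j _ => ?_
      simp [psum, Finset.mul_sum]
    · push_cast
      rw [Finset.mul_sum]
  rw [mul_comm 2 s, pow_mul, ← norm_pow, h1]
  calc _ ≤ (∑ v ∈ V, ‖gv d s N v x‖) ^ 2 := by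
        gcongr
        refine (norm_sum_le _ _).trans_eq (Finset.sum_congr rfl fun v _ => ?_)
        rw [norm_mul, norm_e, one_mul]
    _ ≤ V.card * ∑ v ∈ V, ‖gv d s N v x‖ ^ 2 := sq_sum_le_card_mul_sum_sq
    _ ≤ _ := by
        refine mul_le_mul_of_nonneg_right ?_ (G_nonneg d s N x)
        exact_mod_cast card_image_psum d s N hd hN

lemma integral_gv (d s N h : ℕ) (hh : 1 ≤ h) (v : Fin d → ℕ) :
    ∫ x in (0 : ℝ)..1, ‖gv d s N v (h * x)‖ ^ 2 =
      ((sols d s N).filter fun q => psum d q.1 = v).card := by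
  set T := (tup s N).filter (psum d · = v) with hT
  set P : (Fin s → ℕ) → ℕ := fun n => ∑ i, n i ^ d with hP
  have h1 : ∀ x : ℝ, ((‖gv d s N v (h * x)‖ ^ 2 : ℝ) : ℂ) =
      ∑ q ∈ T ×ˢ T, e (((h * ((P q.1 : ℤ) - P q.2) : ℤ) : ℝ) * x) := by
    intro x
    push_cast
    rw [← Complex.mul_conj', gv, map_sum, Finset.sum_mul_sum, ← Finset.sum_product']
    refine Finset.sum_congr rfl fun q _ => ?_
    rw [conj_e, ← e_add]
    congr 1
    simp only [hP]
    push_cast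
    ring
  have h2 : ((∫ x in (0 : ℝ)..1, ‖gv d s N v (h * x)‖ ^ 2 : ℝ) : ℂ) =
      (((T ×ˢ T).filter fun q => P q.1 = P q.2).card : ℂ) := by
    rw [← intervalIntegral.integral_ofReal]
    simp_rw [h1]
    rw [intervalIntegral.integral_finsetSum]
    · simp_rw [integral_e]
      rw [Finset.card_filter]
      push_cast
      refine Finset.sum_congr rfl fun q _ => ?_
      have : ((h : ℤ) * ((P q.1 : ℤ) - P q.2) = 0) ↔ P q.1 = P q.2 := by
        rw [mul_eq_zero, sub_eq_zero]
        constructor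
        · rintro (h' | h')
          · omega
          · exact_mod_cast h'
        · intro h'
          exact Or.inr (by exact_mod_cast h')
      simp only [this]
    · intro q _
      refine Continuous.intervalIntegrable ?_ _ _
      fun_prop
  have h3 : (T ×ˢ T).filter (fun q => P q.1 = P q.2) =
      (sols d s N).filter fun q => psum d q.1 = v := by
    have hsucc : ∀ n n' : Fin s → ℕ, psum (d + 1) n = psum (d + 1) n' ↔
        psum d n = psum d n' ∧ P n = P n' := by
      intro n n'
      constructor
      · intro h
        refine ⟨funext fun j => ?_, ?_⟩
        · simpa [psum] using congrFun h j.castSucc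
        · simpa [psum] using congrFun h (Fin.last d)
      · rintro ⟨h1, h2⟩
        funext j
        refine Fin.lastCases ?_ (fun j => ?_) j
        · simpa [psum] using h2
        · simpa [psum] using congrFun h1 j
    ext q
    simp only [sols, hT, tup, mem_filter, mem_product, hsucc]
    constructor
    · rintro ⟨⟨⟨a, b⟩, a', b'⟩, h⟩
      exact ⟨⟨⟨a, a'⟩, b.trans b'.symm, h⟩, b⟩
    · rintro ⟨⟨⟨a, a'⟩, b, h⟩, b'⟩
      exact ⟨⟨⟨a, b'⟩, a', b.symm.trans b'⟩, h⟩
  rw [h3] at h2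
  exact_mod_cast h2

/-- Orthogonality: the mean of the square function counts the solutions of Vinogradov's system. -/
lemma integral_G (d s N h : ℕ) (hh : 1 ≤ h) :
    ∫ x in (0 : ℝ)..1, G d s N (h * x) = (sols d s N).card := by
  unfold G
  rw [intervalIntegral.integral_finsetSum]
  · simp_rw [integral_gv d s N h hh]
    rw [Finset.card_eq_sum_card_fiberwise (s := sols d s N) (t := (tup s N).image (psum d))
      (f := fun q => psum d q.1)]
    · push_cast
      rfl
    · intro q hq
      have : q.1 ∈ tup s N := (mem_product.1 (mem_filter.1 hq).1).1
      exact mem_coe.2 (mem_image_of_mem _ this)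
  · intro v _
    refine Continuous.intervalIntegrable ?_ _ _
    unfold gv
    fun_prop

/-- For almost every leading coefficient `x`, all Weyl sums of length `j ^ (d + 2)` whose leading
coefficient is one of `x, 2 x, …, j x` are small, uniformly in the lower coefficients. The average
over `x` is controlled by Vinogradov's mean value; it is summable over `j` after normalisation. -/
theorem ae_weyl (d : ℕ) (hd : 2 ≤ d) (ε : ℝ) (hε : 0 < ε) :
    ∀ᵐ x : ℝ, x ∈ Set.Icc (0 : ℝ) 1 → ∃ K : ℝ, 1 ≤ K ∧ ∀ j : ℕ, 1 ≤ j → ∀ h ∈ Icc 1 j,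
      ∀ c : Fin d → ℝ, ‖∑ n ∈ Icc 1 (j ^ (d + 2)),
        e (∑ i, c i * (n : ℝ) ^ (i : ℕ) + (h * x) * (n : ℝ) ^ d)‖ ≤ K * (j : ℝ) ^ ((d : ℝ) + 1 + ε) := by
  set η : ℝ := ε / (d + 3) with hη
  have hη0 : 0 < η := by positivity
  have hηε : (d + 3) * η = ε := by rw [hη]; field_simp
  obtain ⟨C, hC, hJ⟩ := vinogradov d (by omega) η hη0
  set t := tri d with ht
  have ht2 : (2 * t : ℝ) = d * (d + 1) := by exact_mod_cast two_tri d
  have ht1 : 1 ≤ t := tri_pos (by omega)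
  set W : ℕ → ℝ := fun j => (j : ℝ) ^ (2 + η) * ((j ^ (d + 2) : ℕ) : ℝ) ^ ((t : ℝ) + η) with hW
  have hWpos : ∀ j, 1 ≤ j → 0 < W j := by
    intro j hj
    have : (0 : ℝ) < j := by exact_mod_cast hj
    simp only [hW]
    positivity
  set Φ : ℕ → ℝ → ℝ := fun j x => (∑ h ∈ Icc 1 j, G d t (j ^ (d + 2)) (h * x)) / W j with hΦ
  have hΦc : ∀ j, Continuous (Φ j) := by
    intro j
    have := continuous_G d t (j ^ (d + 2))
    simp only [hΦ]
    fun_prop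
  have hΦ0 : ∀ j, 1 ≤ j → ∀ x, 0 ≤ Φ j x := by
    intro j hj x
    exact div_nonneg (Finset.sum_nonneg fun h _ => G_nonneg _ _ _ _) (hWpos j hj).le
  have hmean : ∀ j, 1 ≤ j → ∫ x in (0 : ℝ)..1, Φ j x ≤ C * (1 / (j : ℝ) ^ (1 + η)) := by
    intro j hj
    have hj0 : (0 : ℝ) < j := by exact_mod_cast hj
    have h1 : ∫ x in (0 : ℝ)..1, Φ j x = j * (sols d t (j ^ (d + 2))).card / W j := by
      simp only [hΦ]
      rw [intervalIntegral.integral_div, intervalIntegral.integral_finsetSum]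
      · rw [Finset.sum_congr rfl fun h hh => integral_G d t (j ^ (d + 2)) h (mem_Icc.1 hh).1]
        simp
      · intro h _
        refine Continuous.intervalIntegrable ?_ _ _
        have := continuous_G d t (j ^ (d + 2))
        fun_prop
    rw [h1, div_le_iff₀ (hWpos j hj)]
    have h2 := hJ (j ^ (d + 2)) (Nat.one_le_pow _ _ hj)
    calc _ ≤ (j : ℝ) * (C * ((j ^ (d + 2) : ℕ) : ℝ) ^ ((t : ℝ) + η)) := by gcongr
      _ = _ := by
        have hX : (0 : ℝ) < (j : ℝ) ^ (1 + η) := by positivity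
        simp only [hW]
        rw [show (2 : ℝ) + η = 1 + (1 + η) by ring, Real.rpow_add hj0 1 (1 + η), Real.rpow_one]
        generalize (j : ℝ) ^ (1 + η) = X at hX
        field_simp
  have hsum : Summable fun j : ℕ => C * (1 / ((j + 1 : ℕ) : ℝ) ^ (1 + η)) := by
    refine Summable.mul_left _ ?_
    exact (summable_nat_add_iff 1).2 (Real.summable_one_div_nat_rpow.2 (by linarith))
  have hlin : ∫⁻ x in Set.Icc (0 : ℝ) 1, ∑' j : ℕ, ENNReal.ofReal (Φ (j + 1) x) ≠ ⊤ := by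
    rw [lintegral_tsum]
    · refine ne_top_of_le_ne_top hsum.tsum_ofReal_ne_top (ENNReal.tsum_le_tsum fun j => ?_)
      rw [← ofReal_integral_eq_lintegral_ofReal]
      · refine ENNReal.ofReal_le_ofReal ?_
        rw [integral_Icc_eq_integral_Ioc, ← intervalIntegral.integral_of_le zero_le_one]
        exact hmean (j + 1) (by omega)
      · exact (hΦc _).integrableOn_Icc
      · exact Filter.Eventually.of_forall (hΦ0 (j + 1) (by omega))
    · intro j
      exact ((hΦc _).measurable.ennreal_ofReal).aemeasurable
  have hae := ae_lt_top' (by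
    refine AEMeasurable.tsum fun j => ?_
    exact ((hΦc _).measurable.ennreal_ofReal).aemeasurable) hlin
  rw [ae_restrict_iff' measurableSet_Icc] at hae
  filter_upwards [hae] with x hx hx01
  have hfin := hx hx01
  set B : ℝ := (∑' j : ℕ, ENNReal.ofReal (Φ (j + 1) x)).toReal with hB
  have hB0 : 0 ≤ B := ENNReal.toReal_nonneg
  have hΦB : ∀ j, 1 ≤ j → Φ j x ≤ B := by
    intro j hj
    obtain ⟨i, rfl⟩ : ∃ i, j = i + 1 := ⟨j - 1, by omega⟩
    refine (ENNReal.ofReal_le_iff_le_toReal hfin.ne).1 ?_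
    exact ENNReal.le_tsum (f := fun j : ℕ => ENNReal.ofReal (Φ (j + 1) x)) i
  refine ⟨(t + 1 : ℝ) ^ d * B + 1, by have : 0 ≤ (t + 1 : ℝ) ^ d * B := by positivity
                                      linarith, ?_⟩
  intro j hj h hh c
  set K : ℝ := (t + 1 : ℝ) ^ d * B + 1 with hK
  have hK1 : 1 ≤ K := by
    have : 0 ≤ (t + 1 : ℝ) ^ d * B := by positivity
    linarith
  have hj1 : (1 : ℝ) ≤ j := by exact_mod_cast hj
  have hj0 : (0 : ℝ) < j := by linarith
  have h1 := weyl_le_G d t (j ^ (d + 2)) (by omega) (Nat.one_le_pow _ _ hj) c (h * x)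
  have h2 : G d t (j ^ (d + 2)) (h * x) ≤ B * W j := by
    have h3 := hΦB j hj
    simp only [hΦ] at h3
    rw [div_le_iff₀ (hWpos j hj)] at h3
    refine le_trans ?_ h3
    exact Finset.single_le_sum (f := fun h : ℕ => G d t (j ^ (d + 2)) (h * x))
      (fun _ _ => G_nonneg _ _ _ _) hh
  have htd : d ≤ t := by
    have := two_tri d
    rw [← ht] at this
    nlinarith
  refine le_of_pow_le_pow_left₀ (n := 2 * t) (by omega) (by positivity) (h1.trans ?_)
  have hNe : (((j ^ (d + 2) : ℕ) : ℝ)) = (j : ℝ) ^ ((d : ℝ) + 2) := by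
    push_cast
    rw [← Real.rpow_natCast]
    push_cast
    rfl
  calc _ ≤ ((t + 1 : ℝ) ^ d * (((j ^ (d + 2) : ℕ) : ℝ)) ^ (t - d)) * (B * W j) := by gcongr
    _ = ((t + 1 : ℝ) ^ d * B) * (j : ℝ) ^ (((d : ℝ) + 2) * (t - d) + (2 + η) + ((d : ℝ) + 2) * (t + η)) := by
        rw [Real.rpow_add hj0, Real.rpow_add hj0, Real.rpow_mul hj0.le, Real.rpow_mul hj0.le, ← hNe,
          ← Nat.cast_sub htd, Real.rpow_natCast]
        simp only [hW]
        ring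
    _ ≤ K * (j : ℝ) ^ (((d : ℝ) + 1 + ε) * (2 * t : ℕ)) := by
        refine mul_le_mul (by linarith) (Real.rpow_le_rpow_of_exponent_le hj1 ?_) (by positivity)
          (by linarith)
        have hd2 : (2 : ℝ) ≤ d := by exact_mod_cast hd
        have ht1' : (1 : ℝ) ≤ t := by exact_mod_cast ht1
        have : ε ≤ ε * (2 * t) := by nlinarith
        push_cast
        nlinarith
    _ ≤ K ^ (2 * t) * (j : ℝ) ^ (((d : ℝ) + 1 + ε) * (2 * t : ℕ)) := by
        gcongr
        exact le_self_pow₀ hK1 (by omega)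
    _ = _ := by rw [mul_pow, Real.rpow_mul hj0.le, Real.rpow_natCast]

/-! ### An inequality of Erdős–Turán type -/

/-- The indicator function of the half-open arc `[0, β)` modulo `1`. -/
noncomputable def ind (β u : ℝ) : ℝ := if Int.fract u < β then 1 else 0

lemma ind_nonneg (β u : ℝ) : 0 ≤ ind β u := by unfold ind; split_ifs <;> norm_num

lemma ind_le_one (β u : ℝ) : ind β u ≤ 1 := by unfold ind; split_ifs <;> norm_num

lemma measurable_ind (β : ℝ) : Measurable (ind β) := by
  unfold ind
  exact Measurable.ite (measurableSet_lt measurable_fract measurable_const) measurable_const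
    measurable_const

lemma ind_integrable {E : Type*} [NormedAddCommGroup E] [NormedSpace ℝ E]
    (β z : ℝ) {φ : ℝ → E} (hφ : Continuous φ) :
    IntervalIntegrable (fun t => ind β (z + t) • φ t) volume 0 1 := by
  refine (hφ.intervalIntegrable 0 1).mono_fun ?_ ?_
  · exact (((measurable_ind β).comp (measurable_const.add measurable_id)).aestronglyMeasurable).smul
      (hφ.aestronglyMeasurable.restrict)
  · refine Filter.Eventually.of_forall fun t => ?_
    beta_reduce
    rw [norm_smul, Real.norm_of_nonneg (ind_nonneg _ _)]
    exact mul_le_of_le_one_left (norm_nonneg _) (ind_le_one _ _)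

/-- The Fourier coefficient of `ind β` at the frequency `-h`. -/
noncomputable def coef (β : ℝ) (h : ℤ) : ℂ := ∫ t in (0 : ℝ)..β, e (h * t)

lemma coef_zero (β : ℝ) : coef β 0 = β := by simp [coef, e_zero]

lemma norm_coef_le (β : ℝ) {h : ℤ} (hh : h ≠ 0) : ‖coef β h‖ ≤ 1 / (h.natAbs : ℝ) := by
  have hc : (2 * Real.pi * Complex.I * h : ℂ) ≠ 0 := by simp [hh, Real.pi_ne_zero]
  have : ∀ x : ℝ, e (h * x) = Complex.exp ((2 * Real.pi * Complex.I * h : ℂ) * x) := by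
    intro x
    rw [e]
    push_cast
    ring_nf
  unfold coef
  simp_rw [this]
  rw [integral_exp_mul_complex hc, ← this, ← this, norm_div]
  have hn : ‖(2 * Real.pi * Complex.I * h : ℂ)‖ = 2 * Real.pi * h.natAbs := by
    rw [norm_mul, norm_mul, norm_mul, Complex.norm_I, Complex.norm_intCast, Complex.norm_real,
      Real.norm_of_nonneg Real.pi_pos.le, Nat.cast_natAbs]
    simp
  have h0 : (0 : ℝ) < h.natAbs := by exact_mod_cast Int.natAbs_pos.2 hh
  rw [hn, div_le_div_iff₀ (by positivity) h0]
  have h2 : ‖e (h * β) - e (h * (0 : ℝ))‖ ≤ 2 := by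
    refine (norm_sub_le _ _).trans ?_
    rw [norm_e, norm_e]; norm_num
  have := Real.pi_gt_three
  nlinarith

lemma ind_integral {β : ℝ} (hβ0 : 0 ≤ β) (hβ1 : β ≤ 1) (z : ℝ) (h : ℤ) :
    ∫ t in (0 : ℝ)..1, ind β (z + t) • e (h * t) = e (-(h * z)) * coef β h := by
  set φ : ℝ → ℂ := fun t => ind β t • e (h * t) with hφ
  have hper : Function.Periodic φ 1 := by
    intro t
    simp only [hφ, ind, Int.fract_add_one]
    rw [mul_add, e_add, mul_one, e_int, mul_one]
  have h1 : ∀ t : ℝ, ind β (z + t) • e (h * t) = e (-(h * z)) * φ (z + t) := by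
    intro t
    simp only [hφ]
    rw [mul_smul_comm, ← e_add]
    congr 2
    ring
  simp_rw [h1]
  rw [intervalIntegral.integral_const_mul, intervalIntegral.integral_comp_add_left (fun t => φ t) z,
    add_zero, hper.intervalIntegral_add_eq z 0, zero_add]
  congr 1
  rw [intervalIntegral.integral_of_le zero_le_one, ← integral_Ico_eq_integral_Ioc, coef,
    intervalIntegral.integral_of_le hβ0, ← integral_Ico_eq_integral_Ioc]
  have h2 : ∀ t ∈ Set.Ico (0 : ℝ) 1, φ t = (Set.Ico 0 β).indicator (fun t : ℝ => e (h * t)) t := by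
    intro t ht
    simp only [hφ, ind, Int.fract_eq_self.2 ht, Set.indicator, Set.mem_Ico, ht.1, true_and]
    split_ifs <;> simp
  rw [setIntegral_congr_fun measurableSet_Ico h2, setIntegral_indicator measurableSet_Ico]
  congr 2
  rw [Set.Ico_inter_Ico, max_self, min_eq_right hβ1]

/-- A trigonometric polynomial of degree less than `n` with real coefficients. -/
noncomputable def tp (w : ℕ → ℝ) (n : ℕ) (t : ℝ) : ℂ := ∑ k ∈ range n, w k * e (k * t)

@[fun_prop]
lemma continuous_tp (w : ℕ → ℝ) (n : ℕ) : Continuous (tp w n) := by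
  unfold tp
  fun_prop

lemma tp_sq (w : ℕ → ℝ) (n : ℕ) (t : ℝ) : ((‖tp w n t‖ ^ 2 : ℝ) : ℂ) =
    ∑ q ∈ range n ×ˢ range n, ((w q.1 * w q.2 : ℝ) : ℂ) * e ((((q.1 : ℤ) - q.2 : ℤ) : ℝ) * t) := by
  push_cast
  rw [← Complex.mul_conj', tp, map_sum, Finset.sum_mul_sum, ← Finset.sum_product']
  refine Finset.sum_congr rfl fun q _ => ?_
  rw [map_mul, conj_e, Complex.conj_ofReal, mul_mul_mul_comm, ← e_add]
  congr 2
  ring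

lemma parseval (w : ℕ → ℝ) (n : ℕ) :
    ∫ t in (0 : ℝ)..1, ‖tp w n t‖ ^ 2 = ∑ k ∈ range n, w k ^ 2 := by
  have h : ((∫ t in (0 : ℝ)..1, ‖tp w n t‖ ^ 2 : ℝ) : ℂ) = ((∑ k ∈ range n, w k ^ 2 : ℝ) : ℂ) := by
    rw [← intervalIntegral.integral_ofReal]
    simp_rw [tp_sq]
    rw [intervalIntegral.integral_finsetSum]
    · simp_rw [intervalIntegral.integral_const_mul, integral_e, sub_eq_zero, Int.natCast_inj]
      rw [Finset.sum_product]
      push_cast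
      refine Finset.sum_congr rfl fun k hk => ?_
      rw [Finset.sum_eq_single k]
      · simp [sq]
      · intro l _ hl
        simp [hl.symm]
      · intro h; exact absurd hk h
    · intro q _
      refine Continuous.intervalIntegrable ?_ _ _
      fun_prop
  exact_mod_cast h

/-- Multiplying by `e t - 1` takes the difference of the coefficients. -/
lemma tp_mul (w : ℕ → ℝ) (n : ℕ) (h0 : w 0 = 0) (hn : w n = 0) (t : ℝ) :
    ‖tp w n t‖ ^ 2 * ‖e t - 1‖ ^ 2 = ‖tp (fun k => w k - w (k + 1)) n t‖ ^ 2 := by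
  have h1 : tp w n t = ∑ k ∈ range n, (w (k + 1) : ℂ) * e ((k + 1 : ℕ) * t) := by
    have a := Finset.sum_range_succ (fun k => (w k : ℂ) * e (k * t)) n
    rw [Finset.sum_range_succ'] at a
    simp only [h0, hn, Complex.ofReal_zero, zero_mul, add_zero] at a
    exact a.symm
  have h2 : tp w n t * e t = ∑ k ∈ range n, (w k : ℂ) * e ((k + 1 : ℕ) * t) := by
    rw [tp, Finset.sum_mul]
    refine Finset.sum_congr rfl fun k _ => ?_
    rw [mul_assoc, ← e_add]
    congr 2
    push_cast
    ring
  have h3 : tp w n t * (e t - 1) = tp (fun k => w k - w (k + 1)) n t * e t := by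
    rw [mul_sub, h2, mul_one, h1, ← Finset.sum_sub_distrib, tp, Finset.sum_mul]
    refine Finset.sum_congr rfl fun k _ => ?_
    rw [mul_assoc, ← e_add]
    push_cast
    rw [← sub_mul]
    congr 2
    ring
  rw [← mul_pow, ← norm_mul, h3, norm_mul, norm_e, mul_one]

/-- The coefficients of the kernel: a triangle on `[0, 2 m]`. -/
noncomputable def tw (m k : ℕ) : ℝ := min (k : ℝ) (2 * m - k)

lemma tw_diff (m k : ℕ) : (tw m k - tw m (k + 1)) ^ 2 ≤ 1 := by
  rw [sq_le_one_iff_abs_le_one, tw, tw]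
  refine (abs_min_sub_min_le_max _ _ _ _).trans (max_le ?_ ?_)
  · push_cast
    rw [show (k : ℝ) - (k + 1) = -1 by ring]; norm_num
  · push_cast
    rw [show (2 * m - k : ℝ) - (2 * m - (k + 1)) = 1 by ring]; norm_num

lemma tw_sum (m : ℕ) (hm : 1 ≤ m) : (m : ℝ) ^ 3 / 3 ≤ ∑ k ∈ range (2 * m), tw m k ^ 2 := by
  have h1 : ∀ m : ℕ, (m : ℝ) ^ 3 / 3 ≤ ∑ k ∈ range (m + 1), (k : ℝ) ^ 2 := by
    intro m
    induction m with
    | zero => simp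
    | succ n ih =>
      rw [Finset.sum_range_succ]
      push_cast
      have : (0 : ℝ) ≤ n := by positivity
      nlinarith
  refine (h1 m).trans ?_
  calc _ = ∑ k ∈ range (m + 1), tw m k ^ 2 := by
        refine Finset.sum_congr rfl fun k hk => ?_
        have : (k : ℝ) ≤ m := by exact_mod_cast Nat.lt_succ_iff.1 (mem_range.1 hk)
        rw [tw, min_eq_left (by linarith)]
    _ ≤ _ := Finset.sum_le_sum_of_subset_of_nonneg (range_subset_range.2 (by omega))
        fun _ _ _ => sq_nonneg _

lemma sum_abs_diff_le {g : ℕ → ℝ} (hg : ∀ h, 0 ≤ g h) (hg0 : g 0 = 0) {k n : ℕ} (hk : k < n) :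
    ∑ l ∈ range n, g ((k : ℤ) - l).natAbs ≤ 2 * ∑ h ∈ Icc 1 n, g h := by
  have hIcc : ∀ a, a ≤ n + 1 → ∑ h ∈ range a, g h ≤ ∑ h ∈ Icc 1 n, g h := by
    intro a ha
    calc ∑ h ∈ range a, g h ≤ ∑ h ∈ range (n + 1), g h :=
          Finset.sum_le_sum_of_subset_of_nonneg (range_subset_range.2 ha) fun _ _ _ => hg _
      _ = ∑ h ∈ Icc 1 n, g h := by
          rw [Finset.sum_range_succ', hg0, add_zero, Finset.range_eq_Ico,
            Finset.sum_Ico_add' (fun h => g h) 0 n 1]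
          rfl
  have h1 : ∀ l ∈ range n, g ((k : ℤ) - l).natAbs ≤ g (k - l) + g (l - k) := by
    intro l _
    rcases le_total k l with h | h
    · rw [show ((k : ℤ) - l).natAbs = l - k by omega]
      exact le_add_of_nonneg_left (hg _)
    · rw [show ((k : ℤ) - l).natAbs = k - l by omega]
      exact le_add_of_nonneg_right (hg _)
  have h2 : ∑ l ∈ range n, g (k - l) ≤ ∑ h ∈ Icc 1 n, g h := by
    obtain ⟨r, rfl⟩ := Nat.exists_eq_add_of_lt hk
    rw [show k + r + 1 = (k + 1) + r by ring, Finset.sum_range_add, Finset.sum_flip,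
      Finset.sum_eq_zero (s := range r), add_zero]
    · rw [show (k + 1) + r = k + r + 1 by ring]
      exact hIcc _ (by omega)
    · intro x _
      rw [show k - (k + 1 + x) = 0 by omega, hg0]
  have h3 : ∑ l ∈ range n, g (l - k) ≤ ∑ h ∈ Icc 1 n, g h := by
    obtain ⟨r, rfl⟩ := Nat.exists_eq_add_of_lt hk
    rw [show k + r + 1 = k + (r + 1) by ring, Finset.sum_range_add,
      Finset.sum_eq_zero (s := range k), zero_add]
    · simp only [Nat.add_sub_cancel_left]
      rw [show k + (r + 1) = k + r + 1 by ring]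
      exact hIcc _ (by omega)
    · intro x hx
      rw [show x - k = 0 by have := mem_range.1 hx; omega, hg0]
  calc _ ≤ ∑ l ∈ range n, (g (k - l) + g (l - k)) := Finset.sum_le_sum h1
    _ = _ := Finset.sum_add_distrib
    _ ≤ _ := by linarith

/-- The number of points in the arc `[a, a + β)` modulo `1`. -/
noncomputable def arc (ξ : ℕ → ℝ) (N : ℕ) (a β : ℝ) : ℝ := ∑ n ∈ Icc 1 N, ind β (ξ n - a)

lemma arc_nonneg (ξ : ℕ → ℝ) (N : ℕ) (a β : ℝ) : 0 ≤ arc ξ N a β :=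
  Finset.sum_nonneg fun _ _ => ind_nonneg _ _

lemma arc_le (ξ : ℕ → ℝ) (N : ℕ) (a β : ℝ) : arc ξ N a β ≤ N := by
  calc arc ξ N a β ≤ ∑ n ∈ Icc 1 N, (1 : ℝ) := Finset.sum_le_sum fun _ _ => ind_le_one _ _
    _ = N := by simp

lemma fract_of_eq {x y : ℝ} {k : ℤ} (h : x = k + y) (h0 : 0 ≤ y) (h1 : y < 1) : Int.fract x = y := by
  rw [h, Int.fract_intCast_add, Int.fract_eq_self.2 ⟨h0, h1⟩]

/-- The complement of an arc is an arc. -/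
lemma arc_compl (ξ : ℕ → ℝ) (N : ℕ) (a : ℝ) {β : ℝ} (hβ0 : 0 ≤ β) (hβ1 : β ≤ 1) :
    arc ξ N (a + β) (1 - β) = N - arc ξ N a β := by
  have : (N : ℝ) = ∑ n ∈ Icc 1 N, (1 : ℝ) := by simp
  rw [this, arc, arc, ← Finset.sum_sub_distrib]
  refine Finset.sum_congr rfl fun n _ => ?_
  set z := ξ n - a with hz
  have h0 := Int.fract_nonneg z
  have h1 := Int.fract_lt_one z
  have hzf := Int.floor_add_fract z
  unfold ind
  by_cases h : Int.fract z < β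
  · have : Int.fract (ξ n - (a + β)) = Int.fract z - β + 1 :=
      fract_of_eq (k := ⌊z⌋ - 1) (by push_cast; linarith) (by linarith) (by linarith)
    rw [this, if_pos h, if_neg (by linarith)]; norm_num
  · rw [not_lt] at h
    have : Int.fract (ξ n - (a + β)) = Int.fract z - β :=
      fract_of_eq (k := ⌊z⌋) (by linarith) (by linarith) (by linarith)
    rw [this, if_pos (by linarith), if_neg (by linarith)]; norm_num

/-- Enlarging an arc by `δ` on both sides and rotating by at most `δ` yields a larger arc. -/
lemma arc_mono (ξ : ℕ → ℝ) (N : ℕ) {a β δ t : ℝ} {r : ℤ} (hβ : β + 2 * δ ≤ 1)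
    (ht : |t - r| ≤ δ) : arc ξ N a β ≤ arc ξ N (a - δ - t) (β + 2 * δ) := by
  refine Finset.sum_le_sum fun n _ => ?_
  set z := ξ n - a with hz
  have h0 := Int.fract_nonneg z
  have hzf := Int.floor_add_fract z
  rw [abs_le] at ht
  unfold ind
  by_cases h : Int.fract z < β
  · have : Int.fract (ξ n - (a - δ - t)) = Int.fract z + δ + (t - r) :=
      fract_of_eq (k := ⌊z⌋ + r) (by push_cast; linarith) (by linarith) (by linarith)
    rw [this, if_pos h, if_pos (by linarith)]
  · rw [if_neg h]
    split_ifs <;> norm_num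

lemma norm_e_sub_one_ge {t δ : ℝ} (hδ : 0 ≤ δ) (h : δ ≤ |t - round t|) : 16 * δ ^ 2 ≤ ‖e t - 1‖ ^ 2 := by
  set s := t - round t with hs
  have hs2 : |s| ≤ 1 / 2 := abs_sub_round t
  have he : e t = e s := by
    rw [show t = s + ((round t : ℤ) : ℝ) by rw [hs]; ring, e_add, e_int, mul_one]
  have h1 : ‖e s - 1‖ = 2 * |Real.sin (Real.pi * s)| := by
    rw [e, show (2 * Real.pi * Complex.I * s : ℂ) = Complex.I * ((2 * Real.pi * s : ℝ) : ℂ) by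
      push_cast; ring, Complex.norm_exp_I_mul_ofReal_sub_one, norm_mul, Real.norm_eq_abs,
      Real.norm_eq_abs, show 2 * Real.pi * s / 2 = Real.pi * s by ring]
    norm_num
  have h2 : 2 / Real.pi * |Real.pi * s| ≤ |Real.sin (Real.pi * s)| := by
    refine Real.mul_abs_le_abs_sin ?_
    rw [abs_mul, abs_of_pos Real.pi_pos]
    have := Real.pi_pos
    nlinarith
  have h3 : 2 / Real.pi * |Real.pi * s| = 2 * |s| := by
    rw [abs_mul, abs_of_pos Real.pi_pos]
    field_simp
  rw [he, h1]
  have h4 : 4 * δ ≤ 2 * |Real.sin (Real.pi * s)| := by linarith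
  nlinarith [abs_nonneg (Real.sin (Real.pi * s))]

/-- The Weyl sum at frequency `h`, divided by `h`; the junk value at `h = 0` is `0`. -/
noncomputable def ws (ξ : ℕ → ℝ) (N h : ℕ) : ℝ := ‖∑ n ∈ Icc 1 N, e (h * ξ n)‖ / h

lemma ws_nonneg (ξ : ℕ → ℝ) (N h : ℕ) : 0 ≤ ws ξ N h := by unfold ws; positivity

lemma norm_sum_e_shift (ξ : ℕ → ℝ) (N : ℕ) (b : ℝ) (h : ℤ) :
    ‖∑ n ∈ Icc 1 N, e (-(h * (ξ n - b)))‖ = ‖∑ n ∈ Icc 1 N, e (h.natAbs * ξ n)‖ := by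
  have h1 : ∑ n ∈ Icc 1 N, e (-(h * (ξ n - b))) = e (h * b) * ∑ n ∈ Icc 1 N, e (-(h * ξ n)) := by
    rw [Finset.mul_sum]
    refine Finset.sum_congr rfl fun n _ => ?_
    rw [← e_add]
    congr 1
    ring
  rw [h1, norm_mul, norm_e, one_mul]
  rcases Int.natAbs_eq h with hh | hh
  · have : ∑ n ∈ Icc 1 N, e (-(h * ξ n)) =
        (starRingEnd ℂ) (∑ n ∈ Icc 1 N, e (h.natAbs * ξ n)) := by
      rw [map_sum]
      refine Finset.sum_congr rfl fun n _ => ?_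
      rw [conj_e]
      congr 2
      have : (h : ℝ) = (h.natAbs : ℝ) := by
        rw [← Int.cast_natCast (R := ℝ), ← hh]
      rw [this]
    rw [this, Complex.norm_conj]
  · congr 1
    refine Finset.sum_congr rfl fun n _ => ?_
    congr 1
    have : (h : ℝ) = -(h.natAbs : ℝ) := by exact_mod_cast hh
    rw [this]
    ring

/-- The average of the number of points in a rotating arc against a squared trigonometric
polynomial exceeds its expected value by at most a weighted sum of Weyl sums. -/
lemma arc_average (ξ : ℕ → ℝ) (N : ℕ) (b : ℝ) {β : ℝ} (hβ0 : 0 ≤ β) (hβ1 : β ≤ 1) (w : ℕ → ℝ) (n : ℕ) :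
    ∫ t in (0 : ℝ)..1, arc ξ N (b - t) β * ‖tp w n t‖ ^ 2 ≤
      (∑ k ∈ range n, w k ^ 2) * (β * N + 2 * ∑ h ∈ Icc 1 n, ws ξ N h) := by
  set T : ℤ → ℂ := fun h => ∑ i ∈ Icc 1 N, e (-(h * (ξ i - b))) with hT
  have h1 : ((∫ t in (0 : ℝ)..1, arc ξ N (b - t) β * ‖tp w n t‖ ^ 2 : ℝ) : ℂ) =
      ∑ q ∈ range n ×ˢ range n, ((w q.1 * w q.2 : ℝ) : ℂ) *
        (T ((q.1 : ℤ) - q.2) * coef β ((q.1 : ℤ) - q.2)) := by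
    rw [← intervalIntegral.integral_ofReal]
    have : ∀ t : ℝ, ((arc ξ N (b - t) β * ‖tp w n t‖ ^ 2 : ℝ) : ℂ) =
        ∑ q ∈ range n ×ˢ range n, ∑ i ∈ Icc 1 N, ((w q.1 * w q.2 : ℝ) : ℂ) *
          (ind β ((ξ i - b) + t) • e ((((q.1 : ℤ) - q.2 : ℤ) : ℝ) * t)) := by
      intro t
      rw [Complex.ofReal_mul, tp_sq, Finset.mul_sum]
      refine Finset.sum_congr rfl fun q _ => ?_
      rw [arc, Complex.ofReal_sum, Finset.sum_mul]
      refine Finset.sum_congr rfl fun i _ => ?_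
      rw [show ξ i - (b - t) = ξ i - b + t by ring, Complex.real_smul]
      ring
    simp_rw [this]
    rw [intervalIntegral.integral_finsetSum]
    · refine Finset.sum_congr rfl fun q _ => ?_
      rw [intervalIntegral.integral_finsetSum]
      · simp_rw [intervalIntegral.integral_const_mul, ind_integral hβ0 hβ1]
        rw [hT, Finset.sum_mul, Finset.mul_sum]
      · intro i _
        exact (ind_integrable (φ := fun t : ℝ => e ((((q.1 : ℤ) - q.2 : ℤ) : ℝ) * t)) β _
          (by fun_prop)).const_mul _
    · intro q _
      have : IntervalIntegrable (∑ i ∈ Icc 1 N, fun t : ℝ => ((w q.1 * w q.2 : ℝ) : ℂ) *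
          (ind β ((ξ i - b) + t) • e ((((q.1 : ℤ) - q.2 : ℤ) : ℝ) * t))) volume 0 1 :=
        IntervalIntegrable.sum _ fun i _ =>
          (ind_integrable (φ := fun t : ℝ => e ((((q.1 : ℤ) - q.2 : ℤ) : ℝ) * t)) β _
            (by fun_prop)).const_mul _
      refine this.congr fun t _ => ?_
      simp only [Finset.sum_apply]
  have h2 : ∀ h : ℤ, ‖T h * coef β h - (if h = 0 then (N * β : ℂ) else 0)‖ ≤ ws ξ N h.natAbs := by
    intro h
    split_ifs with hh
    · subst hh
      rw [coef_zero]
      simp [hT, e_zero, ws]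
    · rw [sub_zero, norm_mul, hT]
      beta_reduce
      rw [norm_sum_e_shift, ws, div_eq_mul_one_div]
      exact mul_le_mul_of_nonneg_left (norm_coef_le β hh) (norm_nonneg _)
  set W := ∑ k ∈ range n, w k ^ 2 with hW
  have h3 : ∑ q ∈ range n ×ˢ range n, ((w q.1 * w q.2 : ℝ) : ℂ) *
      (if ((q.1 : ℤ) - q.2) = 0 then (N * β : ℂ) else 0) = ((W * (β * N) : ℝ) : ℂ) := by
    rw [Finset.sum_product, hW]
    push_cast
    rw [Finset.sum_mul]
    refine Finset.sum_congr rfl fun k hk => ?_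
    rw [Finset.sum_eq_single k]
    · simp
      ring
    · intro l _ hl
      rw [if_neg (by omega), mul_zero]
    · intro h; exact absurd hk h
  have h4 : |(∫ t in (0 : ℝ)..1, arc ξ N (b - t) β * ‖tp w n t‖ ^ 2) - W * (β * N)| ≤
      ∑ q ∈ range n ×ˢ range n, |w q.1 * w q.2| * ws ξ N ((q.1 : ℤ) - q.2).natAbs := by
    rw [← Real.norm_eq_abs, ← Complex.norm_real, Complex.ofReal_sub, h1, ← h3,
      ← Finset.sum_sub_distrib]
    refine (norm_sum_le _ _).trans (Finset.sum_le_sum fun q _ => ?_)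
    rw [← mul_sub, norm_mul, Complex.norm_real, Real.norm_eq_abs]
    exact mul_le_mul_of_nonneg_left (h2 _) (abs_nonneg _)
  have hws0 : ws ξ N 0 = 0 := by simp [ws]
  have h5 : ∑ q ∈ range n ×ˢ range n, w q.1 ^ 2 * ws ξ N ((q.1 : ℤ) - q.2).natAbs ≤
      W * (2 * ∑ h ∈ Icc 1 n, ws ξ N h) := by
    rw [Finset.sum_product, hW, Finset.sum_mul]
    refine Finset.sum_le_sum fun k hk => ?_
    dsimp only
    rw [← Finset.mul_sum]
    exact mul_le_mul_of_nonneg_left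
      (sum_abs_diff_le (fun h => ws_nonneg ξ N h) hws0 (mem_range.1 hk)) (sq_nonneg _)
  have h6 : ∑ q ∈ range n ×ˢ range n, w q.2 ^ 2 * ws ξ N ((q.1 : ℤ) - q.2).natAbs ≤
      W * (2 * ∑ h ∈ Icc 1 n, ws ξ N h) := by
    refine le_trans (le_of_eq ?_) h5
    rw [Finset.sum_product, Finset.sum_product_right]
    refine Finset.sum_congr rfl fun k _ => Finset.sum_congr rfl fun l _ => ?_
    rw [show ((k : ℤ) - l).natAbs = ((l : ℤ) - k).natAbs by omega]
  have h7 : ∑ q ∈ range n ×ˢ range n, |w q.1 * w q.2| * ws ξ N ((q.1 : ℤ) - q.2).natAbs ≤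
      W * (2 * ∑ h ∈ Icc 1 n, ws ξ N h) := by
    have : ∑ q ∈ range n ×ˢ range n, |w q.1 * w q.2| * ws ξ N ((q.1 : ℤ) - q.2).natAbs ≤
        ∑ q ∈ range n ×ˢ range n, (w q.1 ^ 2 * ws ξ N ((q.1 : ℤ) - q.2).natAbs +
          w q.2 ^ 2 * ws ξ N ((q.1 : ℤ) - q.2).natAbs) / 2 := by
      refine Finset.sum_le_sum fun q _ => ?_
      have h0 := ws_nonneg ξ N ((q.1 : ℤ) - q.2).natAbs
      have : |w q.1 * w q.2| ≤ (w q.1 ^ 2 + w q.2 ^ 2) / 2 := by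
        rw [abs_le]
        constructor <;> nlinarith [sq_nonneg (w q.1 + w q.2), sq_nonneg (w q.1 - w q.2)]
      nlinarith
    rw [← Finset.sum_div, Finset.sum_add_distrib] at this
    linarith
  have h8 := (abs_le.1 (h4.trans h7)).2
  linarith

/-- If all arcs have discrepancy at most `B`, then all arcs have excess at most `B / 3` up to the
Erdős–Turán error. -/
lemma arc_excess (ξ : ℕ → ℝ) (N m : ℕ) (hm : 1 ≤ m) (B : ℝ)
    (hB : ∀ a β : ℝ, 0 ≤ β → β ≤ 1 → |arc ξ N a β - β * N| ≤ B) (a β : ℝ) (hβ0 : 0 ≤ β) :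
    arc ξ N a β - β * N ≤
      B / 3 + (8 / 3 * ∑ h ∈ Icc 1 (2 * m), ws ξ N h + 4 * N / m) := by
  have hB0 : 0 ≤ B := (abs_nonneg _).trans (hB 0 0 le_rfl zero_le_one)
  have hm0 : (0 : ℝ) < m := by exact_mod_cast hm
  set δ : ℝ := 2 / m with hδ
  have hδ0 : 0 < δ := by positivity
  have hδN : 4 * N / m = 2 * δ * N := by rw [hδ]; ring
  set R := ∑ h ∈ Icc 1 (2 * m), ws ξ N h with hR
  have hR0 : 0 ≤ R := Finset.sum_nonneg fun _ _ => ws_nonneg _ _ _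
  rw [hδN]
  have hN0 : (0 : ℝ) ≤ N := by positivity
  by_cases hβδ : β + 2 * δ ≤ 1
  swap
  · have := arc_le ξ N a β
    nlinarith
  set γ := β + 2 * δ with hγ
  have hγ0 : 0 ≤ γ := by positivity
  set X := arc ξ N a β - γ * N + B with hX
  have hgoal : arc ξ N a β - β * N = X + 2 * δ * N - B := by rw [hX, hγ]; ring
  rw [hgoal]
  by_cases hX0 : X < 0
  · nlinarith
  rw [not_lt] at hX0
  set K : ℝ → ℝ := fun t => ‖tp (tw m) (2 * m) t‖ ^ 2 with hK
  set W := ∑ k ∈ range (2 * m), tw m k ^ 2 with hW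
  have hWm : (m : ℝ) ^ 3 / 3 ≤ W := tw_sum m hm
  have hW0 : 0 < W := lt_of_lt_of_le (by positivity) hWm
  have hpt : ∀ t, (γ * N - B + X) * K t - X / (16 * δ ^ 2) * (K t * ‖e t - 1‖ ^ 2) ≤
      arc ξ N (a - δ - t) γ * K t := by
    intro t
    have hKt : 0 ≤ K t := sq_nonneg _
    have : γ * N - B + X - X * (‖e t - 1‖ ^ 2 / (16 * δ ^ 2)) ≤ arc ξ N (a - δ - t) γ := by
      rcases le_total |t - round t| δ with h | h
      · have h1 : arc ξ N a β ≤ arc ξ N (a - δ - t) γ := arc_mono ξ N hβδ h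
        have h2 : 0 ≤ X * (‖e t - 1‖ ^ 2 / (16 * δ ^ 2)) := by positivity
        linarith
      · have h1 := (abs_le.1 (hB (a - δ - t) γ hγ0 hβδ)).1
        have h2 : 1 ≤ ‖e t - 1‖ ^ 2 / (16 * δ ^ 2) := by
          rw [one_le_div (by positivity)]
          exact norm_e_sub_one_ge hδ0.le h
        nlinarith
    calc _ = (γ * N - B + X - X * (‖e t - 1‖ ^ 2 / (16 * δ ^ 2))) * K t := by ring
      _ ≤ _ := mul_le_mul_of_nonneg_right this hKt
  have hKc : Continuous K := by simp only [hK]; fun_prop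
  have hmean : ∫ t in (0 : ℝ)..1, ((γ * N - B + X) * K t - X / (16 * δ ^ 2) * (K t * ‖e t - 1‖ ^ 2)) ≤
      ∫ t in (0 : ℝ)..1, arc ξ N (a - δ - t) γ * K t := by
    refine intervalIntegral.integral_mono_on zero_le_one ?_ ?_ fun t _ => hpt t
    · refine Continuous.intervalIntegrable ?_ _ _
      fun_prop
    · simp only [arc, Finset.sum_mul]
      have : IntervalIntegrable (∑ n ∈ Icc 1 N, fun t => ind γ ((ξ n - (a - δ)) + t) • K t)
          volume 0 1 := IntervalIntegrable.sum _ fun n _ => ind_integrable γ _ hKc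
      refine this.congr ?_
      intro t _
      simp only [Finset.sum_apply, smul_eq_mul]
      refine Finset.sum_congr rfl fun n _ => ?_
      congr 2
      ring
  have hM1 : ∫ t in (0 : ℝ)..1, K t = W := parseval _ _
  have hM2 : ∫ t in (0 : ℝ)..1, K t * ‖e t - 1‖ ^ 2 ≤ 2 * m := by
    simp only [hK]
    simp_rw [tp_mul (tw m) (2 * m) (by simp [tw]) (by simp [tw])]
    rw [parseval]
    calc _ ≤ ∑ k ∈ range (2 * m), (1 : ℝ) := Finset.sum_le_sum fun k _ => tw_diff m k
      _ = _ := by simp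
  rw [intervalIntegral.integral_sub, intervalIntegral.integral_const_mul,
    intervalIntegral.integral_const_mul, hM1] at hmean
  rotate_left
  · exact Continuous.intervalIntegrable (by fun_prop) _ _
  · exact Continuous.intervalIntegrable (by fun_prop) _ _
  have hup := hmean.trans (arc_average ξ N (a - δ) hγ0 hβδ (tw m) (2 * m))
  rw [← hW, ← hR] at hup
  have h1 : X / (16 * δ ^ 2) * ∫ t in (0 : ℝ)..1, K t * ‖e t - 1‖ ^ 2 ≤ X * (W / 4) := by
    have h2 : X / (16 * δ ^ 2) * ∫ t in (0 : ℝ)..1, K t * ‖e t - 1‖ ^ 2 ≤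
        X / (16 * δ ^ 2) * (2 * m) := mul_le_mul_of_nonneg_left hM2 (by positivity)
    have h3 : X / (16 * δ ^ 2) * (2 * m) = X * ((m : ℝ) ^ 3 / 32) := by
      rw [hδ]; field_simp; ring
    rw [h3] at h2
    refine h2.trans (mul_le_mul_of_nonneg_left ?_ hX0)
    have : 0 < (m : ℝ) ^ 3 := by positivity
    linarith
  have h2 : W * (3 / 4 * X) ≤ W * (B + 2 * R) := by nlinarith
  have h3 := le_of_mul_le_mul_left h2 hW0
  linarith

/-- The Erdős–Turán inequality for half-open arcs. -/
lemma arc_erdos_turan (ξ : ℕ → ℝ) (N m : ℕ) (hm : 1 ≤ m) (a β : ℝ) (hβ0 : 0 ≤ β) (hβ1 : β ≤ 1) :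
    |arc ξ N a β - β * N| ≤ 4 * ∑ h ∈ Icc 1 (2 * m), ws ξ N h + 6 * N / m := by
  set S : Set ℝ := {D | ∃ a β : ℝ, 0 ≤ β ∧ β ≤ 1 ∧ D = |arc ξ N a β - β * N|} with hS
  have hbdd : BddAbove S := by
    refine ⟨N, ?_⟩
    rintro D ⟨a, β, h0, h1, rfl⟩
    have hN0 : (0 : ℝ) ≤ N := by positivity
    have := arc_le ξ N a β
    have := arc_nonneg ξ N a β
    rw [abs_le]
    constructor <;> nlinarith
  set B := sSup S with hB
  have hle : ∀ a β : ℝ, 0 ≤ β → β ≤ 1 → |arc ξ N a β - β * N| ≤ B := fun a β h0 h1 =>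
    le_csSup hbdd ⟨a, β, h0, h1, rfl⟩
  set c := 8 / 3 * ∑ h ∈ Icc 1 (2 * m), ws ξ N h + 4 * N / m with hc
  have hex := arc_excess ξ N m hm B hle
  have hB2 : B ≤ B / 3 + c := by
    refine csSup_le ⟨_, 0, 0, le_rfl, zero_le_one, rfl⟩ ?_
    rintro D ⟨a, β, h0, h1, rfl⟩
    refine abs_le.2 ⟨?_, hex a β h0⟩
    have := hex (a + β) (1 - β) (by linarith)
    rw [arc_compl ξ N a h0 h1] at this
    linarith
  refine (hle a β hβ0 hβ1).trans ?_
  have : 6 * (N : ℝ) / m = 3 / 2 * (4 * N / m) := by ring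
  rw [this]
  linarith

/-- The Erdős–Turán inequality for the discrepancy over open intervals. -/
theorem erdos_turan (ξ : ℕ → ℝ) (N m : ℕ) (hm : 1 ≤ m) :
    discrepancy ξ N ≤ 4 * ∑ h ∈ Icc 1 (2 * m), ws ξ N h + 6 * N / m := by
  classical
  set c := 4 * ∑ h ∈ Icc 1 (2 * m), ws ξ N h + 6 * N / m with hc
  have harc := arc_erdos_turan ξ N m hm
  unfold discrepancy
  refine csSup_le ⟨_, 0, 1, le_rfl, zero_lt_one, le_rfl, rfl⟩ ?_
  rintro D ⟨a, b, ha, hab, hb, rfl⟩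
  rw [Finset.card_filter]
  push_cast
  have hN0 : (0 : ℝ) ≤ N := by positivity
  rw [abs_le]
  constructor
  · have hη : ∀ η : ℝ, 0 < η → η < b - a → (b - a) * N - c - η * N ≤
        ∑ n ∈ Icc 1 N, if Int.fract (ξ n) ∈ Set.Ioo a b then (1 : ℝ) else 0 := by
      intro η h0 h1
      have h2 := (abs_le.1 (harc (a + η) (b - a - η) (by linarith) (by linarith))).1
      have h3 : arc ξ N (a + η) (b - a - η) ≤
          ∑ n ∈ Icc 1 N, if Int.fract (ξ n) ∈ Set.Ioo a b then (1 : ℝ) else 0 := by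
        refine Finset.sum_le_sum fun n _ => ?_
        unfold ind
        set z := ξ n - (a + η) with hz
        have hz0 := Int.fract_nonneg z
        have hzf := Int.floor_add_fract z
        by_cases h : Int.fract z < b - a - η
        · have hf : Int.fract (ξ n) = a + η + Int.fract z :=
            fract_of_eq (k := ⌊z⌋) (by linarith) (by linarith) (by linarith)
          rw [if_pos h, if_pos]
          rw [hf]
          exact ⟨by linarith, by linarith⟩
        · rw [if_neg h]
          split_ifs <;> norm_num
      linarith
    set s := ∑ n ∈ Icc 1 N, if Int.fract (ξ n) ∈ Set.Ioo a b then (1 : ℝ) else 0 with hs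
    have hlim : (b - a) * N - c ≤ s := by
      refine le_of_forall_pos_le_add fun θ hθ => ?_
      have hN1 : (0 : ℝ) < N + 1 := by positivity
      set η := min ((b - a) / 2) (θ / (N + 1)) with hηd
      have h0 : 0 < η := lt_min (by linarith) (by positivity)
      have h1 : η < b - a := (min_le_left _ _).trans_lt (by linarith)
      have h2 : η * N ≤ θ := by
        have : η ≤ θ / (N + 1) := min_le_right _ _
        rw [le_div_iff₀ hN1] at this
        nlinarith
      have := hη η h0 h1
      linarith
    linarith
  · have h2 := (abs_le.1 (harc a (b - a) (by linarith) (by linarith))).2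
    have h3 : ∑ n ∈ Icc 1 N, (if Int.fract (ξ n) ∈ Set.Ioo a b then (1 : ℝ) else 0) ≤
        arc ξ N a (b - a) := by
      refine Finset.sum_le_sum fun n _ => ?_
      unfold ind
      by_cases h : Int.fract (ξ n) ∈ Set.Ioo a b
      · have hf : Int.fract (ξ n - a) = Int.fract (ξ n) - a :=
          fract_of_eq (k := ⌊ξ n⌋) (by have := Int.floor_add_fract (ξ n); linarith)
            (by linarith [h.1]) (by linarith [h.2])
        rw [if_pos h, if_pos]
        rw [hf]
        linarith [h.2]
      · rw [if_neg h]
        split_ifs <;> norm_num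
    linarith

/-! ### The discrepancy bound -/

/-- Translating the argument of a polynomial by `M` preserves its coefficient of `n ^ d`. -/
lemma exists_shift (d : ℕ) (hd : 1 ≤ d) (a : Fin d → ℝ) (M : ℝ) :
    ∃ c : Fin d → ℝ, ∀ n : ℕ, ∑ j : Fin d, a j * (M + (n : ℝ)) ^ ((j : ℕ) + 1) =
      ∑ i : Fin d, c i * (n : ℝ) ^ (i : ℕ) + a ⟨d - 1, by omega⟩ * (n : ℝ) ^ d := by
  set p : Polynomial ℝ := ∑ j : Fin d, Polynomial.C (a j) * Polynomial.X ^ ((j : ℕ) + 1) with hp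
  have hdeg : p.natDegree ≤ d := by
    refine Polynomial.natDegree_sum_le_of_forall_le _ _ fun j _ => ?_
    exact (Polynomial.natDegree_C_mul_X_pow_le _ _).trans (by omega)
  have hlead : p.coeff d = a ⟨d - 1, by omega⟩ := by
    rw [hp, Polynomial.finsetSum_coeff, Finset.sum_eq_single ⟨d - 1, by omega⟩]
    · simp [Polynomial.coeff_X_pow, Nat.sub_add_cancel hd]
    · intro j _ hj
      have : d ≠ (j : ℕ) + 1 := fun h => hj (Fin.ext (by simp; omega))
      simp [Polynomial.coeff_X_pow, this]
    · simp
  set q := Polynomial.taylor M p with hq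
  have hqd : q.natDegree = p.natDegree := Polynomial.natDegree_taylor p M
  have hqlead : q.coeff d = p.coeff d := by
    rcases hdeg.eq_or_lt with h | h
    · have := Polynomial.coeff_taylor_natDegree M p
      rwa [Polynomial.leadingCoeff, h] at this
    · rw [Polynomial.coeff_eq_zero_of_natDegree_lt h,
        Polynomial.coeff_eq_zero_of_natDegree_lt (hqd ▸ h)]
  refine ⟨fun i => q.coeff i, fun n => ?_⟩
  have h1 : Polynomial.eval (n : ℝ) q = ∑ j : Fin d, a j * (M + (n : ℝ)) ^ ((j : ℕ) + 1) := by
    rw [hq, Polynomial.taylor_eval, hp, Polynomial.eval_finsetSum, add_comm]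
    simp
  rw [← h1, Polynomial.eval_eq_sum_range' (n := d + 1) (by omega), Finset.sum_range_succ, hqlead,
    hlead, Finset.sum_range]

lemma discrepancy_le (ξ : ℕ → ℝ) (N : ℕ) : discrepancy ξ N ≤ N := by
  classical
  unfold discrepancy
  refine csSup_le ⟨_, 0, 1, le_rfl, zero_lt_one, le_rfl, rfl⟩ ?_
  rintro D ⟨a, b, ha, hab, hb, rfl⟩
  have h1 : (((Finset.Icc 1 N).filter fun n => Int.fract (ξ n) ∈ Set.Ioo a b).card : ℝ) ≤ N := by
    exact_mod_cast (Finset.card_filter_le _ _).trans (by simp)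
  have hN0 : (0 : ℝ) ≤ N := by positivity
  have h2 : (0 : ℝ) ≤ (((Finset.Icc 1 N).filter fun n => Int.fract (ξ n) ∈ Set.Ioo a b).card : ℝ) := by
    positivity
  rw [abs_le]
  constructor <;> nlinarith

lemma sum_inv_le (j : ℕ) (hj : 1 ≤ j) {δ : ℝ} (hδ : 0 < δ) :
    ∑ h ∈ Icc 1 j, (1 : ℝ) / h ≤ (1 + 1 / δ) * (j : ℝ) ^ δ := by
  have h1 : ∑ h ∈ Icc 1 j, (1 : ℝ) / h = ((harmonic j : ℚ) : ℝ) := by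
    rw [harmonic_eq_sum_Icc]
    push_cast
    simp
  have h2 := harmonic_le_one_add_log j
  have h3 := Real.log_le_rpow_div (Nat.cast_nonneg j) hδ
  have h4 : (1 : ℝ) ≤ (j : ℝ) ^ δ := Real.one_le_rpow (by exact_mod_cast hj) hδ.le
  rw [h1]
  calc _ ≤ (j : ℝ) ^ δ + (j : ℝ) ^ δ / δ := by linarith
    _ = _ := by ring

/-- Consecutive values of `j ^ (d + 2)` differ by `O(j ^ (d + 1))`. -/
lemma gap_le (d j : ℕ) (hj : 1 ≤ j) :
    ((j : ℝ) + 1) ^ (d + 2) - (j : ℝ) ^ (d + 2) ≤ (d + 2) * 2 ^ (d + 1) * (j : ℝ) ^ (d + 1) := by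
  have hj1 : (1 : ℝ) ≤ j := by exact_mod_cast hj
  have h := abs_pow_sub_pow_le ((j : ℝ) + 1) (j : ℝ) (d + 2)
  have hm : max |(j : ℝ) + 1| |(j : ℝ)| = j + 1 := by
    rw [abs_of_nonneg (by positivity), abs_of_nonneg (by positivity)]
    exact max_eq_left (by linarith)
  rw [hm] at h
  have h2 : ((j : ℝ) + 1) ^ (d + 1) ≤ 2 ^ (d + 1) * (j : ℝ) ^ (d + 1) := by
    rw [← mul_pow]
    exact pow_le_pow_left₀ (by positivity) (by linarith) _
  calc _ ≤ _ := le_abs_self _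
    _ ≤ _ := h
    _ = (d + 2) * ((j : ℝ) + 1) ^ (d + 1) := by
      simp
    _ ≤ (d + 2) * (2 ^ (d + 1) * (j : ℝ) ^ (d + 1)) := by gcongr
    _ = _ := by ring

/-- The Erdős–Turán inequality with cutoff of size `j`, at lengths `N` between `j ^ (d + 2)` and
`(j + 1) ^ (d + 2)`, given bounds for the Weyl sums of length `j ^ (d + 2)`. -/
lemma discrepancy_block (d : ℕ) {δ : ℝ} (hδ : 0 < δ) {x K : ℝ} (hK : 1 ≤ K)
    (hweyl : ∀ j : ℕ, 1 ≤ j → ∀ h ∈ Icc 1 j, ∀ c : Fin d → ℝ,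
      ‖∑ n ∈ Icc 1 (j ^ (d + 2)), e (∑ i, c i * (n : ℝ) ^ (i : ℕ) + (h * x) * (n : ℝ) ^ d)‖ ≤
        K * (j : ℝ) ^ ((d : ℝ) + 1 + δ))
    (c : Fin d → ℝ) (ξ : ℕ → ℝ) (hξ : ∀ n, ξ n = ∑ i, c i * (n : ℝ) ^ (i : ℕ) + x * (n : ℝ) ^ d)
    (j N : ℕ) (hj : 1 ≤ j) (hjN : j ^ (d + 2) ≤ N) (hNj : N < (j + 1) ^ (d + 2)) :
    discrepancy ξ N ≤ (4 * ((K + (d + 2) * 2 ^ (d + 1)) * (1 + 1 / δ)) + 18 * 2 ^ (d + 2)) *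
      (j : ℝ) ^ ((d : ℝ) + 1 + 2 * δ) := by
  have hj1 : (1 : ℝ) ≤ j := by exact_mod_cast hj
  have hj0 : (0 : ℝ) < j := by linarith
  set P := (j : ℝ) ^ ((d : ℝ) + 1 + 2 * δ) with hP
  have hP1 : 1 ≤ P := Real.one_le_rpow hj1 (by positivity)
  have hNle : (N : ℝ) ≤ 2 ^ (d + 2) * (j : ℝ) ^ (d + 2) := by
    rw [← mul_pow]
    have h1 : (N : ℝ) ≤ ((j : ℝ) + 1) ^ (d + 2) := by exact_mod_cast hNj.le
    exact h1.trans (pow_le_pow_left₀ (by positivity) (by linarith) _)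
  set A := K + (d + 2) * 2 ^ (d + 1) with hA
  have hA0 : 0 < A := by positivity
  rcases hj.eq_or_lt with h | hj2
  · have h1 := discrepancy_le ξ N
    rw [← h] at hNle
    have h2 : (N : ℝ) ≤ 2 ^ (d + 2) := by simpa using hNle
    have h3 : (0 : ℝ) ≤ 4 * (A * (1 + 1 / δ)) := by positivity
    have h4 : (0 : ℝ) < 2 ^ (d + 2) := by positivity
    nlinarith
  have hpow : (j : ℝ) ^ (d + 1) = (j : ℝ) ^ ((d : ℝ) + 1) := by
    rw [← Real.rpow_natCast]; push_cast; rfl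
  have hpow1 : (j : ℝ) ^ (d + 1) ≤ (j : ℝ) ^ ((d : ℝ) + 1 + δ) := by
    rw [hpow]; exact Real.rpow_le_rpow_of_exponent_le hj1 (by linarith)
  have hpow2 : (j : ℝ) ^ (d + 1) ≤ P := by
    rw [hpow]; exact Real.rpow_le_rpow_of_exponent_le hj1 (by linarith)
  have hsum : ∀ h ∈ Icc 1 j, ws ξ N h ≤ A * (j : ℝ) ^ ((d : ℝ) + 1 + δ) * (1 / h) := by
    intro h hh
    rw [ws, ← div_eq_mul_one_div]
    refine div_le_div_of_nonneg_right ?_ (Nat.cast_nonneg _)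
    have hcongr : ∀ n : ℕ, e (h * ξ n) =
        e (∑ i, (h * c i) * (n : ℝ) ^ (i : ℕ) + (h * x) * (n : ℝ) ^ d) := by
      intro n
      rw [hξ, mul_add, Finset.mul_sum]
      congr 1
      simp only [mul_assoc]
    have hsub : Icc 1 (j ^ (d + 2)) ⊆ Icc 1 N := Finset.Icc_subset_Icc le_rfl hjN
    rw [← Finset.sum_sdiff hsub]
    refine (norm_add_le _ _).trans ?_
    have h1 : ‖∑ n ∈ Icc 1 N \ Icc 1 (j ^ (d + 2)), e (h * ξ n)‖ ≤ (N : ℝ) - (j : ℝ) ^ (d + 2) := by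
      refine (norm_sum_le _ _).trans (le_of_eq ?_)
      simp only [norm_e, Finset.sum_const, nsmul_eq_mul, mul_one]
      rw [Finset.card_sdiff_of_subset hsub, Nat.cast_sub (Finset.card_le_card hsub)]
      simp
    have h2 : (N : ℝ) ≤ ((j : ℝ) + 1) ^ (d + 2) := by exact_mod_cast hNj.le
    have h3 := gap_le d j hj
    have h4 := hweyl j hj h hh (fun i => h * c i)
    simp only [← hcongr] at h4
    have h5 : ((d : ℝ) + 2) * 2 ^ (d + 1) * (j : ℝ) ^ (d + 1) ≤
        (d + 2) * 2 ^ (d + 1) * (j : ℝ) ^ ((d : ℝ) + 1 + δ) := by gcongr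
    rw [hA, add_mul]
    linarith
  set m := j / 2 with hm
  have hm1 : 1 ≤ m := by omega
  have hmj : (j : ℝ) ≤ 3 * m := by
    have : j ≤ 3 * m := by omega
    exact_mod_cast this
  have hET := erdos_turan ξ N m hm1
  have hS : ∑ h ∈ Icc 1 (2 * m), ws ξ N h ≤ A * (1 + 1 / δ) * P := by
    calc ∑ h ∈ Icc 1 (2 * m), ws ξ N h ≤ ∑ h ∈ Icc 1 j, ws ξ N h :=
          Finset.sum_le_sum_of_subset_of_nonneg (Finset.Icc_subset_Icc le_rfl (by omega))
            fun _ _ _ => ws_nonneg _ _ _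
      _ ≤ ∑ h ∈ Icc 1 j, A * (j : ℝ) ^ ((d : ℝ) + 1 + δ) * (1 / h) := Finset.sum_le_sum hsum
      _ = A * (j : ℝ) ^ ((d : ℝ) + 1 + δ) * ∑ h ∈ Icc 1 j, (1 : ℝ) / h := by rw [Finset.mul_sum]
      _ ≤ A * (j : ℝ) ^ ((d : ℝ) + 1 + δ) * ((1 + 1 / δ) * (j : ℝ) ^ δ) :=
          mul_le_mul_of_nonneg_left (sum_inv_le j hj hδ) (by positivity)
      _ = A * (1 + 1 / δ) * ((j : ℝ) ^ ((d : ℝ) + 1 + δ) * (j : ℝ) ^ δ) := by ring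
      _ = A * (1 + 1 / δ) * P := by
          rw [← Real.rpow_add hj0, hP]
          ring_nf
  have hT : 6 * (N : ℝ) / m ≤ 18 * 2 ^ (d + 2) * P := by
    have hm0 : (0 : ℝ) < m := by exact_mod_cast hm1
    rw [div_le_iff₀ hm0]
    calc 6 * (N : ℝ) ≤ 6 * (2 ^ (d + 2) * (j : ℝ) ^ (d + 2)) := by linarith
      _ = 6 * 2 ^ (d + 2) * (j : ℝ) ^ (d + 1) * j := by ring
      _ ≤ 6 * 2 ^ (d + 2) * P * (3 * m) := by gcongr
      _ = _ := by ring
  calc discrepancy ξ N ≤ _ := hET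
    _ ≤ 4 * (A * (1 + 1 / δ) * P) + 18 * 2 ^ (d + 2) * P := by linarith
    _ = _ := by ring

lemma exists_block (d N : ℕ) (hN : 1 ≤ N) :
    ∃ j : ℕ, 1 ≤ j ∧ j ^ (d + 2) ≤ N ∧ N < (j + 1) ^ (d + 2) := by
  have h1 : 1 ^ (d + 2) ≤ N := by simpa using hN
  refine ⟨Nat.findGreatest (fun j => j ^ (d + 2) ≤ N) N, Nat.le_findGreatest hN h1,
    Nat.findGreatest_spec (P := fun j => j ^ (d + 2) ≤ N) hN h1, ?_⟩
  by_contra h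
  rw [not_lt] at h
  have h2 : Nat.findGreatest (fun j => j ^ (d + 2) ≤ N) N + 1 ≤ N :=
    (Nat.le_self_pow (by omega) _).trans h
  have := Nat.le_findGreatest (P := fun j => j ^ (d + 2) ≤ N) h2 h
  omega

end VMV

theorem discrepancy_short_intervals (d : ℕ) (hd : 2 ≤ d) :
    ∀ᵐ x : ℝ, x ∈ Set.Icc (0 : ℝ) 1 →
      ∀ ε : ℝ, 0 < ε → ∃ C : ℝ, ∀ N : ℕ, 1 ≤ N →
        ∀ y : Fin (d - 1) → ℝ, (∀ j, y j ∈ Set.Ico (0 : ℝ) 1) → ∀ M : ℤ,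
          discrepancy (fun n => ∑ j : Fin d,
            (if h : (j : ℕ) < d - 1 then y ⟨(j : ℕ), h⟩ else x) *
              ((M : ℝ) + (n : ℝ)) ^ ((j : ℕ) + 1)) N ≤
          C * (N : ℝ) ^ (1 - 1 / ((d : ℝ) + 2) + ε) := by
  have hall : ∀ᵐ x : ℝ, ∀ i : ℕ, x ∈ Set.Icc (0 : ℝ) 1 → ∃ K : ℝ, 1 ≤ K ∧ ∀ j : ℕ, 1 ≤ j →
      ∀ h ∈ Icc 1 j, ∀ c : Fin d → ℝ, ‖∑ n ∈ Icc 1 (j ^ (d + 2)),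
        e (∑ i, c i * (n : ℝ) ^ (i : ℕ) + (h * x) * (n : ℝ) ^ d)‖ ≤
          K * (j : ℝ) ^ ((d : ℝ) + 1 + 1 / ((i : ℝ) + 1)) :=
    ae_all_iff.2 fun i => VMV.ae_weyl d hd _ (by positivity)
  filter_upwards [hall] with x hx hx01 ε hε
  obtain ⟨i, hi⟩ := exists_nat_one_div_lt hε
  obtain ⟨K, hK, hweyl⟩ := hx i hx01
  set δ : ℝ := 1 / ((i : ℝ) + 1) with hδ
  have hδ0 : 0 < δ := by positivity
  refine ⟨4 * ((K + (d + 2) * 2 ^ (d + 1)) * (1 + 1 / δ)) + 18 * 2 ^ (d + 2),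
    fun N hN y _ M => ?_⟩
  obtain ⟨j, hj, hjN, hNj⟩ := VMV.exists_block d N hN
  obtain ⟨c, hc⟩ := VMV.exists_shift d (by omega)
    (fun j : Fin d => if h : (j : ℕ) < d - 1 then y ⟨(j : ℕ), h⟩ else x) M
  simp only [lt_irrefl, dite_false] at hc
  refine (VMV.discrepancy_block d hδ0 hK hweyl c _ hc j N hj hjN hNj).trans ?_
  refine mul_le_mul_of_nonneg_left ?_ (by positivity)
  have hN1 : (1 : ℝ) ≤ N := by exact_mod_cast hN
  have hd2 : (0 : ℝ) < (d : ℝ) + 2 := by positivity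
  -- `j ≤ N ^ (1 / (d + 2))` turns the exponent of `j` into an exponent of `N`
  calc (j : ℝ) ^ ((d : ℝ) + 1 + 2 * δ)
      = (j : ℝ) ^ (((d + 2 : ℕ) : ℝ) * (((d : ℝ) + 1 + 2 * δ) / ((d : ℝ) + 2))) := by
        congr 1; push_cast; field_simp
    _ = ((j : ℝ) ^ (d + 2)) ^ (((d : ℝ) + 1 + 2 * δ) / ((d : ℝ) + 2)) :=
        Real.rpow_natCast_mul (by positivity) _ _
    _ ≤ (N : ℝ) ^ (((d : ℝ) + 1 + 2 * δ) / ((d : ℝ) + 2)) :=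
        Real.rpow_le_rpow (by positivity) (by exact_mod_cast hjN) (by positivity)
    _ ≤ (N : ℝ) ^ (1 - 1 / ((d : ℝ) + 2) + ε) := by
        refine Real.rpow_le_rpow_of_exponent_le hN1 ?_
        rw [div_le_iff₀ hd2]
        have : (1 - 1 / ((d : ℝ) + 2) + ε) * ((d : ℝ) + 2) = d + 1 + ε * (d + 2) := by
          field_simp; ring
        rw [this]
        have : (0 : ℝ) ≤ d := by positivity
        nlinarith
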